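/- arXiv:math/0010234 — 4 statements merged into one kernel-verified Lean document; each statement's English description precedes it below -/
import Mathlib

section
/- There exists a nonempty compact subset X of the Hilbert cube [0,1]^ℕ that is hereditarily indecomposable and strongly infinite-dimensional, i.e., X possesses an infinite essential family of pairs of disjoint closed subsets. -/
open Set

/-- A space is *hereditarily indecomposable* if whenever two subcontinua
(nonempty compact connected subsets) intersect, one is contained in the other. -/
def HereditarilyIndecomposable (X : Type*) [TopologicalSpace X] : Prop :=
  ∀ C D : Set X, IsCompact C → IsConnected C → IsCompact D → IsConnected D →
    (C ∩ D).Nonempty → C ⊆ D ∨ D ⊆ C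

/-- `L` is a partition between `A` and `B`: a closed set whose complement is the
union of two disjoint open sets containing `A` and `B` respectively. -/
def IsPartitionBetween {X : Type*} [TopologicalSpace X] (L A B : Set X) : Prop :=
  IsClosed L ∧ ∃ U V : Set X, IsOpen U ∧ IsOpen V ∧ Disjoint U V ∧
    A ⊆ U ∧ B ⊆ V ∧ Lᶜ = U ∪ V

/-- A family of pairs of disjoint closed sets is *essential* if every choice of
partitions between the pairs has nonempty intersection. -/
def IsEssentialFamily {X : Type*} [TopologicalSpace X] {I : Type*} (A B : I → Set X) : Prop :=
  (∀ i, IsClosed (A i)) ∧ (∀ i, IsClosed (B i)) ∧ (∀ i, Disjoint (A i) (B i)) ∧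
    ∀ L : I → Set X, (∀ i, IsPartitionBetween (L i) (A i) (B i)) → (⋂ i, L i).Nonempty


namespace HIProof

section Discrete
variable {n N : ℕ}

/-- The model of cubical cochains with values in `ZMod 2` on the discrete torus. -/
abbrev Coch (n N : ℕ) := Finset (Fin n) → (Fin n → ZMod N) → ZMod 2

/-- Left multiplication with a 1-cochain. -/
def op (a : Fin n → (Fin n → ZMod N) → ZMod 2) : Module.End (ZMod 2) (Coch n N) where
  toFun m s v := ∑ j ∈ s, a j v * m (s.erase j) (v + Pi.single j 1)
  map_add' m m' := by
    ext s v
    simp [mul_add, Finset.sum_add_distrib]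
  map_smul' c m := by
    ext s v
    simp only [Pi.smul_apply, smul_eq_mul, RingHom.id_apply, Finset.mul_sum]
    exact Finset.sum_congr rfl fun j _ => by ring

/-- Right multiplication with the sum of the generators. -/
def rop : Module.End (ZMod 2) (Coch n N) where
  toFun m s v := ∑ j ∈ s, m (s.erase j) v
  map_add' m m' := by
    ext s v
    simp [Finset.sum_add_distrib]
  map_smul' c m := by
    ext s v
    simp [Finset.mul_sum]

/-- Multiplication with a function. -/
def mop (u : (Fin n → ZMod N) → ZMod 2) : Module.End (ZMod 2) (Coch n N) where
  toFun m s v := u v * m s v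
  map_add' m m' := by
    ext s v
    simp [mul_add]
  map_smul' c m := by
    ext s v
    simp only [Pi.smul_apply, smul_eq_mul, RingHom.id_apply]
    ring

/-- The constant 0-cochain one. -/
def one0 : Coch n N := fun s _ => if s = ∅ then 1 else 0

/-- The basic operator. -/
def dd : Module.End (ZMod 2) (Coch n N) := op fun _ _ => 1

/-- Coboundary of a function. -/
def du (u : (Fin n → ZMod N) → ZMod 2) : Fin n → (Fin n → ZMod N) → ZMod 2 :=
  fun j v => u (v + Pi.single j 1) + u v

/-- The generating class of the `i`-th circle. -/
def kap (i : Fin n) : Fin n → (Fin n → ZMod N) → ZMod 2 :=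
  fun j v => if j = i ∧ v i = -1 then 1 else 0

lemma op_apply (a : Fin n → (Fin n → ZMod N) → ZMod 2) (m : Coch n N) (s v) :
    op a m s v = ∑ j ∈ s, a j v * m (s.erase j) (v + Pi.single j 1) := rfl

lemma rop_apply (m : Coch n N) (s v) : rop m s v = ∑ j ∈ s, m (s.erase j) v := rfl

lemma mop_apply (u) (m : Coch n N) (s v) : mop u m s v = u v * m s v := rfl

lemma pair_swap (s : Finset (Fin n)) (F : Fin n → Fin n → ZMod 2) :
    ∑ j ∈ s, ∑ k ∈ s.erase j, F j k = ∑ j ∈ s, ∑ k ∈ s.erase j, F k j := by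
  apply Finset.sum_comm'
  intro x y
  simp only [Finset.mem_erase]
  tauto

lemma pair_zero (s : Finset (Fin n)) (F : Fin n → Fin n → ZMod 2) (h : ∀ j k, F j k = F k j) :
    ∑ j ∈ s, ∑ k ∈ s.erase j, F j k = 0 := by
  rw [Finset.sum_sigma']
  refine Finset.sum_involution (fun p _ => ⟨p.2, p.1⟩) ?_ ?_ ?_ ?_
  · intro p _
    rw [h p.2 p.1]
    exact CharTwo.add_self_eq_zero _
  · rintro ⟨a, b⟩ hp _ he
    simp at hp he
    exact hp.2.1 he.1
  · rintro ⟨a, b⟩ hp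
    simp at hp ⊢
    exact ⟨hp.2.2, fun h => hp.2.1 h.symm, hp.1⟩
  · rintro ⟨a, b⟩ _
    rfl

lemma op_add (a b : Fin n → (Fin n → ZMod N) → ZMod 2) : op (a + b) = op a + op b := by
  ext m s v
  simp [op_apply, add_mul, Finset.sum_add_distrib]

lemma op_du (u : (Fin n → ZMod N) → ZMod 2) : op (du u) = dd * mop u + mop u * dd := by
  refine LinearMap.ext fun m => ?_
  ext s v
  simp only [LinearMap.add_apply, Module.End.mul_apply, Pi.add_apply, dd, op_apply, mop_apply, du,
    Finset.mul_sum, ← Finset.sum_add_distrib]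
  exact Finset.sum_congr rfl fun j _ => by ring

/-- Closed 1-cochains. -/
def Closed1 (a : Fin n → (Fin n → ZMod N) → ZMod 2) : Prop :=
  ∀ j k v, j ≠ k → a k (v + Pi.single j 1) + a j v = a j (v + Pi.single k 1) + a k v

lemma closed_comm {a : Fin n → (Fin n → ZMod N) → ZMod 2} (ha : Closed1 a) :
    Commute dd (op a) := by
  refine LinearMap.ext fun m => ?_
  ext s v
  rw [← CharTwo.add_eq_zero]
  simp only [Module.End.mul_apply, dd, op_apply, one_mul, Finset.mul_sum]
  simp only [← Finset.sum_add_distrib]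
  refine pair_zero s (fun j k => _) ?_
  intro j k
  by_cases hjk : j = k
  · rw [hjk]
  have h1 : v + Pi.single j 1 + Pi.single k 1 = v + Pi.single k (1 : ZMod N) + Pi.single j 1 := by
    abel
  rw [h1, Finset.erase_right_comm, ← add_mul, ← add_mul, ha j k v hjk]

lemma rop_comm_op (a : Fin n → (Fin n → ZMod N) → ZMod 2) : Commute rop (op a) := by
  refine LinearMap.ext fun m => ?_
  ext s v
  simp only [Module.End.mul_apply, op_apply, rop_apply, Finset.mul_sum]
  rw [pair_swap]
  exact Finset.sum_congr rfl fun j _ => Finset.sum_congr rfl fun k _ => by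
    rw [Finset.erase_right_comm]

lemma rop_comm_mop (u) : Commute (rop : Module.End (ZMod 2) (Coch n N)) (mop u) := by
  refine LinearMap.ext fun m => ?_
  ext s v
  simp only [Module.End.mul_apply, mop_apply, rop_apply, Finset.mul_sum]

lemma closed_du (u : (Fin n → ZMod N) → ZMod 2) : Closed1 (du u) := by
  intro j k v _
  have h1 : v + Pi.single j 1 + Pi.single k 1 = v + Pi.single k (1 : ZMod N) + Pi.single j 1 := by
    abel
  have h2 := CharTwo.add_self_eq_zero (u (v + Pi.single j 1))
  have h3 := CharTwo.add_self_eq_zero (u (v + Pi.single k 1))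
  simp only [du, h1]
  linear_combination h2 - h3

lemma closed_kap (i : Fin n) : Closed1 (kap i : Fin n → (Fin n → ZMod N) → ZMod 2) := by
  intro j k v hjk
  unfold kap
  by_cases hk : k = i
  · subst hk
    simp [hjk, hjk.symm]
  · by_cases hj : j = i
    · subst hj
      simp [hk, Ne.symm hk]
    · simp [hk, hj]

lemma closed_add {a b : Fin n → (Fin n → ZMod N) → ZMod 2} (ha : Closed1 a) (hb : Closed1 b) :
    Closed1 (a + b) := by
  intro j k v h
  simp only [Pi.add_apply]
  linear_combination ha j k v h + hb j k v h

lemma dd_one0 : dd (one0 : Coch n N) = rop one0 := by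
  ext s v
  simp [dd, op_apply, rop_apply, one0]

/-- Integration. -/
noncomputable def itg [NeZero N] (m : Coch n N) : ZMod 2 := ∑ v, m Finset.univ v

lemma itg_add [NeZero N] (m m' : Coch n N) : itg (m + m') = itg m + itg m' := by
  simp [itg, Finset.sum_add_distrib]

lemma itg_dd [NeZero N] (m : Coch n N) : itg (dd m) = itg (rop m) := by
  simp only [itg, dd, op_apply, rop_apply, one_mul]
  rw [Finset.sum_comm, Finset.sum_comm (s := Finset.univ (α := Fin n → ZMod N))]
  refine Finset.sum_congr rfl fun j _ => ?_
  exact Equiv.sum_comp (Equiv.addRight (Pi.single j (1 : ZMod N))) (fun v => m (Finset.univ.erase j) v)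

lemma itg_exact [NeZero N] (Q : Module.End (ZMod 2) (Coch n N)) (hQ : Commute rop Q) :
    itg ((dd * Q + Q * dd : Module.End (ZMod 2) (Coch n N)) one0) = 0 := by
  rw [LinearMap.add_apply, itg_add, Module.End.mul_apply, Module.End.mul_apply, dd_one0, itg_dd,
    ← Module.End.mul_apply, ← Module.End.mul_apply, hQ.eq]
  exact CharTwo.add_self_eq_zero _

lemma itg_invariant [NeZero N] (u : Fin n → (Fin n → ZMod N) → ZMod 2) (l : List (Fin n)) :
    ∀ A : Module.End (ZMod 2) (Coch n N), Commute dd A → Commute rop A →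
      itg ((A * (l.map fun i => op (du (u i) + kap i)).prod : Module.End (ZMod 2) (Coch n N)) one0) =
      itg ((A * (l.map fun i => op (kap i)).prod : Module.End (ZMod 2) (Coch n N)) one0) := by
  induction l with
  | nil => intro A _ _; rfl
  | cons i l ih =>
    intro A hA hA'
    have key := ih (A * op (kap i)) (hA.mul_right (closed_comm (closed_kap i)))
      (hA'.mul_right (rop_comm_op _))
    simp only [List.map_cons, List.prod_cons]
    rw [← mul_assoc A (op (kap i)), ← key]
    set B := (l.map fun i => op (du (u i) + kap i)).prod with hB
    have hBd : Commute dd B := by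
      apply Commute.list_prod_right
      intro x hx
      obtain ⟨j, _, rfl⟩ := List.mem_map.1 hx
      exact closed_comm (closed_add (closed_du _) (closed_kap _))
    have hBr : Commute rop B := by
      apply Commute.list_prod_right
      intro x hx
      obtain ⟨j, _, rfl⟩ := List.mem_map.1 hx
      exact rop_comm_op _
    have e : A * (op (du (u i) + kap i) * B) =
        (dd * (A * mop (u i) * B) + (A * mop (u i) * B) * dd) + A * op (kap i) * B := by
      rw [op_add, op_du, mul_assoc (A * mop (u i)) B dd, ← hBd.eq]
      have : dd * (A * mop (u i) * B) = A * (dd * mop (u i) * B) := by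
        rw [← mul_assoc, ← mul_assoc, hA.eq]
        noncomm_ring
      rw [this]
      noncomm_ring
    rw [e, LinearMap.add_apply, itg_add, itg_exact _ ((hA'.mul_right (rop_comm_mop _)).mul_right hBr),
      zero_add]

lemma model (l : List (Fin n)) (hl : l.Nodup) : ∀ v : Fin n → ZMod N,
    (l.map fun i => op (kap i)).prod one0 l.toFinset v = if ∀ i ∈ l, v i = -1 then 1 else 0 := by
  induction l with
  | nil => intro v; simp [one0]
  | cons i l ih =>
    intro v
    obtain ⟨hi, hl⟩ := List.nodup_cons.1 hl
    have hi' : i ∉ l.toFinset := by simpa using hi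
    rw [List.map_cons, List.prod_cons, Module.End.mul_apply, op_apply, List.toFinset_cons,
      Finset.sum_eq_single i]
    · rw [Finset.erase_insert hi', ih hl]
      have : (∀ j ∈ l, (v + Pi.single i (1 : ZMod N) : Fin n → ZMod N) j = -1) ↔ ∀ j ∈ l, v j = -1 := by
        refine forall₂_congr fun j hj => ?_
        have : j ≠ i := fun h => hi (h ▸ hj)
        simp [this]
      simp only [this, List.forall_mem_cons, kap, true_and]
      by_cases h1 : v i = -1 <;> simp [h1]
    · intro j _ hj
      simp [kap, hj]
    · simp

lemma extract (a : Fin n → Fin n → (Fin n → ZMod N) → ZMod 2) (l : List (Fin n)) :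
    ∀ s v, (l.map fun i => op (a i)).prod one0 s v ≠ 0 → ∀ i ∈ l, ∃ x j, j ∈ s ∧ x j = v j ∧
      (∀ m, x m = v m ∨ x m = v m + 1) ∧ (∀ m, m ∉ s → x m = v m) ∧ a i j x ≠ 0 := by
  induction l with
  | nil => simp
  | cons i l ih =>
    intro s v h
    rw [List.map_cons, List.prod_cons, Module.End.mul_apply, op_apply] at h
    obtain ⟨j, hj, h⟩ := Finset.exists_ne_zero_of_sum_ne_zero h
    have h1 := left_ne_zero_of_mul h
    have h2 := right_ne_zero_of_mul h
    intro i' hi'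
    rcases List.mem_cons.1 hi' with rfl | hi'
    · exact ⟨v, j, hj, rfl, fun _ => Or.inl rfl, fun _ _ => rfl, h1⟩
    · obtain ⟨x, j', hj', e, c1, c2, c3⟩ := ih _ _ h2 i' hi'
      obtain ⟨n1, n2⟩ := Finset.mem_erase.1 hj'
      refine ⟨x, j', n2, ?_, ?_, ?_, c3⟩
      · simpa [n1] using e
      · intro m
        by_cases hm : m = j
        · subst hm
          right
          simpa using c2 m (by simp)
        · simpa [hm] using c1 m
      · intro m hm
        have : m ≠ j := fun h => hm (h ▸ hj)
        simpa [this] using c2 m (by simp [hm])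

theorem discrete [NeZero N] (u : Fin n → (Fin n → ZMod N) → ZMod 2)
    (h0 : ∀ i x, x i = 0 → u i x = 0) (h1 : ∀ i x, x i = -1 → u i x = 1) :
    ∃ v : Fin n → ZMod N, (∀ m, v m ≠ -1) ∧ ∀ i, ∃ x y : Fin n → ZMod N,
      (∀ m, x m = v m ∨ x m = v m + 1) ∧ (∀ m, y m = v m ∨ y m = v m + 1) ∧ u i x ≠ u i y := by
  have key := itg_invariant u (List.finRange n) 1 (Commute.one_right _) (Commute.one_right _)
  have hm : itg ((1 * ((List.finRange n).map fun i => op (kap i)).prod : Module.End (ZMod 2) (Coch n N)) one0) = 1 := by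
    have hu : (Finset.univ : Finset (Fin n)) = (List.finRange n).toFinset := by
      ext; simp
    rw [one_mul, itg, hu]
    simp only [model _ (List.nodup_finRange n)]
    rw [Finset.sum_eq_single (fun _ => -1)]
    · simp
    · intro v _ hv
      rw [if_neg]
      intro h
      exact hv (funext fun i => h i (List.mem_finRange i))
    · simp
  rw [hm, one_mul, itg] at key
  obtain ⟨v, -, hv⟩ := Finset.exists_ne_zero_of_sum_ne_zero (by rw [key]; exact one_ne_zero)
  have hE := extract (fun i => du (u i) + kap i) _ _ _ hv
  have hv1 : ∀ m, v m ≠ -1 := by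
    intro m hm
    obtain ⟨x, j, -, e, c1, -, c3⟩ := hE m (List.mem_finRange m)
    apply c3
    simp only [Pi.add_apply, du, kap]
    by_cases hj : j = m
    · subst hj
      rw [h0 j _ (by simp [e, hm]), h1 j x (by rw [e, hm])]
      simp only [e, hm, and_self, if_true]
      decide
    · rw [if_neg (by tauto), add_zero]
      have hmj : m ≠ j := Ne.symm hj
      rcases c1 m with h | h
      · rw [h1 m x (by rw [h, hm]), h1 m _ (by simp [hmj, h, hm])]
        decide
      · rw [h0 m x (by simp [h, hm]), h0 m _ (by simp [hmj, h, hm])]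
        decide
  refine ⟨v, hv1, fun i => ?_⟩
  obtain ⟨x, j, -, e, c1, -, c3⟩ := hE i (List.mem_finRange i)
  refine ⟨x, x + Pi.single j 1, c1, ?_, ?_⟩
  · intro m
    by_cases hm : m = j
    · subst hm
      simp [e]
    · simpa [hm] using c1 m
  · intro h
    apply c3
    simp only [Pi.add_apply, du, kap]
    rw [← h, CharTwo.add_self_eq_zero, zero_add, if_neg]
    rintro ⟨rfl, h⟩
    exact hv1 _ (e ▸ h)

end Discrete

/-- Grid points of the cube. -/
noncomputable def gpt {n : ℕ} (k : ℕ) (x : Fin n → ZMod (k + 2)) : Fin n → unitInterval :=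
  fun m => ⟨((x m).val : ℝ) / (k + 1), by
    have h : (x m).val ≤ k + 1 := Nat.lt_succ_iff.1 (ZMod.val_lt (x m))
    have h' : ((x m).val : ℝ) ≤ k + 1 := by exact_mod_cast h
    constructor
    · positivity
    · rw [div_le_one (by positivity)]
      exact h'⟩

lemma gpt_dist {n k : ℕ} (v x : Fin n → ZMod (k + 2)) (hv : ∀ m, v m ≠ -1)
    (hx : ∀ m, x m = v m ∨ x m = v m + 1) : dist (gpt k x) (gpt k v) ≤ 1 / (k + 1) := by
  rw [dist_pi_le_iff (by positivity)]
  intro m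
  rw [Subtype.dist_eq, Real.dist_eq]
  simp only [gpt]
  rcases hx m with h | h
  · rw [h]
    simp
    positivity
  · have h1 : (v m).val < k + 1 := by
      have := ZMod.val_lt (v m)
      rcases Nat.lt_succ_iff_lt_or_eq.1 this with h | h
      · exact h
      · exfalso
        apply hv m
        apply ZMod.val_injective
        rw [h, ZMod.val_neg_one]
    have h2 : (1 : ZMod (k + 2)).val = 1 := ZMod.val_one'' (by omega)
    have h3 : (x m).val = (v m).val + 1 := by
      rw [h, ZMod.val_add_of_lt (by rw [h2]; omega), h2]
    rw [h3, ← sub_div]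
    push_cast
    rw [add_sub_cancel_left, abs_of_nonneg (by positivity)]

theorem cube_finite (n : ℕ) (L : Fin n → Set (Fin n → unitInterval))
    (hL : ∀ i, IsPartitionBetween (L i) {x | x i = 0} {x | x i = 1}) : (⋂ i, L i).Nonempty := by
  classical
  by_contra hne
  rw [not_nonempty_iff_eq_empty] at hne
  choose hc U V hU hV hUV hA hB hE using hL
  obtain ⟨δ, hδ, hδ'⟩ := lebesgue_number_lemma_of_metric (s := univ)
    (c := fun p : Fin n × Bool => if p.2 then U p.1 else V p.1) isCompact_univ
    (by rintro ⟨i, b⟩; cases b <;> simp [hU, hV])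
    (by
      intro x _
      have hx : x ∉ ⋂ i, L i := by rw [hne]; simp
      simp only [mem_iInter, not_forall] at hx
      obtain ⟨i, hi⟩ := hx
      have hi' : x ∈ (L i)ᶜ := hi
      rw [hE] at hi'
      rcases hi' with h | h
      · exact mem_iUnion.2 ⟨(i, true), by simpa using h⟩
      · exact mem_iUnion.2 ⟨(i, false), by simpa using h⟩)
  obtain ⟨k, hk⟩ := exists_nat_one_div_lt hδ
  obtain ⟨v, hv, hv'⟩ := discrete (N := k + 2)
    (fun i x => if gpt k x ∈ U i then (0 : ZMod 2) else 1)
    (by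
      intro i x hx
      rw [if_pos]
      apply hA
      apply Subtype.ext
      simp [gpt, hx])
    (by
      intro i x hx
      rw [if_neg]
      intro h
      refine (disjoint_left.1 (hUV i)) h (hB i ?_)
      apply Subtype.ext
      have : ((x i).val : ℝ) = k + 1 := by
        rw [hx, ZMod.val_neg_one]
        push_cast
        rfl
      simp only [gpt, this]
      exact div_self (by positivity))
  obtain ⟨⟨i, b⟩, hb⟩ := hδ' (gpt k v) (mem_univ _)
  obtain ⟨x, y, hx, hy, hne⟩ := hv' i
  have hx' := hb (Metric.mem_ball.2 ((gpt_dist v x hv hx).trans_lt hk))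
  have hy' := hb (Metric.mem_ball.2 ((gpt_dist v y hv hy).trans_lt hk))
  apply hne
  cases b
  · simp only [Bool.false_eq_true, if_false] at hx' hy'
    rw [if_neg fun h => disjoint_left.1 (hUV i) h hx', if_neg fun h => disjoint_left.1 (hUV i) h hy']
  · simp only [if_true] at hx' hy'
    rw [if_pos hx', if_pos hy']

lemma partition_preimage {X Y : Type*} [TopologicalSpace X] [TopologicalSpace Y] {f : X → Y}
    (hf : Continuous f) {L A B : Set Y} (h : IsPartitionBetween L A B) :
    IsPartitionBetween (f ⁻¹' L) (f ⁻¹' A) (f ⁻¹' B) := by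
  obtain ⟨hc, U, V, hU, hV, hUV, hA, hB, hE⟩ := h
  refine ⟨hc.preimage hf, f ⁻¹' U, f ⁻¹' V, hU.preimage hf, hV.preimage hf, hUV.preimage f,
    preimage_mono hA, preimage_mono hB, ?_⟩
  rw [← preimage_compl, hE, preimage_union]

theorem cube_essential (L : ℕ → Set (ℕ → unitInterval))
    (hL : ∀ i, IsPartitionBetween (L i) {x | x i = 0} {x | x i = 1}) : (⋂ i, L i).Nonempty := by
  by_contra hne
  rw [not_nonempty_iff_eq_empty] at hne
  obtain ⟨t, ht⟩ := isCompact_univ.elim_finite_subfamily_closed L (fun i => (hL i).1)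
    (by rw [hne, inter_empty])
  set n := t.sup id + 1 with hn
  let e : (Fin n → unitInterval) → (ℕ → unitInterval) :=
    fun x i => if h : i < n then x ⟨i, h⟩ else 0
  have he : Continuous e := by
    refine continuous_pi fun i => ?_
    by_cases h : i < n
    · simp only [e, h, dif_pos]
      exact continuous_apply _
    · simp only [e, h, dif_neg, not_false_eq_true]
      exact continuous_const
  obtain ⟨x, hx⟩ := cube_finite n (fun i => e ⁻¹' L i) (by
    intro i
    have := partition_preimage he (hL i)
    simpa [e] using this)
  have : e x ∈ univ ∩ ⋂ i ∈ t, L i := by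
    refine ⟨mem_univ _, mem_iInter₂.2 fun i hi => ?_⟩
    have hi' : i < n := Nat.lt_succ_of_le (Finset.le_sup (f := id) hi)
    exact mem_iInter.1 hx ⟨i, hi'⟩
  rw [ht] at this
  exact this

/-- One crooked layer. -/
def layer (i : ℕ) (g : C(ℕ → unitInterval, unitInterval)) : Set (ℕ → unitInterval) :=
  {x | (g x : ℝ) = 1 / 2 + (4 * (4 * (x i : ℝ) - 2) ^ 3 - 3 * (4 * (x i : ℝ) - 2)) / 4}

lemma layer_partition (i : ℕ) (g : C(ℕ → unitInterval, unitInterval)) :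
    IsPartitionBetween (layer i g) {x | x i = 0} {x | x i = 1} := by
  have c1 : Continuous fun x : ℕ → unitInterval => (g x : ℝ) := by fun_prop
  have c2 : Continuous fun x : ℕ → unitInterval =>
    1 / 2 + (4 * (4 * (x i : ℝ) - 2) ^ 3 - 3 * (4 * (x i : ℝ) - 2)) / 4 := by fun_prop
  refine ⟨isClosed_eq c1 c2, _, _, isOpen_lt c2 c1, isOpen_lt c1 c2, ?_, ?_, ?_, ?_⟩
  · rw [disjoint_left]
    intro x h1 h2
    rw [mem_ofPred_eq] at h1 h2
    exact lt_asymm h1 h2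
  · intro x hx
    have hx : x i = 0 := hx
    have := (g x).2.1
    simp only [mem_ofPred_eq, hx, Set.Icc.coe_zero]
    norm_num
    linarith
  · intro x hx
    have hx : x i = 1 := hx
    have := (g x).2.2
    simp only [mem_ofPred_eq, hx, Set.Icc.coe_one]
    norm_num
    linarith
  · ext x
    simp only [layer, mem_compl_iff, mem_union, mem_ofPred_eq]
    rw [← ne_eq, ne_iff_lt_or_gt, or_comm]

/-- The connectedness argument for a crooked layer. -/
lemma layer_disjoint (i : ℕ) (g : C(ℕ → unitInterval, unitInterval)) (C D : Set (ℕ → unitInterval))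
    (hC : IsPreconnected C) (hD : IsPreconnected D) (hCL : C ⊆ layer i g) (hDL : D ⊆ layer i g)
    (h1 : ∀ x ∈ C, (g x : ℝ) < 3 / 4) (h2 : ∀ x ∈ D, 1 / 4 < (g x : ℝ))
    (h3 : ∃ x ∈ C, (g x : ℝ) < 1 / 4) (h4 : ∃ x ∈ D, 3 / 4 < (g x : ℝ)) : Disjoint C D := by
  have cx : Continuous fun x : ℕ → unitInterval => 4 * (x i : ℝ) - 2 := by fun_prop
  -- on C the height stays below -1/2
  have kC : ∀ x ∈ C, 4 * (x i : ℝ) - 2 < -1 / 2 := by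
    by_contra! hcon
    obtain ⟨y, hy, hy'⟩ := hcon
    obtain ⟨c, hc, hc'⟩ := h3
    have hcl := hCL hc
    have lo : 4 * (c i : ℝ) - 2 ≤ -1 / 2 := by
      simp only [layer, mem_ofPred_eq] at hcl
      by_contra! h
      set t := 4 * (c i : ℝ) - 2
      nlinarith [mul_nonneg (show 0 ≤ t + 1 by linarith) (sq_nonneg (2 * t - 1))]
    obtain ⟨z, hz, hz'⟩ := hC.intermediate_value hc hy cx.continuousOn ⟨lo, hy'⟩
    have hzl := hCL hz
    have := h1 z hz
    simp only [layer, mem_ofPred_eq] at hzl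
    simp only at hz'
    rw [hz'] at hzl
    norm_num at hzl
    linarith
  have kD : ∀ x ∈ D, 1 / 2 < 4 * (x i : ℝ) - 2 := by
    by_contra! hcon
    obtain ⟨y, hy, hy'⟩ := hcon
    obtain ⟨c, hc, hc'⟩ := h4
    have hcl := hDL hc
    have lo : 1 / 2 ≤ 4 * (c i : ℝ) - 2 := by
      simp only [layer, mem_ofPred_eq] at hcl
      by_contra! h
      set t := 4 * (c i : ℝ) - 2
      nlinarith [mul_nonneg (show 0 ≤ 1 - t by linarith) (sq_nonneg (2 * t + 1))]
    obtain ⟨z, hz, hz'⟩ := hD.intermediate_value hy hc cx.continuousOn ⟨hy', lo⟩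
    have hzl := hDL hz
    have := h2 z hz
    simp only [layer, mem_ofPred_eq] at hzl
    simp only at hz'
    rw [hz'] at hzl
    norm_num at hzl
    linarith
  rw [disjoint_left]
  intro x hx hx'
  linarith [kC x hx, kD x hx']

lemma exists_sep (C D : Set (ℕ → unitInterval)) (hC : IsClosed C) (hD : IsClosed D)
    (c d : ℕ → unitInterval) (hcD : c ∉ D) (hdC : d ∉ C) (hcC : c ∈ C) (hdD : d ∈ D) :
    ∃ g : C(ℕ → unitInterval, unitInterval), (g c : ℝ) = 0 ∧ (g d : ℝ) = 1 ∧
      (∀ x ∈ C, (g x : ℝ) ≤ 1 / 2) ∧ ∀ x ∈ D, 1 / 2 ≤ (g x : ℝ) := by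
  obtain ⟨u, hu0, hu1, hu⟩ := exists_continuous_zero_one_of_isClosed hD (isClosed_singleton (x := c))
    (by simpa using hcD)
  obtain ⟨w, hw0, hw1, hw⟩ := exists_continuous_zero_one_of_isClosed hC (isClosed_singleton (x := d))
    (by simpa using hdC)
  refine ⟨⟨fun x => ⟨1 / 2 - u x / 2 + w x / 2, ?_⟩, ?_⟩, ?_, ?_, ?_, ?_⟩
  · have h1 := hu x
    have h2 := hw x
    constructor <;> linarith [h1.1, h1.2, h2.1, h2.2]
  · exact Continuous.subtype_mk (by fun_prop) _
  · have h1 := hu1 (mem_singleton c)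
    have h2 := hw0 hcC
    simp only [Pi.one_apply, Pi.zero_apply] at h1 h2
    simp [h1, h2]
  · have h1 := hw1 (mem_singleton d)
    have h2 := hu0 hdD
    simp only [Pi.one_apply, Pi.zero_apply] at h1 h2
    simp [h1, h2]
    norm_num
  · intro x hx
    have h2 := hw0 hx
    have h1 := hu x
    simp only [Pi.zero_apply] at h2
    simp only [ContinuousMap.coe_mk, h2]
    linarith [h1.1]
  · intro x hx
    have h2 := hu0 hx
    have h1 := hw x
    simp only [Pi.zero_apply] at h2
    simp only [ContinuousMap.coe_mk, h2]
    linarith [h1.1]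

/-- The space. -/
noncomputable def space : Set (ℕ → unitInterval) :=
  ⋂ k, layer (2 * k) (TopologicalSpace.denseSeq C(ℕ → unitInterval, unitInterval) k)

lemma space_closed : IsClosed space := isClosed_iInter fun _ => (layer_partition _ _).1

lemma space_hi : HereditarilyIndecomposable ↥space := by
  intro C D hC hC' hD hD' hCD
  by_contra! hcon
  obtain ⟨h1, h2⟩ := hcon
  obtain ⟨c, hc, hc'⟩ := not_subset.1 h1
  obtain ⟨d, hd, hd'⟩ := not_subset.1 h2
  have kC : IsCompact (Subtype.val '' C) := hC.image continuous_subtype_val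
  have kD : IsCompact (Subtype.val '' D) := hD.image continuous_subtype_val
  obtain ⟨g, g1, g2, g3, g4⟩ := exists_sep _ _ kC.isClosed kD.isClosed c.1 d.1
    (by simpa using hc') (by simpa using hd') (mem_image_of_mem _ hc) (mem_image_of_mem _ hd)
  let p : Set unitInterval := {t | (t : ℝ) < 1 / 4}
  let q : Set unitInterval := {t | 3 / 4 < (t : ℝ)}
  let r : Set unitInterval := {t | (t : ℝ) < 3 / 4}
  let s : Set unitInterval := {t | 1 / 4 < (t : ℝ)}
  have hp : IsOpen p := isOpen_lt continuous_subtype_val continuous_const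
  have hq : IsOpen q := isOpen_lt continuous_const continuous_subtype_val
  have hr : IsOpen r := isOpen_lt continuous_subtype_val continuous_const
  have hs : IsOpen s := isOpen_lt continuous_const continuous_subtype_val
  have hO := (((ContinuousMap.isOpen_setOfPred_mapsTo (isCompact_singleton (x := c.1)) hp).inter
    (ContinuousMap.isOpen_setOfPred_mapsTo (isCompact_singleton (x := d.1)) hq)).inter
    (ContinuousMap.isOpen_setOfPred_mapsTo kC hr)).inter (ContinuousMap.isOpen_setOfPred_mapsTo kD hs)
  obtain ⟨k, hk⟩ := (TopologicalSpace.denseRange_denseSeq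
    C(ℕ → unitInterval, unitInterval)).exists_mem_open hO ⟨g, by
      refine ⟨⟨⟨?_, ?_⟩, ?_⟩, ?_⟩
      · rintro x rfl
        simp only [p, mem_ofPred_eq, g1]; norm_num
      · rintro x rfl
        simp only [q, mem_ofPred_eq, g2]; norm_num
      · intro x hx
        exact (g3 x hx).trans_lt (by norm_num)
      · intro x hx
        exact lt_of_lt_of_le (by norm_num) (g4 x hx)⟩
  obtain ⟨⟨⟨k1, k2⟩, k3⟩, k4⟩ := hk
  have sub : ∀ E : Set ↥space, Subtype.val '' E ⊆ layer (2 * k)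
      (TopologicalSpace.denseSeq C(ℕ → unitInterval, unitInterval) k) := by
    rintro E _ ⟨x, -, rfl⟩
    exact mem_iInter.1 x.2 k
  have hdis := layer_disjoint _ _ _ _
    (hC'.isPreconnected.image _ continuous_subtype_val.continuousOn)
    (hD'.isPreconnected.image _ continuous_subtype_val.continuousOn) (sub C) (sub D) k3 k4
    ⟨c.1, mem_image_of_mem _ hc, k1 rfl⟩ ⟨d.1, mem_image_of_mem _ hd, k2 rfl⟩
  obtain ⟨x, hx1, hx2⟩ := hCD
  exact disjoint_left.1 hdis (mem_image_of_mem _ hx1) (mem_image_of_mem _ hx2)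

/-- Extension of partitions from a closed subspace. -/
lemma partition_extend {Y : Type*} [TopologicalSpace Y] [CompletelyNormalSpace Y] {X : Set Y}
    (hX : IsClosed X) {A B : Set Y} (hA : IsClosed A) (hB : IsClosed B) (hAB : Disjoint A B)
    {L : Set ↥X} (hL : IsPartitionBetween L (Subtype.val ⁻¹' A) (Subtype.val ⁻¹' B)) :
    ∃ L' : Set Y, IsPartitionBetween L' A B ∧ Subtype.val ⁻¹' L' ⊆ L := by
  obtain ⟨hc, U, V, hU, hV, hUV, hAU, hBV, hE⟩ := hL
  have key : ∀ (P Q : Set ↥X) (S T : Set Y), IsOpen Q → Disjoint P Q → IsClosed S →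
      Disjoint S T → Subtype.val ⁻¹' S ⊆ P → Subtype.val ⁻¹' T ⊆ Q →
      Disjoint (closure (Subtype.val '' P ∪ S)) (Subtype.val '' Q ∪ T) := by
    intro P Q S T hQ hPQ hS hST hSP hTQ
    rw [closure_union, hS.closure_eq]
    have hcl : ∀ x : Y, x ∈ closure (Subtype.val '' P) → ∃ z : ↥X, z.1 = x ∧ z ∈ closure P := by
      intro x hx
      rw [hX.isClosedEmbedding_subtypeVal.closure_image_eq] at hx
      obtain ⟨z, hz, rfl⟩ := hx
      exact ⟨z, rfl, hz⟩
    have hPQ' : Disjoint (closure P) Q := hPQ.closure_left hQ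
    rw [disjoint_left]
    rintro x (hx | hx) (hx' | hx')
    · obtain ⟨z, rfl, hz⟩ := hcl x hx
      obtain ⟨z', hz', he⟩ := hx'
      rw [Subtype.ext he] at hz'
      exact disjoint_left.1 hPQ' hz hz'
    · obtain ⟨z, rfl, hz⟩ := hcl x hx
      exact disjoint_left.1 hPQ' hz (hTQ hx')
    · obtain ⟨z', hz', rfl⟩ := hx'
      exact disjoint_left.1 hPQ (hSP hx) hz'
    · exact disjoint_left.1 hST hx hx'
  have k1 := key U V A B hV hUV hA hAB hAU hBV
  have k2 := (key V U B A hU hUV.symm hB hAB.symm hBV hAU).symm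
  obtain ⟨W, W', hW, hW', hUW, hVW, hd⟩ :=
    separatedNhds_iff_disjoint.2 (CompletelyNormalSpace.completely_normal k1 k2)
  refine ⟨(W ∪ W')ᶜ, ⟨(hW.union hW').isClosed_compl, W, W', hW, hW', hd,
    subset_union_right.trans hUW, subset_union_right.trans hVW, compl_compl _⟩, ?_⟩
  intro x hx
  by_contra hxL
  have : x ∈ Lᶜ := hxL
  rw [hE] at this
  rcases this with h | h
  · exact hx (Or.inl (hUW (Or.inl (mem_image_of_mem _ h))))
  · exact hx (Or.inr (hVW (Or.inl (mem_image_of_mem _ h))))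

lemma combine (L : ℕ → Set (ℕ → unitInterval))
    (hL : ∀ i, IsPartitionBetween (L i) {x | x (2 * i + 1) = 0} {x | x (2 * i + 1) = 1}) :
    (space ∩ ⋂ i, L i).Nonempty := by
  obtain ⟨x, hx⟩ := cube_essential (fun j => if Even j then
      layer j (TopologicalSpace.denseSeq C(ℕ → unitInterval, unitInterval) (j / 2))
      else L (j / 2)) (by
    intro j
    by_cases hj : Even j
    · simp only [hj, if_true]
      exact layer_partition _ _
    · simp only [hj, if_false]
      have := hL (j / 2)
      rwa [Nat.two_mul_div_two_add_one_of_odd (Nat.not_even_iff_odd.1 hj)] at this)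
  rw [mem_iInter] at hx
  refine ⟨x, mem_iInter.2 fun k => ?_, mem_iInter.2 fun k => ?_⟩
  · simpa using hx (2 * k)
  · have h := hx (2 * k + 1)
    have e : (2 * k + 1) / 2 = k := by omega
    simpa [e] using h

end HIProof

/-- There is a nonempty compact hereditarily indecomposable subset of the Hilbert cube
that is strongly infinite-dimensional. -/
theorem exists_stronglyInfiniteDimensional_hereditarilyIndecomposable :
    ∃ X : Set (ℕ → unitInterval), X.Nonempty ∧ IsCompact X ∧
      HereditarilyIndecomposable ↥X ∧
      ∃ A B : ℕ → Set ↥X, IsEssentialFamily A B := by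
  have c0 : ∀ j : ℕ, IsClosed {x : ℕ → unitInterval | x j = 0} := fun j =>
    isClosed_eq (continuous_apply j) continuous_const
  have c1 : ∀ j : ℕ, IsClosed {x : ℕ → unitInterval | x j = 1} := fun j =>
    isClosed_eq (continuous_apply j) continuous_const
  have dj : ∀ j : ℕ, Disjoint {x : ℕ → unitInterval | x j = 0} {x | x j = 1} := by
    intro j
    rw [disjoint_left]
    intro x h0 h1
    exact zero_ne_one (h0.symm.trans h1)
  refine ⟨HIProof.space, ?_, HIProof.space_closed.isCompact, HIProof.space_hi,
    fun i => Subtype.val ⁻¹' {x | x (2 * i + 1) = 0},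
    fun i => Subtype.val ⁻¹' {x | x (2 * i + 1) = 1},
    fun i => (c0 _).preimage continuous_subtype_val,
    fun i => (c1 _).preimage continuous_subtype_val, fun i => (dj _).preimage _, ?_⟩
  · exact (HIProof.combine (fun i => HIProof.layer (2 * i + 1) (ContinuousMap.const _ 0))
      fun i => HIProof.layer_partition _ _).mono inter_subset_left
  · intro L hL
    choose L' h1 h2 using fun i =>
      HIProof.partition_extend HIProof.space_closed (c0 (2 * i + 1)) (c1 (2 * i + 1)) (dj _) (hL i)
    obtain ⟨x, hx, hx'⟩ := HIProof.combine L' h1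
    exact ⟨⟨x, hx⟩, mem_iInter.2 fun i => h2 i (mem_iInter.1 hx' i)⟩
end

section
/- For every natural number n there exists a metrizable continuum that is hereditarily indecomposable and has covering dimension exactly n, i.e., it possesses an essential family of n pairs of disjoint closed sets but no essential family of n+1 pairs. -/
open Set

section NR
open MeasureTheory Polynomial

lemma det_poly {V : Type*} [NormedAddCommGroup V] [NormedSpace ℝ V] [FiniteDimensional ℝ V]
    (A : V →L[ℝ] V) : ∃ Q : ℝ[X], Q.degree < ((Module.finrank ℝ V + 1 : ℕ) : WithBot ℕ) ∧
      ∀ t : ℝ, Q.eval t = (ContinuousLinearMap.id ℝ V + t • A).det := by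
  let b := Module.finBasis ℝ V
  let M := LinearMap.toMatrix b b (A : V →ₗ[ℝ] V)
  refine ⟨((X : ℝ[X]) • M.map (C : ℝ →+* ℝ[X]) + (1 : Matrix _ _ ℝ).map (C : ℝ →+* ℝ[X])).det, ?_, ?_⟩
  · have h := natDegree_det_X_add_C_le M 1
    rw [Fintype.card_fin] at h
    refine lt_of_le_of_lt degree_le_natDegree ?_
    exact_mod_cast Nat.lt_succ_of_le h
  · intro t
    have h1 : (ContinuousLinearMap.id ℝ V + t • A).det
        = (LinearMap.toMatrix b b (LinearMap.id + t • (A : V →ₗ[ℝ] V))).det := by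
      rw [LinearMap.det_toMatrix]; rfl
    rw [h1, ← coe_evalRingHom, RingHom.map_det]
    congr 1
    ext i j
    simp only [RingHom.mapMatrix_apply, Matrix.map_apply, Matrix.add_apply, Matrix.smul_apply,
      map_add, map_smul, LinearMap.toMatrix_id, coe_evalRingHom, smul_eq_mul,
      eval_mul, eval_X, eval_C]
    rw [add_comm]

lemma interp_nodes (m : ℕ) (τ : ℝ) (hτ : 0 < τ) : ∃ c v : ℕ → ℝ, (∀ i, 0 < v i ∧ v i ≤ τ) ∧
    ∀ Q : ℝ[X], Q.degree < ((m + 1 : ℕ) : WithBot ℕ) →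
      Q.eval 1 = ∑ i ∈ Finset.range (m + 1), c i * Q.eval (v i) := by
  let v : ℕ → ℝ := fun i => τ / (i + 1)
  refine ⟨fun i => (Lagrange.basis (Finset.range (m+1)) v i).eval 1, v, ?_, ?_⟩
  · intro i
    have : (0:ℝ) ≤ i := Nat.cast_nonneg i
    exact ⟨by positivity, div_le_self hτ.le (by linarith)⟩
  · intro Q hQ
    have hv : Set.InjOn v (Finset.range (m+1)) := by
      intro i _ j _ hij
      have : (0:ℝ) ≤ i := Nat.cast_nonneg i
      have : (0:ℝ) ≤ j := Nat.cast_nonneg j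
      simp only [v] at hij
      field_simp at hij
      have : (i:ℝ) = j := by linarith
      exact_mod_cast this
    have h := Lagrange.eq_interpolate (s := Finset.range (m+1)) (v := v) (f := Q) hv (by simpa using hQ)
    conv_lhs => rw [h]
    rw [Lagrange.interpolate_apply, eval_finsetSum]
    refine Finset.sum_congr rfl fun i _ => ?_
    rw [eval_mul, eval_C, mul_comm]

variable {V : Type*} [NormedAddCommGroup V] [InnerProductSpace ℝ V] [FiniteDimensional ℝ V]

lemma det_pos_small (A : V →L[ℝ] V) (t : ℝ) (ht : 0 ≤ t) (h : t * ‖A‖ < 1) :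
    0 < (ContinuousLinearMap.id ℝ V + t • A).det := by
  have hne : ∀ s ∈ Icc 0 t, (ContinuousLinearMap.id ℝ V + s • A).det ≠ 0 := by
    intro s hs h0
    have : ¬ Function.Injective (ContinuousLinearMap.id ℝ V + s • A) := by
      intro hinj
      have hk : LinearMap.ker ((ContinuousLinearMap.id ℝ V + s • A : V →L[ℝ] V) : V →ₗ[ℝ] V) = ⊥ :=
        LinearMap.ker_eq_bot.mpr hinj
      have := LinearMap.bot_lt_ker_of_det_eq_zero
        (f := ((ContinuousLinearMap.id ℝ V + s • A : V →L[ℝ] V) : V →ₗ[ℝ] V)) h0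
      rw [hk] at this
      exact lt_irrefl _ this
    apply this
    rw [injective_iff_map_eq_zero]
    intro x hx
    have hx' : x = - (s • A x) := by
      simpa using eq_neg_of_add_eq_zero_left hx
    have h1 : ‖x‖ ≤ s * ‖A‖ * ‖x‖ := by
      calc ‖x‖ = ‖s • A x‖ := by conv_lhs => rw [hx', norm_neg]
        _ = s * ‖A x‖ := by rw [norm_smul, Real.norm_of_nonneg hs.1]
        _ ≤ s * (‖A‖ * ‖x‖) := by gcongr; exacts [hs.1, A.le_opNorm x]
        _ = _ := by ring
    have h2 : s * ‖A‖ ≤ t * ‖A‖ := by gcongr; exact hs.2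
    have h3 : ‖x‖ ≤ 0 := by
      by_contra hc
      push Not at hc
      nlinarith
    exact norm_le_zero_iff.mp h3
  by_contra hcon
  push Not at hcon
  have hcont : Continuous fun s : ℝ => (ContinuousLinearMap.id ℝ V + s • A).det :=
    ContinuousLinearMap.continuous_det.comp (by fun_prop)
  have := intermediate_value_Icc' ht (f := fun s : ℝ => (ContinuousLinearMap.id ℝ V + s • A).det)
    hcont.continuousOn
  have h1 : (ContinuousLinearMap.id ℝ V + (0:ℝ) • A).det = 1 := by
    rw [zero_smul, add_zero]; exact LinearMap.det_id
  obtain ⟨s, hs, hs0⟩ := this (show (0:ℝ) ∈ Icc _ _ from ⟨hcon, by rw [h1]; exact zero_le_one⟩)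
  exact hne s hs hs0

variable [MeasurableSpace V] [BorelSpace V]

lemma vol_small (g : V → V) (g' : V → V →L[ℝ] V) (L : NNReal) (hL : LipschitzWith L g) (R : ℝ)
    (h0 : ∀ x, R ≤ ‖x‖ → g x = 0)
    (hg' : ∀ x ∈ Metric.ball (0:V) R, HasFDerivAt g (g' x) x)
    (hb : ∀ x ∈ Metric.ball (0:V) R, ‖g' x‖ ≤ L)
    (hc : Continuous g')
    (t : ℝ) (ht : 0 ≤ t) (h : t * L < 1) :
    ∫ x in Metric.ball (0:V) R, (ContinuousLinearMap.id ℝ V + t • g' x).det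
      = (volume (Metric.ball (0:V) R)).toReal := by
  let f : V → V := fun x => x + t • g x
  have happ : ApproximatesLinearOn f ((ContinuousLinearEquiv.refl ℝ V : V ≃L[ℝ] V) : V →L[ℝ] V) univ
      (t.toNNReal * L) := by
    intro x _ y _
    have : f x - f y - (((ContinuousLinearEquiv.refl ℝ V : V ≃L[ℝ] V) : V →L[ℝ] V)) (x - y)
        = t • (g x - g y) := by
      simp [f, smul_sub]; abel
    rw [this, norm_smul, Real.norm_of_nonneg ht]
    have := hL.norm_sub_le x y
    push_cast
    calc t * ‖g x - g y‖ ≤ t * (L * ‖x - y‖) := by gcongr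
      _ = _ := by rw [Real.coe_toNNReal t ht]; ring
  have hcc : Subsingleton V ∨ (t.toNNReal * L : NNReal) <
      ‖(((ContinuousLinearEquiv.refl ℝ V : V ≃L[ℝ] V)).symm : V →L[ℝ] V)‖₊⁻¹ := by
    rcases subsingleton_or_nontrivial V with hs | hs
    · exact Or.inl hs
    · right
      have : ‖(((ContinuousLinearEquiv.refl ℝ V : V ≃L[ℝ] V)).symm : V →L[ℝ] V)‖₊ = 1 := by
        ext; exact ContinuousLinearMap.norm_id
      rw [this, inv_one]
      rw [← NNReal.coe_lt_coe]; push_cast; rw [Real.coe_toNNReal t ht]; exact h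
  have hbij : Function.Bijective f := (happ.toHomeomorph f hcc).bijective
  have himg : f '' (Metric.ball 0 R) = Metric.ball 0 R := by
    have hcompl : ∀ x, R ≤ ‖x‖ → f x = x := by
      intro x hx; simp [f, h0 x hx]
    ext y
    constructor
    · rintro ⟨x, hx, rfl⟩
      by_contra hy
      have hy' : R ≤ ‖f x‖ := by simpa using hy
      have := hbij.1 (hcompl _ hy')
      rw [this] at hy'
      simp at hx; linarith
    · intro hy
      obtain ⟨x, rfl⟩ := hbij.2 y
      refine ⟨x, ?_, rfl⟩
      by_contra hx
      have hx' : R ≤ ‖x‖ := by simpa using hx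
      rw [hcompl x hx'] at hy
      exact hx hy
  have key := lintegral_abs_det_fderiv_eq_addHaar_image (μ := (volume : Measure V))
    (s := Metric.ball (0:V) R) (f := f)
    (f' := fun x => ContinuousLinearMap.id ℝ V + t • g' x) measurableSet_ball
    (fun x hx => ((hasFDerivAt_id x).add ((hg' x hx).const_smul t)).hasFDerivWithinAt)
    hbij.1.injOn
  rw [himg] at key
  rw [← key]
  rw [integral_eq_lintegral_of_nonneg_ae]
  · congr 1
    refine setLIntegral_congr_fun measurableSet_ball ?_
    intro x hx
    simp only
    rw [abs_of_pos]
    exact det_pos_small _ _ ht (lt_of_le_of_lt (by gcongr; exact hb x hx) h)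
  · refine (ae_restrict_iff' measurableSet_ball).mpr (Filter.Eventually.of_forall fun x hx => ?_)
    exact (det_pos_small _ _ ht (lt_of_le_of_lt (by gcongr; exact hb x hx) h)).le
  · exact (ContinuousLinearMap.continuous_det.comp (by fun_prop)).aestronglyMeasurable


lemma no_retraction (F : V → V) (hF : ContDiff ℝ 1 F) (R : ℝ) (hR : 0 < R)
    (hid : ∀ x, R ≤ ‖x‖ → F x = x) (hne : ∀ x, F x ≠ 0) : False := by
  let N : V → V := fun x => (R / ‖F x‖) • F x
  have hnn : ∀ x, ‖F x‖ ≠ 0 := fun x => norm_ne_zero_iff.mpr (hne x)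
  have hN : ContDiff ℝ 1 N :=
    (contDiff_const.div (hF.norm ℝ hne) hnn).smul hF
  have hNn : ∀ x, ‖N x‖ = R := by
    intro x
    simp only [N]
    rw [norm_smul, norm_div, norm_norm, div_mul_cancel₀ _ (hnn x), Real.norm_of_nonneg hR.le]
  have hNid : ∀ x, ‖x‖ = R → N x = x := by
    intro x hx
    simp only [N]
    rw [hid x hx.ge, hx, div_self hR.ne', one_smul]
  have hNd : Differentiable ℝ N := hN.differentiable one_ne_zero
  have hN'c : Continuous (fderiv ℝ N) := hN.continuous_fderiv one_ne_zero
  let g' : V → V →L[ℝ] V := fun x => fderiv ℝ N x - ContinuousLinearMap.id ℝ V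
  have hg'c : Continuous g' := hN'c.sub continuous_const
  obtain ⟨C, hC⟩ := (isCompact_closedBall (0:V) R).exists_bound_of_continuousOn hg'c.continuousOn
  let L : NNReal := C.toNNReal
  have hCL : ∀ x ∈ Metric.closedBall (0:V) R, ‖g' x‖ ≤ L := fun x hx =>
    (hC x hx).trans (Real.le_coe_toNNReal C)
  have hlip0 : ∀ x ∈ Metric.closedBall (0:V) R, ∀ y ∈ Metric.closedBall (0:V) R,
      ‖(N y - y) - (N x - x)‖ ≤ L * ‖y - x‖ := by
    intro x hx y hy
    refine (convex_closedBall (0:V) R).norm_image_sub_le_of_norm_hasFDerivWithin_le (𝕜 := ℝ)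
      (f := fun x => N x - x) (f' := g') (fun z _ => ?_) hCL hx hy
    exact ((hNd z).hasFDerivAt.sub (hasFDerivAt_id z)).hasFDerivWithinAt
  let g : V → V := fun x => if ‖x‖ < R then N x - x else 0
  have hgin : ∀ x, ‖x‖ ≤ R → g x = N x - x := by
    intro x hx
    rcases hx.lt_or_eq with h | h
    · simp only [g]; rw [if_pos h]
    · simp only [g]; rw [if_neg (not_lt.mpr h.ge), hNid x h, sub_self]
  have hgout : ∀ x, R ≤ ‖x‖ → g x = 0 := fun x hx => by
    simp only [g]; rw [if_neg (not_lt.mpr hx)]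
  have hmix : ∀ x y, ‖x‖ ≤ R → R ≤ ‖y‖ → ‖g x - g y‖ ≤ L * ‖x - y‖ := by
    intro x y hx hy
    have hcont : Continuous fun s : ℝ => ‖x + s • (y - x)‖ := by fun_prop
    obtain ⟨s, hs, hsR⟩ := intermediate_value_Icc (zero_le_one' ℝ) hcont.continuousOn
      (show R ∈ Icc _ _ from ⟨by simpa using hx, by simpa using hy⟩)
    simp only at hsR
    have h1 := hlip0 (x + s • (y - x)) (by simp [hsR]) x (by simpa using hx)
    rw [hNid _ hsR, sub_self, sub_zero] at h1
    rw [hgout y hy, sub_zero, hgin x hx]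
    refine h1.trans ?_
    have : x - (x + s • (y - x)) = s • (x - y) := by rw [smul_sub, smul_sub]; abel
    rw [this, norm_smul, Real.norm_of_nonneg hs.1]
    gcongr
    exact mul_le_of_le_one_left (norm_nonneg _) hs.2
  have hlip : LipschitzWith L g := by
    refine LipschitzWith.of_dist_le_mul fun x y => ?_
    rw [dist_eq_norm, dist_eq_norm]
    rcases le_total ‖x‖ R with hx | hx <;> rcases le_total ‖y‖ R with hy | hy
    · rw [hgin x hx, hgin y hy]
      exact hlip0 y (by simpa using hy) x (by simpa using hx)
    · exact hmix x y hx hy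
    · rw [norm_sub_rev, norm_sub_rev x]; exact hmix y x hy hx
    · rw [hgout x hx, hgout y hy]; simp; positivity
  have hgd : ∀ x ∈ Metric.ball (0:V) R, HasFDerivAt g (g' x) x := by
    intro x hx
    have : (fun x => N x - x) =ᶠ[nhds x] g := by
      filter_upwards [Metric.isOpen_ball.mem_nhds hx] with z hz
      rw [hgin z (by simpa using (mem_ball_zero_iff.mp hz).le)]
    exact ((hNd x).hasFDerivAt.sub (hasFDerivAt_id x)).congr_of_eventuallyEq this.symm
  obtain ⟨c, v, hv, hQ⟩ := interp_nodes (Module.finrank ℝ V) (1 / (L + 1)) (by positivity)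
  have hvol : ∀ i, ∫ x in Metric.ball (0:V) R, (ContinuousLinearMap.id ℝ V + v i • g' x).det
      = (volume (Metric.ball (0:V) R)).toReal := by
    intro i
    refine vol_small g g' L hlip R hgout hgd
      (fun x hx => hCL x (Metric.ball_subset_closedBall hx)) hg'c (v i) (hv i).1.le ?_
    have h1 := (hv i).2
    have hL0 : (0:ℝ) ≤ L := L.2
    calc v i * L ≤ 1 / (L + 1) * L := by gcongr
      _ < 1 := by rw [div_mul_eq_mul_div, div_lt_one (by positivity)]; linarith
  have hdet0 : ∀ x ∈ Metric.ball (0:V) R,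
      (ContinuousLinearMap.id ℝ V + (1:ℝ) • g' x).det = 0 := by
    intro x _
    have e : ContinuousLinearMap.id ℝ V + (1:ℝ) • g' x = fderiv ℝ N x := by
      simp [g']
    rw [e]
    by_contra hd
    have hunit : IsUnit (LinearMap.det ((fderiv ℝ N x : V →L[ℝ] V) : V →ₗ[ℝ] V)) :=
      isUnit_iff_ne_zero.mpr hd
    have hsurj : Function.Surjective (fderiv ℝ N x) :=
      (LinearEquiv.ofIsUnitDet (f := ((fderiv ℝ N x : V →L[ℝ] V) : V →ₗ[ℝ] V))
        (v := Module.finBasis ℝ V) (v' := Module.finBasis ℝ V)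
        (by rwa [LinearMap.det_toMatrix])).surjective
    obtain ⟨w, hw⟩ := hsurj (N x)
    have h1 : HasFDerivAt (fun y => inner ℝ (N y) (N y)) _ x :=
      (hNd x).hasFDerivAt.inner ℝ (hNd x).hasFDerivAt
    have h2 : HasFDerivAt (fun y => inner ℝ (N y) (N y)) (0 : V →L[ℝ] ℝ) x := by
      have : (fun y => inner ℝ (N y) (N y)) = fun _ : V => R ^ 2 := by
        funext y; rw [real_inner_self_eq_norm_sq, hNn]
      rw [this]; exact hasFDerivAt_const _ _
    have h3 := congrArg (fun A : V →L[ℝ] ℝ => A w) (h1.unique h2)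
    simp [hw] at h3
    have := hNn x
    rw [h3] at this
    simp at this
    linarith
  have hsum : ∀ x, (ContinuousLinearMap.id ℝ V + (1:ℝ) • g' x).det
      = ∑ i ∈ Finset.range (Module.finrank ℝ V + 1), c i *
        (ContinuousLinearMap.id ℝ V + v i • g' x).det := by
    intro x
    obtain ⟨Q, hQd, hQe⟩ := det_poly (g' x)
    rw [← hQe, hQ Q hQd]
    simp_rw [hQe]
  have hc1 : ∑ i ∈ Finset.range (Module.finrank ℝ V + 1), c i = 1 := by
    have := hQ 1 (by rw [degree_one]; exact_mod_cast Nat.succ_pos _)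
    simpa using this.symm
  have hint : ∀ i ∈ Finset.range (Module.finrank ℝ V + 1), IntegrableOn
      (fun x => c i * (ContinuousLinearMap.id ℝ V + v i • g' x).det) (Metric.ball (0:V) R) := by
    intro i _
    have hcont : Continuous fun x => c i * (ContinuousLinearMap.id ℝ V + v i • g' x).det :=
      continuous_const.mul (ContinuousLinearMap.continuous_det.comp (by fun_prop))
    exact (hcont.continuousOn.integrableOn_compact (isCompact_closedBall (0:V) R)).mono_set
      Metric.ball_subset_closedBall
  have hfin : ∫ x in Metric.ball (0:V) R, (ContinuousLinearMap.id ℝ V + (1:ℝ) • g' x).det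
      = (volume (Metric.ball (0:V) R)).toReal := by
    simp_rw [hsum]
    rw [integral_finsetSum _ hint]
    simp_rw [integral_const_mul, hvol, ← Finset.sum_mul, hc1, one_mul]
  rw [setIntegral_congr_fun measurableSet_ball hdet0] at hfin
  simp only [integral_zero] at hfin
  have hpos : 0 < (volume (Metric.ball (0:V) R)).toReal :=
    ENNReal.toReal_pos (Metric.measure_ball_pos volume _ hR).ne' measure_ball_lt_top.ne
  linarith

lemma exists_zero_of_id_far (F : V → V) (hF : Continuous F) (R : ℝ)
    (hid : ∀ x, R ≤ ‖x‖ → F x = x) : ∃ x, F x = 0 := by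
  by_contra hcon
  push Not at hcon
  have hS : IsClosed {x : V | |R| + 1 ≤ ‖x‖} := isClosed_le continuous_const continuous_norm
  have hU : {x : V | |R| < ‖x‖} ∈ nhdsSet {x : V | |R| + 1 ≤ ‖x‖} := by
    refine (isOpen_lt continuous_const continuous_norm).mem_nhdsSet.mpr ?_
    intro x hx
    simp only [mem_ofPred_eq] at hx ⊢
    linarith
  have hsm : ContDiffOn ℝ ((1 : ℕ∞) : WithTop ℕ∞) F {x : V | |R| < ‖x‖} := by
    refine contDiffOn_id.congr fun x hx => ?_
    exact hid x ((le_abs_self R).trans (le_of_lt hx))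
  obtain ⟨G, hG, hGa, hGe, -⟩ := hF.exists_contDiff_approx_and_eqOn 1 (ε := fun x => ‖F x‖)
    hF.norm (fun x => norm_pos_iff.mpr (hcon x)) hS hU hsm
  refine no_retraction G (by exact_mod_cast hG) (|R| + 1) (by positivity) ?_ ?_
  · intro x hx
    rw [hGe hx, hid x]
    have := le_abs_self R
    linarith
  · intro x hx
    have := hGa x
    rw [hx, dist_zero_left] at this
    exact lt_irrefl _ this

end NR

section PM
variable {m : ℕ}

/-- The unit cube in Euclidean space. -/
def cubeK (m : ℕ) : Set (EuclideanSpace ℝ (Fin m)) := {x | ∀ i, x i ∈ Icc (0:ℝ) 1}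

lemma cubeK_closed : IsClosed (cubeK m) := by
  have : cubeK m = ⋂ i, (fun x : EuclideanSpace ℝ (Fin m) => x i) ⁻¹' Icc (0:ℝ) 1 := by
    ext x; simp [cubeK]
  rw [this]
  exact isClosed_iInter fun i => isClosed_Icc.preimage (by fun_prop)

lemma cubeK_compact : IsCompact (cubeK m) := by
  have h : cubeK m = (WithLp.toLp 2) '' (Set.pi univ fun _ : Fin m => Icc (0:ℝ) 1) := by
    ext x
    constructor
    · intro hx
      exact ⟨WithLp.ofLp x, fun i _ => hx i, rfl⟩
    · rintro ⟨y, hy, rfl⟩ i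
      exact hy i (mem_univ i)
  rw [h]
  exact (isCompact_univ_pi fun _ => isCompact_Icc).image (PiLp.continuous_toLp 2 _)

/-- Coordinatewise clipping onto the cube. -/
noncomputable def clipK (x : EuclideanSpace ℝ (Fin m)) : EuclideanSpace ℝ (Fin m) :=
  WithLp.toLp 2 fun i => max 0 (min 1 (x i))

lemma clipK_cont : Continuous (clipK (m := m)) := by
  refine (PiLp.continuous_toLp 2 _).comp (continuous_pi fun i => ?_)
  fun_prop

lemma clipK_mem (x : EuclideanSpace ℝ (Fin m)) : clipK x ∈ cubeK m := by
  intro i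
  exact ⟨le_max_left _ _, max_le zero_le_one (min_le_left _ _)⟩

lemma clipK_apply (x : EuclideanSpace ℝ (Fin m)) (i : Fin m) :
    clipK x i = max 0 (min 1 (x i)) := rfl

/-- Poincare-Miranda theorem. -/
lemma poincare_miranda (f : EuclideanSpace ℝ (Fin m) → Fin m → ℝ) (hf : Continuous f)
    (h0 : ∀ x ∈ cubeK m, ∀ i, x i = 0 → f x i < 0)
    (h1 : ∀ x ∈ cubeK m, ∀ i, x i = 1 → 0 < f x i) : ∃ x ∈ cubeK m, f x = 0 := by
  let q : EuclideanSpace ℝ (Fin m) → EuclideanSpace ℝ (Fin m) := fun x =>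
    WithLp.toLp 2 (f (clipK x)) - clipK x
  have hq : Continuous q :=
    ((PiLp.continuous_toLp 2 _).comp (hf.comp clipK_cont)).sub clipK_cont
  obtain ⟨C, hC⟩ : ∃ C, ∀ x, ‖q x‖ ≤ C := by
    have hq' : Continuous fun x : EuclideanSpace ℝ (Fin m) =>
      (WithLp.toLp 2 (f x) : EuclideanSpace ℝ (Fin m)) - x :=
      ((PiLp.continuous_toLp 2 _).comp hf).sub continuous_id
    obtain ⟨C, hC⟩ := (cubeK_compact (m := m)).exists_bound_of_continuousOn hq'.continuousOn
    exact ⟨C, fun x => hC _ (clipK_mem x)⟩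
  let F : EuclideanSpace ℝ (Fin m) → EuclideanSpace ℝ (Fin m) := fun x =>
    x + (max 0 (min 1 (C + 2 - ‖x‖)) : ℝ) • q x
  have hF : Continuous F := by fun_prop
  obtain ⟨x, hx⟩ := exists_zero_of_id_far F hF (C + 2) (fun x hx => by
    have : max 0 (min 1 (C + 2 - ‖x‖)) = 0 := by
      rw [max_eq_left]; exact (min_le_right _ _).trans (by linarith)
    simp only [F]; rw [this, zero_smul, add_zero])
  have hxC : ‖x‖ ≤ C := by
    have h2 : x = - ((max 0 (min 1 (C + 2 - ‖x‖)) : ℝ) • q x) := eq_neg_of_add_eq_zero_left hx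
    calc ‖x‖ = ‖(max 0 (min 1 (C + 2 - ‖x‖)) : ℝ) • q x‖ := by conv_lhs => rw [h2, norm_neg]
      _ = (max 0 (min 1 (C + 2 - ‖x‖)) : ℝ) * ‖q x‖ := by
          rw [norm_smul, Real.norm_of_nonneg (le_max_left _ _)]
      _ ≤ 1 * ‖q x‖ := by
          gcongr; exact max_le zero_le_one (min_le_left _ _)
      _ ≤ C := by rw [one_mul]; exact hC x
  have hχ : max 0 (min 1 (C + 2 - ‖x‖)) = 1 := by
    rw [min_eq_left (by linarith)]; exact max_eq_right zero_le_one
  have hxq : ∀ i, x i + (f (clipK x) i - clipK x i) = 0 := by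
    intro i
    have := congrArg (fun y : EuclideanSpace ℝ (Fin m) => y i) hx
    simp only [F, hχ, one_smul] at this
    simpa [q] using this
  have hxK : ∀ i, x i ∈ Icc (0:ℝ) 1 := by
    intro i
    have hi := hxq i
    constructor
    · by_contra hneg
      push Not at hneg
      have hc : clipK x i = 0 := by
        rw [clipK_apply]; exact max_eq_left ((min_le_right _ _).trans hneg.le)
      have := h0 _ (clipK_mem x) i hc
      linarith
    · by_contra hneg
      push Not at hneg
      have hc : clipK x i = 1 := by
        rw [clipK_apply, min_eq_left hneg.le]; exact max_eq_right zero_le_one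
      have := h1 _ (clipK_mem x) i hc
      linarith
  have hclip : clipK x = x := by
    ext i
    rw [clipK_apply, min_eq_right (hxK i).2, max_eq_right (hxK i).1]
  refine ⟨x, hxK, ?_⟩
  funext i
  have := hxq i
  rw [hclip] at this
  simp only [Pi.zero_apply]
  linarith
end PM

section Crooked
open MeasureTheory
variable {n : ℕ}

/-- The function whose zero set is a Z-shaped curve. -/
noncomputable def gz (x y : ℝ) : ℝ :=
  min (x + 1/2) (max (x - 1/2) (min (3/4 - y) (max (-x) (1/4 - y))))

lemma gz_props (x y : ℝ) (h : |gz x y| ≤ 1/50) :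
    |x| ≤ 1 ∧ (y ≤ 0 → x < -1/4) ∧ (x = -1/4 → 2/3 < y) ∧ (x = 1/4 → y < 1/3) ∧
      (1 ≤ y → 1/4 < x) := by
  rw [abs_le] at h
  obtain ⟨ha, hb⟩ := h
  unfold gz at ha hb
  rw [le_min_iff, le_max_iff, le_min_iff, le_max_iff] at ha
  rw [min_le_iff, max_le_iff, min_le_iff, max_le_iff] at hb
  rw [abs_le]
  refine ⟨⟨?_, ?_⟩, ?_, ?_, ?_, ?_⟩
  all_goals
    first
    | (intro hh
       by_contra hcon
       push Not at hcon
       rcases ha with ⟨a1, a2 | ⟨a2, a3 | a3⟩⟩ <;> rcases hb with b1 | ⟨b1, b2 | ⟨b2, b3⟩⟩ <;> linarith)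
    | (rcases ha with ⟨a1, a2 | ⟨a2, a3 | a3⟩⟩ <;> rcases hb with b1 | ⟨b1, b2 | ⟨b2, b3⟩⟩ <;> linarith)

lemma gz_left (x y : ℝ) (h : x ≤ -1) : gz x y ≤ -1/2 :=
  (min_le_left _ _).trans (by linarith)

lemma gz_right (x y : ℝ) (h : 1 ≤ x) : 1/2 ≤ gz x y :=
  le_min (by linarith) (le_max_of_le_left (by linarith))

/-- Functions separating two opposite faces. -/
def SepF (f : EuclideanSpace ℝ (Fin (n+1)) → ℝ) : Prop :=
  (∀ x ∈ cubeK (n+1), x 0 = 0 → f x ≤ -1) ∧ (∀ x ∈ cubeK (n+1), x 0 = 1 → 1 ≤ f x)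

/-- The crookedness relation. -/
def CrookF (φ f f' : C(EuclideanSpace ℝ (Fin (n+1)), ℝ)) : Prop :=
  ∀ x, |f' x| ≤ 1 → |f x| ≤ 1 ∧ (φ x ≤ 0 → f x < -1/4) ∧ (f x = -1/4 → 2/3 < φ x) ∧
    (f x = 1/4 → φ x < 1/3) ∧ (1 ≤ φ x → 1/4 < f x)

lemma crook_step (φ f : C(EuclideanSpace ℝ (Fin (n+1)), ℝ)) (hf : SepF f) (δ : ENNReal)
    (hδ : 0 < δ) : ∃ f' : C(EuclideanSpace ℝ (Fin (n+1)), ℝ), SepF f' ∧ CrookF φ f f' ∧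
      volume {x | x ∈ cubeK (n+1) ∧ |f' x| ≤ 1} < δ := by
  let G : EuclideanSpace ℝ (Fin (n+1)) → ℝ := fun x => gz (f x) (φ x)
  have hG : Continuous G := by
    simp only [G, gz]; fun_prop
  let μ := (volume : Measure (EuclideanSpace ℝ (Fin (n+1)))).restrict (cubeK (n+1))
  have hfin : IsFiniteMeasure μ := ⟨by
    simp only [μ, Measure.restrict_apply_univ]; exact cubeK_compact.measure_lt_top⟩
  obtain ⟨c, hc, hc0⟩ : ∃ c ∈ Ioo (0:ℝ) (1/100), μ {x | G x = c} = 0 := by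
    have hcount := Measure.countable_meas_level_set_pos (μ := μ) hG.measurable
    by_contra hcon
    push Not at hcon
    have hsub : Ioo (0:ℝ) (1/100) ⊆ {t | 0 < μ {x | G x = t}} := fun c hc =>
      pos_iff_ne_zero.mpr (hcon c hc)
    have := (hcount.mono hsub)
    have h0 := this.measure_zero volume
    rw [Real.volume_Ioo] at h0
    norm_num at h0
  let S : ℕ → Set (EuclideanSpace ℝ (Fin (n+1))) := fun k => {x | |G x - c| ≤ 1 / ((k:ℝ) + 100)}
  have hScl : ∀ k, IsClosed (S k) := fun k =>
    isClosed_le (by fun_prop) continuous_const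
  have hSanti : Antitone S := by
    intro k l hkl x hx
    have hkl' : (k:ℝ) ≤ l := by exact_mod_cast hkl
    have hx' : |G x - c| ≤ 1 / ((l:ℝ) + 100) := hx
    show |G x - c| ≤ 1 / ((k:ℝ) + 100)
    refine hx'.trans ?_
    gcongr
  have hSint : ⋂ k, S k = {x | G x = c} := by
    ext x
    constructor
    · intro hx
      have hx' : ∀ k : ℕ, |G x - c| ≤ 1 / ((k:ℝ) + 100) := fun k => mem_iInter.mp hx k
      have h0 : |G x - c| ≤ 0 := by
        refine le_of_forall_pos_le_add fun ε hε => ?_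
        obtain ⟨k, hk⟩ := exists_nat_one_div_lt hε
        rw [zero_add]
        refine (hx' k).trans (le_trans ?_ hk.le)
        gcongr
        norm_num
      have := abs_nonpos_iff.mp h0
      show G x = c
      linarith
    · intro hx
      have hx' : G x = c := hx
      refine mem_iInter.mpr fun k => ?_
      show |G x - c| ≤ 1 / ((k:ℝ) + 100)
      rw [hx', sub_self, abs_zero]; positivity
  have ht := tendsto_measure_iInter_atTop (μ := μ) (s := S)
    (fun k => (hScl k).measurableSet.nullMeasurableSet) hSanti ⟨0, measure_ne_top _ _⟩
  rw [hSint, hc0] at ht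
  obtain ⟨k, hk⟩ := (ht.eventually (gt_mem_nhds hδ)).exists
  have hkp : (0:ℝ) < (k:ℝ) + 100 := by positivity
  let f' : C(EuclideanSpace ℝ (Fin (n+1)), ℝ) :=
    ⟨fun x => ((k:ℝ) + 100) * (G x - c), by fun_prop⟩
  have hf' : ∀ x, |f' x| ≤ 1 ↔ |G x - c| ≤ 1 / ((k:ℝ) + 100) := by
    intro x
    show |((k:ℝ) + 100) * (G x - c)| ≤ 1 ↔ _
    rw [abs_mul, abs_of_pos hkp, le_div_iff₀ hkp, mul_comm]
  have hk100 : (100:ℝ) ≤ (k:ℝ) + 100 := by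
    have : (0:ℝ) ≤ k := Nat.cast_nonneg k
    linarith
  refine ⟨f', ⟨?_, ?_⟩, ?_, ?_⟩
  · intro x hx hx0
    have h := gz_left (f x) (φ x) (hf.1 x hx hx0)
    show ((k:ℝ) + 100) * (gz (f x) (φ x) - c) ≤ -1
    nlinarith [hc.1, hc.2]
  · intro x hx hx0
    have h := gz_right (f x) (φ x) (hf.2 x hx hx0)
    show 1 ≤ ((k:ℝ) + 100) * (gz (f x) (φ x) - c)
    nlinarith [hc.1, hc.2]
  · intro x hx
    apply gz_props
    have h1 := (hf' x).mp hx
    have h2 : 1 / ((k:ℝ) + 100) ≤ 1 / 100 := by gcongr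
    have h3 := abs_le.mp (h1.trans h2)
    show |G x| ≤ 1 / 50
    rw [abs_le]
    constructor <;> linarith [hc.1, hc.2, h3.1, h3.2]
  · have : {x | x ∈ cubeK (n+1) ∧ |f' x| ≤ 1} = S k ∩ cubeK (n+1) := by
      ext x
      constructor
      · rintro ⟨h1, h2⟩; exact ⟨(hf' x).mp h2, h1⟩
      · rintro ⟨h1, h2⟩; exact ⟨h2, (hf' x).mpr h1⟩
    rw [this, ← Measure.restrict_apply (hScl k).measurableSet]
    exact hk

instance sepC : TopologicalSpace.SeparableSpace C(EuclideanSpace ℝ (Fin (n+1)), ℝ) :=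
  ContinuousMap.instSeparableSpace

lemma crook_seq : ∃ f : ℕ → C(EuclideanSpace ℝ (Fin (n+1)), ℝ), (∀ k, SepF (f k)) ∧
    (∀ k, CrookF (TopologicalSpace.denseSeq C(EuclideanSpace ℝ (Fin (n+1)), ℝ) k)
      (f k) (f (k+1))) ∧
    ∀ k : ℕ, volume {x | x ∈ cubeK (n+1) ∧ |f (k+1) x| ≤ 1} < ((k:ENNReal) + 1)⁻¹ := by
  have hstep : ∀ (k : ℕ) (f : {f : C(EuclideanSpace ℝ (Fin (n+1)), ℝ) // SepF f}),
      ∃ f' : {f : C(EuclideanSpace ℝ (Fin (n+1)), ℝ) // SepF f},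
      CrookF (TopologicalSpace.denseSeq C(EuclideanSpace ℝ (Fin (n+1)), ℝ) k) f.1 f'.1 ∧
      volume {x | x ∈ cubeK (n+1) ∧ |f'.1 x| ≤ 1} < ((k:ENNReal) + 1)⁻¹ := by
    intro k f
    obtain ⟨f', h1, h2⟩ := crook_step (TopologicalSpace.denseSeq _ k) f.1 f.2
      ((k:ENNReal) + 1)⁻¹ (by
        rw [ENNReal.inv_pos]; exact ENNReal.add_ne_top.mpr ⟨ENNReal.natCast_ne_top k, ENNReal.one_ne_top⟩)
    exact ⟨⟨f', h1⟩, h2⟩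
  choose nxt hnxt using hstep
  let f0 : {f : C(EuclideanSpace ℝ (Fin (n+1)), ℝ) // SepF f} :=
    ⟨⟨fun x => 2 * x 0 - 1, by fun_prop⟩, by
      constructor
      · intro x _ hx
        show 2 * x 0 - 1 ≤ -1
        rw [hx]; norm_num
      · intro x _ hx
        show 1 ≤ 2 * x 0 - 1
        rw [hx]; norm_num⟩
  let s : ℕ → {f : C(EuclideanSpace ℝ (Fin (n+1)), ℝ) // SepF f} := fun k =>
    Nat.rec f0 (fun k f => nxt k f) k
  exact ⟨fun k => (s k).1, fun k => (s k).2, fun k => (hnxt k (s k)).1,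
    fun k => (hnxt k (s k)).2⟩

end Crooked

section Limit
open MeasureTheory
variable {n : ℕ}

/-- Function form of essentiality on a subset of the cube. -/
def EssOn (Y : Set (EuclideanSpace ℝ (Fin (n+1)))) : Prop :=
  ∀ h : C(EuclideanSpace ℝ (Fin (n+1)), Fin n → ℝ),
    (∀ x ∈ Y, ∀ i : Fin n, x i.succ = 0 → h x i < 0) →
    (∀ x ∈ Y, ∀ i : Fin n, x i.succ = 1 → 0 < h x i) → ∃ x ∈ Y, h x = 0

/-- Points where `h` has good signs and does not vanish. -/
def goodSet (h : C(EuclideanSpace ℝ (Fin (n+1)), Fin n → ℝ)) :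
    Set (EuclideanSpace ℝ (Fin (n+1))) :=
  {x | (∀ i : Fin n, x i.succ = 0 → h x i < 0) ∧ (∀ i : Fin n, x i.succ = 1 → 0 < h x i) ∧
    h x ≠ 0}

lemma goodSet_open (h : C(EuclideanSpace ℝ (Fin (n+1)), Fin n → ℝ)) : IsOpen (goodSet h) := by
  have hc : ∀ i, Continuous fun x => h x i := fun i => (continuous_apply i).comp h.continuous
  have e : goodSet h = (⋂ i : Fin n, ({x | x i.succ ≠ 0} ∪ {x | h x i < 0})) ∩
      ((⋂ i : Fin n, ({x | x i.succ ≠ 1} ∪ {x | 0 < h x i})) ∩ {x | h x ≠ 0}) := by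
    ext x
    simp only [goodSet, mem_ofPred_eq, mem_inter_iff, mem_iInter, mem_union, imp_iff_not_or, ne_eq]
  rw [e]
  refine (isOpen_iInter_of_finite fun i => ?_).inter
    ((isOpen_iInter_of_finite fun i => ?_).inter (isOpen_ne_fun h.continuous continuous_const))
  · exact (isOpen_ne_fun (by fun_prop) continuous_const).union
      (isOpen_lt (hc i) continuous_const)
  · exact (isOpen_ne_fun (by fun_prop) continuous_const).union
      (isOpen_lt continuous_const (hc i))

lemma not_essOn_iff (Y : Set (EuclideanSpace ℝ (Fin (n+1)))) :
    ¬ EssOn Y ↔ ∃ h : C(EuclideanSpace ℝ (Fin (n+1)), Fin n → ℝ), Y ⊆ goodSet h := by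
  unfold EssOn
  push Not
  constructor
  · rintro ⟨h, h1, h2, h3⟩
    exact ⟨h, fun x hx => ⟨h1 x hx, h2 x hx, h3 x hx⟩⟩
  · rintro ⟨h, hh⟩
    exact ⟨h, fun x hx => (hh hx).1, fun x hx => (hh hx).2.1, fun x hx => (hh hx).2.2⟩

lemma EssOn.inter_of_directed {ι : Type*} [Nonempty ι]
    (V : ι → Set (EuclideanSpace ℝ (Fin (n+1)))) (hd : Directed (· ⊇ ·) V)
    (hc : ∀ i, IsCompact (V i)) (he : ∀ i, EssOn (V i)) : EssOn (⋂ i, V i) := by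
  by_contra hcon
  obtain ⟨h, hh⟩ := (not_essOn_iff _).mp hcon
  obtain ⟨i, hi⟩ := exists_subset_nhds_of_isCompact hd hc
    (fun x hx => (goodSet_open h).mem_nhds (hh hx))
  exact (not_essOn_iff _).mpr ⟨h, hi⟩ (he i)

lemma EssOn.of_sepF (f : C(EuclideanSpace ℝ (Fin (n+1)), ℝ)) (hf : SepF f) :
    EssOn {x | x ∈ cubeK (n+1) ∧ |f x| ≤ 1} := by
  by_contra hcon
  obtain ⟨h, hh⟩ := (not_essOn_iff _).mp hcon
  let w : EuclideanSpace ℝ (Fin (n+1)) → ℝ := fun x => max 0 (1 - |f x|)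
  have hw : Continuous w := by fun_prop
  have hw0 : ∀ x, 0 ≤ w x := fun x => le_max_left _ _
  have hw1 : ∀ x, w x ≤ 1 := fun x => max_le zero_le_one (by linarith [abs_nonneg (f x)])
  have hwpos : ∀ x, w x ≠ 0 → |f x| ≤ 1 := by
    intro x hx
    by_contra hc
    push Not at hc
    exact hx (max_eq_left (by linarith))
  have hc : ∀ i, Continuous fun x => h x i := fun i => (continuous_apply i).comp h.continuous
  let F : EuclideanSpace ℝ (Fin (n+1)) → Fin (n+1) → ℝ := fun x =>
    Fin.cons (f x) fun i : Fin n => w x * h x i + (1 - w x) * (x i.succ - 1/2)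
  have hF : Continuous F := by
    refine continuous_pi fun i => ?_
    refine Fin.cases ?_ (fun i => ?_) i
    · simpa [F] using f.continuous
    · simp only [F, Fin.cons_succ]
      have := hc i
      fun_prop
  obtain ⟨x, hxK, hx⟩ := poincare_miranda F hF (by
    intro x hx i
    refine Fin.cases ?_ (fun i => ?_) i
    · intro h0
      have := hf.1 x hx h0
      simp only [F, Fin.cons_zero]; linarith
    · intro h0
      simp only [F, Fin.cons_succ]
      rw [h0]
      by_cases hwx : w x = 0
      · rw [hwx]; norm_num
      · have h1 := (hh ⟨hx, hwpos x hwx⟩).1 i h0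
        have h2 : 0 < w x := lt_of_le_of_ne (hw0 x) (Ne.symm hwx)
        nlinarith [hw1 x]) (by
    intro x hx i
    refine Fin.cases ?_ (fun i => ?_) i
    · intro h0
      have := hf.2 x hx h0
      simp only [F, Fin.cons_zero]; linarith
    · intro h0
      simp only [F, Fin.cons_succ]
      rw [h0]
      by_cases hwx : w x = 0
      · rw [hwx]; norm_num
      · have h1 := (hh ⟨hx, hwpos x hwx⟩).2.1 i h0
        have h2 : 0 < w x := lt_of_le_of_ne (hw0 x) (Ne.symm hwx)
        nlinarith [hw1 x])
  have hfx : f x = 0 := by simpa [F] using congrFun hx 0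
  have hwx : w x = 1 := by simp [w, hfx]
  have hm : x ∈ {x | x ∈ cubeK (n+1) ∧ |f x| ≤ 1} := ⟨hxK, by simp [hfx]⟩
  refine (hh hm).2.2 ?_
  funext i
  have := congrFun hx i.succ
  simp only [F, Fin.cons_succ, hwx] at this
  simpa using this

/-- Ambient form of hereditary indecomposability. -/
def HerIndecOn (M : Set (EuclideanSpace ℝ (Fin (n+1)))) : Prop :=
  ∀ C D : Set (EuclideanSpace ℝ (Fin (n+1))), C ⊆ M → D ⊆ M → IsCompact C → IsConnected C →
    IsCompact D → IsConnected D → (C ∩ D).Nonempty → C ⊆ D ∨ D ⊆ C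

lemma exists_test {C D : Set (EuclideanSpace ℝ (Fin (n+1)))} (hC : IsCompact C) (hD : IsCompact D)
    (hCD : (C ∩ D).Nonempty)
    {c d : EuclideanSpace ℝ (Fin (n+1))} (hcC : c ∈ C) (hdD : d ∈ D) (hc : c ∉ D) (hd : d ∉ C) :
    ∃ k, (TopologicalSpace.denseSeq C(EuclideanSpace ℝ (Fin (n+1)), ℝ) k) c < 0 ∧
      1 < (TopologicalSpace.denseSeq C(EuclideanSpace ℝ (Fin (n+1)), ℝ) k) d ∧
      (∀ x ∈ C, (TopologicalSpace.denseSeq C(EuclideanSpace ℝ (Fin (n+1)), ℝ) k) x < 2/3) ∧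
      (∀ x ∈ D, 1/3 < (TopologicalSpace.denseSeq C(EuclideanSpace ℝ (Fin (n+1)), ℝ) k) x) := by
  have hCn : C.Nonempty := hCD.mono inter_subset_left
  have hDn : D.Nonempty := hCD.mono inter_subset_right
  have hO : IsOpen ({φ : C(EuclideanSpace ℝ (Fin (n+1)), ℝ) | MapsTo φ {c} (Iio 0)} ∩
      ({φ : C(EuclideanSpace ℝ (Fin (n+1)), ℝ) | MapsTo φ {d} (Ioi 1)} ∩
      ({φ : C(EuclideanSpace ℝ (Fin (n+1)), ℝ) | MapsTo φ C (Iio (2/3))} ∩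
      {φ : C(EuclideanSpace ℝ (Fin (n+1)), ℝ) | MapsTo φ D (Ioi (1/3))}))) :=
    (ContinuousMap.isOpen_setOfPred_mapsTo isCompact_singleton isOpen_Iio).inter
    ((ContinuousMap.isOpen_setOfPred_mapsTo isCompact_singleton isOpen_Ioi).inter
    ((ContinuousMap.isOpen_setOfPred_mapsTo hC isOpen_Iio).inter
    (ContinuousMap.isOpen_setOfPred_mapsTo hD isOpen_Ioi)))
  have hcD : 0 < Metric.infDist c D := (hD.isClosed.notMem_iff_infDist_pos hDn).mp hc
  have hdC : 0 < Metric.infDist d C := (hC.isClosed.notMem_iff_infDist_pos hCn).mp hd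
  let a := Metric.infDist c D
  let b := Metric.infDist d C
  let ψ : C(EuclideanSpace ℝ (Fin (n+1)), ℝ) :=
    ⟨fun x => 1/2 + Metric.infDist x C / b - Metric.infDist x D / a, by
      have h1 := Metric.continuous_infDist_pt C
      have h2 := Metric.continuous_infDist_pt D
      fun_prop⟩
  have hψ : ∀ x, ψ x = 1/2 + Metric.infDist x C / b - Metric.infDist x D / a := fun x => rfl
  have hDnn : ∀ x, 0 ≤ Metric.infDist x D / a := fun x => div_nonneg Metric.infDist_nonneg hcD.le
  have hCnn : ∀ x, 0 ≤ Metric.infDist x C / b := fun x => div_nonneg Metric.infDist_nonneg hdC.le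
  obtain ⟨k, hφ⟩ := (TopologicalSpace.denseRange_denseSeq
    C(EuclideanSpace ℝ (Fin (n+1)), ℝ)).exists_mem_open hO ⟨ψ, by
      refine ⟨?_, ?_, ?_, ?_⟩
      · intro x hx
        have hx' : x = c := hx
        show ψ x < 0
        rw [hx', hψ, Metric.infDist_zero_of_mem hcC, zero_div, div_self hcD.ne']; norm_num
      · intro x hx
        have hx' : x = d := hx
        show 1 < ψ x
        rw [hx', hψ, Metric.infDist_zero_of_mem hdD, zero_div, div_self hdC.ne']; norm_num
      · intro x hx
        show ψ x < 2/3
        rw [hψ, Metric.infDist_zero_of_mem hx, zero_div]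
        linarith [hDnn x]
      · intro x hx
        show 1/3 < ψ x
        rw [hψ, Metric.infDist_zero_of_mem hx, zero_div]
        linarith [hCnn x]⟩
  exact ⟨k, hφ.1 rfl, hφ.2.1 rfl, fun x hx => hφ.2.2.1 hx, fun x hx => hφ.2.2.2 hx⟩

/-- The Bing compactum. -/
lemma exists_bing (n : ℕ) : ∃ M : Set (EuclideanSpace ℝ (Fin (n+1))), IsCompact M ∧
    volume M = 0 ∧ HerIndecOn M ∧ EssOn M := by
  obtain ⟨f, hsep, hcr, hvol⟩ := crook_seq (n := n)
  let S : ℕ → Set (EuclideanSpace ℝ (Fin (n+1))) := fun k => {x | x ∈ cubeK (n+1) ∧ |f k x| ≤ 1}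
  have hScl : ∀ k, IsCompact (S k) := fun k =>
    cubeK_compact.inter_right (isClosed_le (f k).continuous.abs continuous_const)
  have hanti : Antitone S := antitone_nat_of_succ_le fun k x hx => ⟨hx.1, (hcr k x hx.2).1⟩
  refine ⟨⋂ k, S k, (hScl 0).of_isClosed_subset (isClosed_iInter fun k => (hScl k).isClosed)
    (iInter_subset _ 0), ?_, ?_, ?_⟩
  · refine le_antisymm ?_ bot_le
    refine ENNReal.le_of_forall_pos_le_add fun ε hε _ => ?_
    obtain ⟨k, hk⟩ := ENNReal.exists_inv_nat_lt (a := (ε : ENNReal)) (by exact_mod_cast hε.ne')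
    rw [zero_add]
    calc volume (⋂ k, S k) ≤ volume (S (k+1)) := measure_mono (iInter_subset _ _)
      _ ≤ ((k:ENNReal) + 1)⁻¹ := (hvol k).le
      _ ≤ (k:ENNReal)⁻¹ := ENNReal.inv_le_inv.mpr le_self_add
      _ ≤ ε := hk.le
  · intro C D hCM hDM hC hCc hD hDc hCD
    by_contra hcon
    push Not at hcon
    obtain ⟨⟨c, hcC, hcD⟩, ⟨d, hdD, hdC⟩⟩ :=
      And.intro (not_subset.mp hcon.1) (not_subset.mp hcon.2)
    obtain ⟨k, h1, h2, h3, h4⟩ := exists_test hC hD hCD hcC hdD hcD hdC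
    have hM : ∀ x ∈ ⋂ k, S k, |f (k+1) x| ≤ 1 := fun x hx => (mem_iInter.mp hx (k+1)).2
    have hC' : ∀ x ∈ C, f k x < -1/4 := by
      intro x hx
      by_contra hge
      push Not at hge
      obtain ⟨z, hz, hz'⟩ := hCc.isPreconnected.intermediate_value hcC hx
        (f k).continuous.continuousOn
        ⟨((hcr k c (hM c (hCM hcC))).2.1 h1.le).le, hge⟩
      have := (hcr k z (hM z (hCM hz))).2.2.1 hz'
      linarith [h3 z hz]
    have hD' : ∀ x ∈ D, 1/4 < f k x := by
      intro x hx
      by_contra hge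
      push Not at hge
      obtain ⟨z, hz, hz'⟩ := hDc.isPreconnected.intermediate_value hx hdD
        (f k).continuous.continuousOn
        ⟨hge, ((hcr k d (hM d (hDM hdD))).2.2.2.2 h2.le).le⟩
      have := (hcr k z (hM z (hDM hz))).2.2.2.1 hz'
      linarith [h4 z hz]
    obtain ⟨p, hpC, hpD⟩ := hCD
    linarith [hC' p hpC, hD' p hpD]
  · exact EssOn.inter_of_directed S hanti.directed_ge hScl fun k => EssOn.of_sepF (f k) (hsep k)

lemma EssOn.nonempty {Y : Set (EuclideanSpace ℝ (Fin (n+1)))} (h : EssOn Y) : Y.Nonempty := by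
  obtain ⟨x, hx, -⟩ := h ⟨fun x i => x i.succ - 1/2, by fun_prop⟩
    (fun x _ i hi => by show x i.succ - 1/2 < 0; rw [hi]; norm_num)
    (fun x _ i hi => by show 0 < x i.succ - 1/2; rw [hi]; norm_num)
  exact ⟨x, hx⟩

lemma exists_connected_ess {M : Set (EuclideanSpace ℝ (Fin (n+1)))} (hM : IsCompact M)
    (he : EssOn M) : ∃ Y ⊆ M, IsCompact Y ∧ IsConnected Y ∧ EssOn Y := by
  obtain ⟨Y, hYM, hY⟩ := zorn_superset_nonempty {Y | IsCompact Y ∧ EssOn Y} (by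
    intro c hc hchain hne
    have : Nonempty c := hne.to_subtype
    refine ⟨⋂ s : c, s.1, ⟨?_, ?_⟩, fun s hs x hx => mem_iInter.mp hx ⟨s, hs⟩⟩
    · obtain ⟨s, hs⟩ := hne
      exact (hc hs).1.of_isClosed_subset (isClosed_iInter fun s : c => (hc s.2).1.isClosed)
        fun x hx => mem_iInter.mp hx ⟨s, hs⟩
    refine EssOn.inter_of_directed _ ?_ (fun s => (hc s.2).1) (fun s => (hc s.2).2)
    intro s t
    rcases hchain.total s.2 t.2 with h | h
    · exact ⟨s, subset_rfl, h⟩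
    · exact ⟨t, h, subset_rfl⟩) M ⟨hM, he⟩
  have hYc : IsCompact Y := hY.prop.1
  refine ⟨Y, hYM, hYc, ⟨hY.prop.2.nonempty, ?_⟩, hY.prop.2⟩
  rw [isPreconnected_closed_iff]
  intro P Q hP hQ hcov hYP hYQ
  by_contra hdis
  rw [not_nonempty_iff_eq_empty] at hdis
  have key : ∀ P Q : Set (EuclideanSpace ℝ (Fin (n+1))), IsClosed P → (Y ∩ Q).Nonempty →
      Y ∩ (P ∩ Q) = ∅ → ∃ h : C(EuclideanSpace ℝ (Fin (n+1)), Fin n → ℝ), Y ∩ P ⊆ goodSet h := by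
    intro P Q hP hYQ hdis
    rw [← not_essOn_iff]
    intro hess
    have hsub := hY.le_of_le (y := Y ∩ P) ⟨hYc.inter_right hP, hess⟩ inter_subset_left
    obtain ⟨q, hqY, hqQ⟩ := hYQ
    have : q ∈ Y ∩ (P ∩ Q) := ⟨hqY, (hsub hqY).2, hqQ⟩
    rw [hdis] at this
    exact this
  obtain ⟨hp, hhp⟩ := key P Q hP hYQ hdis
  obtain ⟨hq, hhq⟩ := key Q P hQ hYP (by rw [inter_comm Q P]; exact hdis)
  obtain ⟨w, hw0, hw1, -⟩ := exists_continuous_zero_one_of_isClosed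
    (hYc.inter_right hP).isClosed (hYc.inter_right hQ).isClosed (by
      rw [Set.disjoint_iff]
      rintro x ⟨⟨h1, h2⟩, ⟨-, h3⟩⟩
      rw [← hdis]; exact ⟨h1, h2, h3⟩)
  refine (not_essOn_iff Y).mpr ⟨⟨fun x => (1 - w x) • hp x + w x • hq x, by fun_prop⟩, ?_⟩ hY.prop.2
  intro x hx
  rcases hcov hx with h | h
  · have e : (1 - w x) • hp x + w x • hq x = hp x := by
      rw [hw0 ⟨hx, h⟩]; simp
    have := hhp ⟨hx, h⟩
    simp only [goodSet, mem_ofPred_eq, ContinuousMap.coe_mk, e]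
    exact this
  · have e : (1 - w x) • hp x + w x • hq x = hq x := by
      rw [hw1 ⟨hx, h⟩]; simp
    have := hhq ⟨hx, h⟩
    simp only [goodSet, mem_ofPred_eq, ContinuousMap.coe_mk, e]
    exact this

end Limit

section Final
open MeasureTheory
variable {n : ℕ}

lemma no_essential_of_null (Y : Set (EuclideanSpace ℝ (Fin (n+1)))) (hY : IsCompact Y)
    (h0 : volume Y = 0) : ¬ ∃ A B : Fin (n + 1) → Set Y, IsEssentialFamily A B := by
  rintro ⟨A, B, hA, hB, hAB, hess⟩
  have hu : ∀ i, ∃ u : C(EuclideanSpace ℝ (Fin (n+1)), ℝ),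
      (∀ y : Y, y ∈ A i → u y = 0) ∧ (∀ y : Y, y ∈ B i → u y = 1) := by
    intro i
    obtain ⟨u, hu0, hu1, -⟩ := exists_continuous_zero_one_of_isClosed
      (hY.isClosed.isClosedEmbedding_subtypeVal.isClosedMap _ (hA i))
      (hY.isClosed.isClosedEmbedding_subtypeVal.isClosedMap _ (hB i))
      ((Set.disjoint_image_iff Subtype.val_injective).mpr (hAB i))
    exact ⟨u, fun y hy => hu0 ⟨y, hy, rfl⟩, fun y hy => hu1 ⟨y, hy, rfl⟩⟩
  choose u hu0 hu1 using hu
  let U : EuclideanSpace ℝ (Fin (n+1)) → EuclideanSpace ℝ (Fin (n+1)) := fun x =>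
    WithLp.toLp 2 fun i => u i x
  have hU : Continuous U :=
    (PiLp.continuous_toLp 2 _).comp (continuous_pi fun i => (u i).continuous)
  obtain ⟨F, hF, hFa, -⟩ := hU.exists_contDiff_approx 1 (ε := fun _ => 1/4) continuous_const
    (fun _ => by norm_num)
  have hFd : Differentiable ℝ F := hF.differentiable (by simp)
  have hnull : volume (F '' Y) = 0 :=
    addHaar_image_eq_zero_of_differentiableOn_of_addHaar_eq_zero volume hFd.differentiableOn h0
  let p : EuclideanSpace ℝ (Fin (n+1)) := WithLp.toLp 2 fun _ => 1/2
  obtain ⟨c, hc, hcF⟩ : ∃ c ∈ Metric.ball p (1/4), c ∉ F '' Y := by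
    by_contra hcon
    push Not at hcon
    have := measure_mono_null (show Metric.ball p (1/4) ⊆ F '' Y from hcon) hnull
    exact (Metric.measure_ball_pos volume p (by norm_num : (0:ℝ) < 1/4)).ne' this
  have hci : ∀ i, |c i - 1/2| < 1/4 := by
    intro i
    have h1 : ‖(c - p) i‖ ≤ ‖c - p‖ := PiLp.norm_apply_le _ _
    have h2 : ‖c - p‖ < 1/4 := by rw [← dist_eq_norm]; exact hc
    exact lt_of_le_of_lt h1 h2
  have hFi : ∀ x i, |F x i - u i x| < 1/4 := by
    intro x i
    have h1 : ‖(F x - U x) i‖ ≤ ‖F x - U x‖ := PiLp.norm_apply_le _ _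
    have h2 : ‖F x - U x‖ < 1/4 := by rw [← dist_eq_norm]; exact hFa x
    exact lt_of_le_of_lt h1 h2
  have hFc : ∀ i, Continuous fun y : Y => F y i := fun i => by
    have := hFd.continuous
    fun_prop
  obtain ⟨y, hy⟩ := hess (fun i => {y : Y | F y i = c i}) (fun i =>
    ⟨isClosed_eq (hFc i) continuous_const, {y : Y | F y i < c i}, {y : Y | c i < F y i},
      isOpen_lt (hFc i) continuous_const, isOpen_lt continuous_const (hFc i), by
        rw [Set.disjoint_left]
        intro y hy hy'
        exact lt_asymm (show F y i < c i from hy) hy', by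
        intro y hy
        have h1 := abs_lt.mp (hci i)
        have h2 := abs_lt.mp (hFi y i)
        rw [hu0 i y hy] at h2
        show F y i < c i
        linarith [h1.1, h2.2], by
        intro y hy
        have h1 := abs_lt.mp (hci i)
        have h2 := abs_lt.mp (hFi y i)
        rw [hu1 i y hy] at h2
        show c i < F y i
        linarith [h1.2, h2.1], by
        ext y
        exact ne_iff_lt_or_gt⟩)
  refine hcF ⟨y, y.2, ?_⟩
  ext i
  exact mem_iInter.mp hy i

lemma exists_vanishing {X : Type*} [MetricSpace X] (s : Set X) (hs : IsClosed s) :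
    ∃ f : X → ℝ, Continuous f ∧ (∀ x, 0 ≤ f x) ∧ ∀ x, f x = 0 ↔ x ∈ s := by
  rcases s.eq_empty_or_nonempty with rfl | hne
  · exact ⟨fun _ => 1, continuous_const, fun _ => zero_le_one, fun x => by simp⟩
  · exact ⟨fun x => Metric.infDist x s, Metric.continuous_infDist_pt s,
      fun _ => Metric.infDist_nonneg, fun x => (hs.mem_iff_infDist_zero hne).symm⟩

lemma essential_of_essOn (Y : Set (EuclideanSpace ℝ (Fin (n+1)))) (hY : IsCompact Y)
    (he : EssOn Y) : ∃ A B : Fin n → Set Y, IsEssentialFamily A B := by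
  refine ⟨fun i => {y : Y | y.1 i.succ = 0}, fun i => {y : Y | y.1 i.succ = 1},
    fun i => isClosed_eq (by fun_prop) continuous_const,
    fun i => isClosed_eq (by fun_prop) continuous_const, fun i => ?_, fun L hL => ?_⟩
  · rw [Set.disjoint_left]
    intro y hy hy'
    have h1 : y.1 i.succ = 0 := hy
    have h2 : y.1 i.succ = 1 := hy'
    linarith
  · have hk : ∀ i, ∃ g : Y → ℝ, Continuous g ∧ (∀ y : Y, y.1 i.succ = 0 → g y < 0) ∧
        (∀ y : Y, y.1 i.succ = 1 → 0 < g y) ∧ ∀ y, g y = 0 → y ∈ L i := by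
      intro i
      obtain ⟨hLc, U, V, hU, hV, hUV, hAU, hBV, hLUV⟩ := hL i
      obtain ⟨a, ha, ha0, ha1⟩ := exists_vanishing Uᶜ hU.isClosed_compl
      obtain ⟨b, hb, hb0, hb1⟩ := exists_vanishing Vᶜ hV.isClosed_compl
      have hUn : ∀ y ∈ U, b y - a y < 0 := by
        intro y hy
        have h1 : b y = 0 := (hb1 y).mpr fun h => Set.disjoint_left.mp hUV hy h
        have h2 : a y ≠ 0 := fun h => (ha1 y).mp h hy
        have h3 := lt_of_le_of_ne (ha0 y) (Ne.symm h2)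
        linarith
      have hVp : ∀ y ∈ V, 0 < b y - a y := by
        intro y hy
        have h1 : a y = 0 := (ha1 y).mpr fun h => Set.disjoint_left.mp hUV h hy
        have h2 : b y ≠ 0 := fun h => (hb1 y).mp h hy
        have h3 := lt_of_le_of_ne (hb0 y) (Ne.symm h2)
        linarith
      refine ⟨fun y => b y - a y, hb.sub ha, fun y hy => hUn y (hAU hy),
        fun y hy => hVp y (hBV hy), fun y hy => ?_⟩
      by_contra hyL
      have : y ∈ U ∪ V := by rw [← hLUV]; exact hyL
      simp only at hy
      rcases this with h | h
      · linarith [hUn y h]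
      · linarith [hVp y h]
    choose g hg hg0 hg1 hgL using hk
    obtain ⟨h, hh⟩ := ContinuousMap.exists_restrict_eq hY.isClosed
      (⟨fun y i => g i y, continuous_pi hg⟩ : C(Y, Fin n → ℝ))
    have hh' : ∀ y : Y, ∀ i, h y.1 i = g i y := fun y i =>
      congrFun (congrArg (fun k : C(Y, Fin n → ℝ) => k y) hh) i
    obtain ⟨x, hx, hx0⟩ := he h
      (fun x hx i hi => by have := hh' ⟨x, hx⟩ i; simp only at this; rw [this]; exact hg0 i _ hi)
      (fun x hx i hi => by have := hh' ⟨x, hx⟩ i; simp only at this; rw [this]; exact hg1 i _ hi)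
    refine ⟨⟨x, hx⟩, mem_iInter.mpr fun i => hgL i _ ?_⟩
    rw [← hh', hx0]; rfl

end Final

/-- Bing: for every `n` there is an `n`-dimensional hereditarily indecomposable
metrizable continuum. -/
theorem exists_hereditarilyIndecomposable_continuum_dim (n : ℕ) :
    ∃ (X : Type) (_ : TopologicalSpace X), TopologicalSpace.MetrizableSpace X ∧
      CompactSpace X ∧ ConnectedSpace X ∧ Nonempty X ∧
      HereditarilyIndecomposable X ∧
      (∃ A B : Fin n → Set X, IsEssentialFamily A B) ∧
      ¬ ∃ A B : Fin (n + 1) → Set X, IsEssentialFamily A B := by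
  obtain ⟨M, hM, hM0, hHI, hess⟩ := exists_bing n
  obtain ⟨Y, hYM, hYc, hYconn, hYe⟩ := exists_connected_ess hM hess
  refine ⟨Y, inferInstance, inferInstance, isCompact_iff_compactSpace.mp hYc,
    isConnected_iff_connectedSpace.mp hYconn, hYconn.nonempty.to_subtype, ?_,
    essential_of_essOn Y hYc hYe,
    no_essential_of_null Y hYc (MeasureTheory.measure_mono_null hYM hM0)⟩
  intro C D hC hCc hD hDc hCD
  have hsub : ∀ S : Set Y, Subtype.val '' S ⊆ M := by
    rintro S _ ⟨y, -, rfl⟩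
    exact hYM y.2
  have := hHI (Subtype.val '' C) (Subtype.val '' D) (hsub C) (hsub D)
    (hC.image continuous_subtype_val) (hCc.image _ continuous_subtype_val.continuousOn)
    (hD.image continuous_subtype_val) (hDc.image _ continuous_subtype_val.continuousOn) (by
      obtain ⟨p, hpC, hpD⟩ := hCD
      exact ⟨p, ⟨p, hpC, rfl⟩, ⟨p, hpD, rfl⟩⟩)
  rwa [Set.image_subset_image_iff Subtype.val_injective,
    Set.image_subset_image_iff Subtype.val_injective] at this
end

section
/- For every infinite cardinal κ there exists a hereditarily indecomposable continuum K of weight κ that admits an essential continuous map onto the Tychonoff cube [0,1]^κ. -/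
open Set

/-- The weight of a topological space: the least cardinality of a base. -/
noncomputable def topWeight (X : Type*) [TopologicalSpace X] : Cardinal :=
  ⨅ B : {B : Set (Set X) // TopologicalSpace.IsTopologicalBasis B}, Cardinal.mk B.1


namespace Kuhn
variable {ι : Type*} [DecidableEq ι]

/-- shift by one in direction `k` -/
def sh (k : ι) (x : ι → ℕ) : ι → ℕ := Function.update x k (x k + 1)

/-- iterated cup product of the coboundaries of the labels in `ls` -/
def W : List ((ι → ℕ) → ZMod 2) → Finset ι → (ι → ℕ) → ZMod 2
  | [], S, _ => if S = ∅ then 1 else 0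
  | l :: ls, S, x => ∑ k ∈ S, (l (sh k x) + l x) * W ls (S.erase k) (sh k x)

lemma sh_comm (j k : ι) (x : ι → ℕ) : sh j (sh k x) = sh k (sh j x) := by
  by_cases h : j = k
  · subst h; rfl
  · ext i
    simp only [sh, Function.update_apply]
    grind

lemma sum_symm_zero (S : Finset ι) (F : ι → ι → ZMod 2) (hF : ∀ j k, F j k = F k j) :
    ∑ k ∈ S, ∑ j ∈ S.erase k, F k j = 0 := by
  rw [Finset.sum_sigma']
  refine Finset.sum_involution (fun a _ => ⟨a.2, a.1⟩) ?_ ?_ ?_ ?_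
  · intro a _
    simp only
    rw [hF a.2 a.1]
    exact CharTwo.add_self_eq_zero _
  · intro a ha _ h
    simp only [Finset.mem_sigma, Finset.mem_erase] at ha
    have := congrArg Sigma.fst h
    exact ha.2.1 this
  · intro a ha
    simp only [Finset.mem_sigma, Finset.mem_erase] at ha ⊢
    exact ⟨ha.2.2, fun h => ha.2.1 h.symm, ha.1⟩
  · intro a _
    rfl

lemma W_closed (ls : List ((ι → ℕ) → ZMod 2)) (S : Finset ι) (x : ι → ℕ) :
    ∑ k ∈ S, (W ls (S.erase k) (sh k x) + W ls (S.erase k) x) = 0 := by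
  induction ls generalizing S x with
  | nil =>
    apply Finset.sum_eq_zero
    intro k _
    simp only [W]
    exact CharTwo.add_self_eq_zero _
  | cons l ls ih =>
    have key : ∀ k ∈ S, (W (l :: ls) (S.erase k) (sh k x) + W (l :: ls) (S.erase k) x)
      = ∑ j ∈ S.erase k, (((l (sh j (sh k x)) + l (sh k x)) + (l (sh j x) + l x)) *
            W ls ((S.erase k).erase j) (sh j (sh k x)))
        + ∑ j ∈ S.erase k, (l (sh j x) + l x) *
          (W ls ((S.erase k).erase j) (sh k (sh j x)) + W ls ((S.erase k).erase j) (sh j x)) := by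
      intro k _
      simp only [W]
      rw [← Finset.sum_add_distrib, ← Finset.sum_add_distrib]
      apply Finset.sum_congr rfl
      intro j _
      rw [sh_comm k j x]
      have h2 : ∀ a : ZMod 2, a + a = 0 := CharTwo.add_self_eq_zero
      linear_combination -h2 ((l (sh j x) + l x) * W ls ((S.erase k).erase j) (sh j (sh k x)))
    rw [Finset.sum_congr rfl key, Finset.sum_add_distrib]
    have h1 : ∑ k ∈ S, ∑ j ∈ S.erase k, (((l (sh j (sh k x)) + l (sh k x)) + (l (sh j x) + l x)) *
            W ls ((S.erase k).erase j) (sh j (sh k x))) = 0 := by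
      apply sum_symm_zero S (fun k j => (((l (sh j (sh k x)) + l (sh k x)) + (l (sh j x) + l x)) *
            W ls ((S.erase k).erase j) (sh j (sh k x))))
      intro j k
      rw [sh_comm k j x, Finset.erase_right_comm]
      ring
    rw [h1, zero_add]
    have h2 : ∑ k ∈ S, ∑ j ∈ S.erase k, (l (sh j x) + l x) *
          (W ls ((S.erase k).erase j) (sh k (sh j x)) + W ls ((S.erase k).erase j) (sh j x))
        = ∑ j ∈ S, ∑ k ∈ S.erase j, (l (sh j x) + l x) *
          (W ls ((S.erase k).erase j) (sh k (sh j x)) + W ls ((S.erase k).erase j) (sh j x)) := by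
      apply Finset.sum_comm'
      intro a b
      simp only [Finset.mem_erase]
      tauto
    rw [h2]
    apply Finset.sum_eq_zero
    intro j _
    rw [← Finset.mul_sum]
    have := ih (S.erase j) (sh j x)
    simp only [Finset.erase_right_comm (a := j)] at this
    rw [this, mul_zero]

lemma W_zero (ls : List ((ι → ℕ) → ZMod 2)) (S : Finset ι) (x : ι → ℕ)
    (l : (ι → ℕ) → ZMod 2) (hl : l ∈ ls)
    (hc : ∀ y, x ≤ y → (∀ i, y i ≤ x i + if i ∈ S then 1 else 0) → l y = l x) :
    W ls S x = 0 := by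
  induction ls generalizing S x with
  | nil => simp at hl
  | cons l' ls ih =>
    simp only [W]
    apply Finset.sum_eq_zero
    intro k hk
    have hx1 : x ≤ sh k x := by
      intro i; simp only [sh, Function.update_apply]; split_ifs with h
      · subst h; omega
      · exact le_rfl
    have hx2 : ∀ i, sh k x i ≤ x i + if i ∈ S then 1 else 0 := by
      intro i; simp only [sh, Function.update_apply]; split_ifs with h h' h'
      · subst h; omega
      · subst h; exact absurd hk h'
      · omega
      · omega
    rcases List.mem_cons.1 hl with rfl | h
    · rw [hc _ hx1 hx2, CharTwo.add_self_eq_zero, zero_mul]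
    · rw [ih (S.erase k) (sh k x) h, mul_zero]
      intro y hy hy2
      rw [hc _ hx1 hx2]
      apply hc y (hx1.trans hy)
      intro i
      have := hy2 i
      simp only [sh, Function.update_apply, Finset.mem_erase] at this
      by_cases h : i = k
      · subst h; simp [hk] at this ⊢; exact this
      · simpa [h] using this

/-- iterated sum -/
def J (N : ℕ) : List ι → ((ι → ℕ) → ZMod 2) → (ι → ℕ) → ZMod 2
  | [], f, x => f x
  | k :: ks, f, x => J N ks (fun y => ∑ m ∈ Finset.range N, f (Function.update y k m)) x

lemma J_perm (N : ℕ) {k1 k2 : List ι} (h : k1.Perm k2) (f : (ι → ℕ) → ZMod 2) :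
    J N k1 f = J N k2 f := by
  induction h generalizing f with
  | nil => rfl
  | cons k _ ih => funext x; simp only [J]; rw [ih]
  | swap a b l =>
    funext x
    simp only [J]
    by_cases hab : a = b
    · subst hab; rfl
    congr 1
    funext y
    rw [Finset.sum_comm]
    refine Finset.sum_congr rfl fun _ _ => Finset.sum_congr rfl fun _ _ => ?_
    rw [Function.update_comm hab]
  | trans _ _ h1 h2 => rw [h1, h2]

lemma J_sum (N : ℕ) (ks : List ι) (S : Finset ι) (f : ι → (ι → ℕ) → ZMod 2) (x : ι → ℕ) :
    J N ks (fun y => ∑ i ∈ S, f i y) x = ∑ i ∈ S, J N ks (f i) x := by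
  induction ks generalizing f with
  | nil => rfl
  | cons k ks ih =>
    simp only [J]
    rw [← ih]
    congr 1
    funext y
    rw [Finset.sum_comm]

lemma J_ne_zero (N : ℕ) (ks : List ι) (f : (ι → ℕ) → ZMod 2) (x : ι → ℕ)
    (h : J N ks f x ≠ 0) : ∃ y, f y ≠ 0 := by
  induction ks generalizing f with
  | nil => exact ⟨x, h⟩
  | cons k ks ih =>
    obtain ⟨y, hy⟩ := ih _ h
    obtain ⟨m, _, hm⟩ := Finset.exists_ne_zero_of_sum_ne_zero hy
    exact ⟨_, hm⟩

lemma J_update (N : ℕ) (ks : List ι) (f : (ι → ℕ) → ZMod 2) (x : ι → ℕ) (i : ι) (c : ℕ)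
    (hi : i ∉ ks) :
    J N ks (fun y => f (Function.update y i c)) x = J N ks f (Function.update x i c) := by
  induction ks generalizing f with
  | nil => rfl
  | cons k ks ih =>
    simp only [List.mem_cons, not_or] at hi
    simp only [J]
    rw [← ih _ hi.2]
    congr 1
    funext y
    refine Finset.sum_congr rfl fun m _ => ?_
    rw [Function.update_comm hi.1]

lemma J_delta (N : ℕ) (k : ι) (ks : List ι) (g : (ι → ℕ) → ZMod 2) :
    J N (k :: ks) (fun y => g (sh k y) + g y) = J N ks (fun y => g (Function.update y k N) +
      g (Function.update y k 0)) := by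
  funext x
  simp only [J]
  congr 1
  funext y
  have : ∀ m, g (sh k (Function.update y k m)) + g (Function.update y k m)
      = g (Function.update y k (m+1)) - g (Function.update y k m) := by
    intro m
    rw [CharTwo.sub_eq_add]
    simp [sh]
  simp only [this]
  rw [Finset.sum_range_sub (fun m => g (Function.update y k m)), CharTwo.sub_eq_add]

lemma J_total (N : ℕ) (l : ι → (ι → ℕ) → ZMod 2) (h0 : ∀ i y, y i = 0 → l i y = 0)
    (h1 : ∀ i y, y i = N → l i y = 1) (ks : List ι) (hk : ks.Nodup) (x : ι → ℕ) :
    J N ks (W (ks.map l) ks.toFinset) x = 1 := by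
  induction ks generalizing x with
  | nil => simp [J, W]
  | cons i ks ih =>
    rw [List.nodup_cons] at hk
    set S := (i :: ks).toFinset with hS
    have e1 : W ((i :: ks).map l) S = fun y => ∑ k ∈ S,
        ((fun z => l i z * W (ks.map l) (S.erase k) z) (sh k y) +
          (fun z => l i z * W (ks.map l) (S.erase k) z) y) := by
      funext y
      simp only [List.map_cons, W]
      have := W_closed (ks.map l) S y
      rw [← add_zero (∑ k ∈ S, (l i (sh k y) + l i y) * _), ← mul_zero (l i y), ← this,
        Finset.mul_sum, ← Finset.sum_add_distrib]
      refine Finset.sum_congr rfl fun k _ => ?_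
      have h2 : ∀ a : ZMod 2, a + a = 0 := CharTwo.add_self_eq_zero
      linear_combination h2 (l i y * W (ks.map l) (S.erase k) (sh k y))
    rw [e1, J_sum, Finset.sum_eq_single i]
    · rw [J_delta N i ks (fun z => l i z * W (ks.map l) (S.erase i) z)]
      have e2 : S.erase i = ks.toFinset := by
        rw [hS, List.toFinset_cons, Finset.erase_insert]; simpa using hk.1
      rw [e2]
      have e3 : (fun y => l i (Function.update y i N) * W (ks.map l) ks.toFinset (Function.update y i N)
          + l i (Function.update y i 0) * W (ks.map l) ks.toFinset (Function.update y i 0))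
          = fun y => (W (ks.map l) ks.toFinset) (Function.update y i N) := by
        funext y
        rw [h0 i (Function.update y i 0) (by simp), h1 i (Function.update y i N) (by simp)]
        ring
      rw [e3, J_update _ _ _ _ _ _ hk.1]
      exact ih hk.2 _
    · intro k hkS hki
      have hkk : k ∈ ks := by
        rw [hS, List.mem_toFinset, List.mem_cons] at hkS
        tauto
      have hp : (i :: ks).Perm (k :: (i :: ks).erase k) :=
        List.perm_cons_erase (List.mem_cons_of_mem _ hkk)
      rw [J_perm N hp, J_delta N k _ (fun z => l i z * W (ks.map l) (S.erase k) z)]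
      have z : ∀ c, (c = 0 ∨ c = N) → ∀ y, W (ks.map l) (S.erase k) (Function.update y k c) = 0 := by
        intro c hc y
        apply W_zero _ _ _ (l k) (List.mem_map_of_mem hkk)
        intro w hw hw2
        have a1 := hw k
        have a2 := hw2 k
        simp only [Function.update_self, Finset.mem_erase, ne_eq, not_true_eq_false, false_and,
          if_false, add_zero] at a1 a2
        have a3 : w k = c := le_antisymm a2 a1
        rcases hc with rfl | rfl
        · rw [h0 k w a3, h0 k _ (by simp)]
        · rw [h1 k w a3, h1 k _ (by simp)]
      by_contra hne
      obtain ⟨y, hy⟩ := J_ne_zero _ _ _ _ hne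
      apply hy
      rw [z N (Or.inr rfl), z 0 (Or.inl rfl)]; ring
    · intro h; exact absurd (by simp [hS]) h

lemma kuhn [Fintype ι] (N : ℕ) (l : ι → (ι → ℕ) → ZMod 2) (h0 : ∀ i y, y i = 0 → l i y = 0)
    (h1 : ∀ i y, y i = N → l i y = 1) :
    ∃ x : ι → ℕ, ∀ i, ∃ y z : ι → ℕ, x ≤ y ∧ x ≤ z ∧ (∀ j, y j ≤ x j + 1) ∧ (∀ j, z j ≤ x j + 1) ∧
      l i y = 0 ∧ l i z = 1 := by
  have ht := J_total N l h0 h1 Finset.univ.toList (Finset.nodup_toList _) 0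
  obtain ⟨x, hx⟩ := J_ne_zero N _ _ _ (by rw [ht]; exact one_ne_zero)
  refine ⟨x, fun i => ?_⟩
  have : ¬ ∀ y, x ≤ y → (∀ i, y i ≤ x i + 1) → l i y = l i x := by
    intro hc
    apply hx
    apply W_zero _ _ _ (l i) (List.mem_map_of_mem (by simp))
    intro y hy hy2
    exact hc y hy (fun j => by simpa using hy2 j)
  push Not at this
  obtain ⟨y, hy, hy2, hne⟩ := this
  have hz : ∀ a : ZMod 2, a = 0 ∨ a = 1 := by decide
  rcases hz (l i y) with a | a <;> rcases hz (l i x) with b | b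
  · exact absurd (a.trans b.symm) hne
  · exact ⟨y, x, hy, le_rfl, hy2, fun j => by omega, a, b⟩
  · exact ⟨x, y, le_rfl, hy, fun j => by omega, hy2, b, a⟩
  · exact absurd (a.trans b.symm) hne

end Kuhn

open Filter Topology in
lemma miranda_fin {ι : Type*} [Fintype ι] (G : ι → C(ι → unitInterval, ℝ))
    (h0 : ∀ i x, x i = 0 → G i x < 0) (h1 : ∀ i x, x i = 1 → 0 < G i x) :
    ∃ x, ∀ i, G i x = 0 := by
  classical
  let p : ℕ → (ι → ℕ) → (ι → unitInterval) := fun N y i =>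
    Set.projIcc (0:ℝ) 1 zero_le_one ((y i : ℝ) / (N + 1))
  have hk : ∀ N : ℕ, ∃ x : ι → ℕ, ∀ i, ∃ y z : ι → ℕ, x ≤ y ∧ x ≤ z ∧
      (∀ j, y j ≤ x j + 1) ∧ (∀ j, z j ≤ x j + 1) ∧ G i (p N y) ≤ 0 ∧ 0 ≤ G i (p N z) := by
    intro N
    obtain ⟨x, hx⟩ := Kuhn.kuhn (N + 1) (fun i y => if G i (p N y) < 0 then 0 else 1) (by
      intro i y hy
      have : p N y i = 0 := by
        simp only [p, hy, Nat.cast_zero, zero_div]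
        exact Set.projIcc_left zero_le_one
      simp [h0 i _ this]) (by
      intro i y hy
      have : p N y i = 1 := by
        have hN : ((N:ℝ) + 1) ≠ 0 := by positivity
        simp only [p, hy, Nat.cast_add, Nat.cast_one, div_self hN]
        exact Set.projIcc_right zero_le_one
      simp [(h1 i _ this).le])
    refine ⟨x, fun i => ?_⟩
    obtain ⟨y, z, a, b, c, d, e, f⟩ := hx i
    refine ⟨y, z, a, b, c, d, ?_, ?_⟩
    · by_contra hcon
      rw [if_neg (by linarith)] at e
      exact one_ne_zero e
    · by_contra hcon
      rw [if_pos (by linarith)] at f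
      exact zero_ne_one f
  choose x y z hxy hxz hy hz gy gz using hk
  obtain ⟨a, φ, hφ, ha⟩ := CompactSpace.tendsto_subseq (fun N => p N (x N))
  have close : ∀ w : ℕ → ι → ℕ, (∀ N, x N ≤ w N) → (∀ N j, w N j ≤ x N j + 1) →
      Tendsto (fun n => p (φ n) (w (φ n))) atTop (𝓝 a) := by
    intro w hw1 hw2
    refine tendsto_of_tendsto_of_dist ha ?_
    have hb : ∀ N, dist (p N (x N)) (p N (w N)) ≤ 1 / ((N:ℝ) + 1) := by
      intro N
      rw [dist_pi_le_iff (by positivity)]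
      intro j
      have l1 : dist (p N (x N) j) (p N (w N) j) ≤ dist ((x N j : ℝ) / (N+1)) ((w N j : ℝ) / (N+1)) := by
        have := (LipschitzWith.projIcc (zero_le_one (α := ℝ))).dist_le_mul ((x N j : ℝ) / (N+1)) ((w N j : ℝ) / (N+1))
        simpa [p] using this
      refine l1.trans ?_
      rw [Real.dist_eq, ← sub_div, abs_div, abs_of_pos (by positivity : (0:ℝ) < N + 1)]
      apply div_le_div_of_nonneg_right _ (by positivity)
      have q1 : (x N j : ℝ) ≤ w N j := by exact_mod_cast hw1 N j
      have q2 : (w N j : ℝ) ≤ x N j + 1 := by exact_mod_cast hw2 N j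
      rw [abs_le]; constructor <;> linarith
    have := (tendsto_one_div_add_atTop_nhds_zero_nat (𝕜 := ℝ)).comp hφ.tendsto_atTop
    exact squeeze_zero (fun _ => dist_nonneg) (fun n => hb (φ n)) this
  refine ⟨a, fun i => le_antisymm ?_ ?_⟩
  · have := ((G i).continuous.tendsto a).comp (close (fun N => y N i) (fun N => hxy N i) (fun N => hy N i))
    exact le_of_tendsto' this (fun n => gy _ i)
  · have := ((G i).continuous.tendsto a).comp (close (fun N => z N i) (fun N => hxz N i) (fun N => hz N i))
    exact ge_of_tendsto' this (fun n => gz _ i)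

lemma miranda {J : Type*} (G : J → C(J → unitInterval, ℝ))
    (h0 : ∀ i x, x i = 0 → G i x < 0) (h1 : ∀ i x, x i = 1 → 0 < G i x) :
    ∃ x, ∀ i, G i x = 0 := by
  classical
  have := IsCompact.inter_iInter_nonempty (s := (univ : Set (J → unitInterval))) isCompact_univ
    (fun i => {x | G i x = 0}) (fun i => isClosed_eq (G i).continuous continuous_const) (by
      intro u
      let ext : C(u → unitInterval, J → unitInterval) :=
        ⟨fun y j => if h : j ∈ u then y ⟨j, h⟩ else 0, by
          refine continuous_pi fun j => ?_
          by_cases h : j ∈ u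
          · simpa [h] using continuous_apply _
          · simpa [h] using continuous_const⟩
      have he : ∀ y (j : u), ext y j = y j := by intro y j; simp [ext]
      obtain ⟨y, hy⟩ := miranda_fin (fun j : u => (G j).comp ext)
        (fun i y hy => h0 i _ (by rw [he, hy])) (fun i y hy => h1 i _ (by rw [he, hy]))
      refine ⟨ext y, mem_univ _, ?_⟩
      simp only [mem_iInter]
      intro i hi
      exact hy ⟨i, hi⟩)
  obtain ⟨x, _, hx⟩ := this
  exact ⟨x, fun i => mem_iInter.1 hx i⟩

/-- evaluation of a rational polynomial on the cube -/
noncomputable def polyC {J : Type*} (r : MvPolynomial J ℚ) : C(J → unitInterval, ℝ) :=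
  MvPolynomial.aeval (fun j => (⟨fun x => (x j : ℝ), by fun_prop⟩ : C(J → unitInterval, ℝ))) r

lemma polyC_dense {J : Type*} (f : C(J → unitInterval, ℝ)) (ε : ℝ) (hε : 0 < ε) :
    ∃ r : MvPolynomial J ℚ, ∀ x, |polyC r x - f x| < ε := by
  let co : J → C(J → unitInterval, ℝ) := fun j => ⟨fun x => (x j : ℝ), by fun_prop⟩
  let R : Subring C(J → unitInterval, ℝ) :=
    (MvPolynomial.aeval (R := ℚ) co).toRingHom.range.topologicalClosure
  have hconst : ∀ c : ℝ, algebraMap ℝ C(J → unitInterval, ℝ) c ∈ R := by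
    intro c
    have hcl : IsClosed {c : ℝ | algebraMap ℝ C(J → unitInterval, ℝ) c ∈ R} := by
      have hcont : Continuous (algebraMap ℝ C(J → unitInterval, ℝ)) := continuous_algebraMap _ _
      exact (Subring.isClosed_topologicalClosure _).preimage hcont
    have hd : Dense {c : ℝ | algebraMap ℝ C(J → unitInterval, ℝ) c ∈ R} := by
      refine Rat.denseRange_cast.mono ?_
      rintro _ ⟨q, rfl⟩
      apply Subring.le_topologicalClosure
      refine ⟨MvPolynomial.C q, ?_⟩
      ext x
      simp
    have := hcl.closure_eq ▸ hd c
    exact this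
  let A : Subalgebra ℝ C(J → unitInterval, ℝ) :=
    { R with algebraMap_mem' := hconst }
  have hA : A.SeparatesPoints := by
    intro x y hxy
    obtain ⟨j, hj⟩ := Function.ne_iff.1 hxy
    refine ⟨_, ⟨co j, ?_, rfl⟩, ?_⟩
    · apply Subring.le_topologicalClosure
      exact ⟨MvPolynomial.X j, by simp⟩
    · simpa [co, Subtype.ext_iff] using hj
  have htop := ContinuousMap.subalgebra_topologicalClosure_eq_top_of_separatesPoints A hA
  have hf : f ∈ R := by
    have h1 : f ∈ A.topologicalClosure := by rw [htop]; trivial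
    have h2 : f ∈ closure (R : Set C(J → unitInterval, ℝ)) := h1
    rwa [(Subring.isClosed_topologicalClosure _).closure_eq] at h2
  have h3 : f ∈ closure (Set.range (polyC (J := J))) := hf
  obtain ⟨_, ⟨r, rfl⟩, hr⟩ := Metric.mem_closure_iff.1 h3 ε hε
  refine ⟨r, fun x => ?_⟩
  have := (ContinuousMap.dist_lt_iff hε).1 hr x
  rwa [dist_comm, Real.dist_eq] at this

/-- the zigzag map -/
noncomputable def zig (t : ℝ) : ℝ := max (min (9/4 * t) (5/4 - 3/2 * t)) (9/4 * t - 5/4)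

/-- clamp to `[1/8,7/8]` -/
noncomputable def clam (t : ℝ) : ℝ := max (1/8) (min t (7/8))

/-- the folding partition function -/
noncomputable def foldF {J : Type*} (j : J) (r : MvPolynomial J ℚ) : C(J → unitInterval, ℝ) :=
  ⟨fun x => zig (x j) - clam (polyC r x), by unfold zig clam; fun_prop⟩

lemma foldF_zero {J : Type*} (j : J) (r : MvPolynomial J ℚ) (x) (h : x j = 0) : foldF j r x < 0 := by
  have : (1:ℝ)/8 ≤ clam (polyC r x) := le_max_left _ _
  simp only [foldF, ContinuousMap.coe_mk, h]
  norm_num [zig]; linarith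

lemma foldF_one {J : Type*} (j : J) (r : MvPolynomial J ℚ) (x) (h : x j = 1) : 0 < foldF j r x := by
  have : clam (polyC r x) ≤ 7/8 := max_le (by norm_num) (min_le_right _ _)
  simp only [foldF, ContinuousMap.coe_mk, h]
  norm_num [zig]; linarith

/-- essential closed sets of the big cube, functional form -/
def Ess {A : Type*} (K : Set (A ⊕ A → unitInterval)) : Prop :=
  ∀ g : A → C(A ⊕ A → unitInterval, ℝ), (∀ a x, x (Sum.inl a) = 0 → g a x < 0) →
    (∀ a x, x (Sum.inl a) = 1 → 0 < g a x) → ∃ x ∈ K, ∀ a, g a x = 0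

/-- folding set -/
def K0 {A : Type*} (e : A → MvPolynomial (A ⊕ A) ℚ) : Set (A ⊕ A → unitInterval) :=
  {x | ∀ a, foldF (Sum.inr a) (e a) x = 0}

lemma K0_closed {A : Type*} (e : A → MvPolynomial (A ⊕ A) ℚ) : IsClosed (K0 e) := by
  simp only [K0, ofPred_forall]
  exact isClosed_iInter fun a => isClosed_eq (ContinuousMap.continuous _) continuous_const

lemma K0_ess {A : Type*} (e : A → MvPolynomial (A ⊕ A) ℚ) : Ess (K0 e) := by
  intro g h0 h1
  obtain ⟨x, hx⟩ := miranda (Sum.elim g (fun a => foldF (Sum.inr a) (e a))) (by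
    rintro (a | a) x hx
    · exact h0 a x hx
    · exact foldF_zero _ _ _ hx) (by
    rintro (a | a) x hx
    · exact h1 a x hx
    · exact foldF_one _ _ _ hx)
  have hxK : x ∈ K0 e := fun a => hx (Sum.inr a)
  exact ⟨x, hxK, fun a => hx (Sum.inl a)⟩

lemma exists_min {A : Type*} (M : Set (A ⊕ A → unitInterval)) (hM : IsClosed M) (hE : Ess M) :
    ∃ K ⊆ M, Minimal (· ∈ {K : Set (A ⊕ A → unitInterval) | IsClosed K ∧ Ess K}) K := by
  refine zorn_superset_nonempty {K : Set (A ⊕ A → unitInterval) | IsClosed K ∧ Ess K} ?_ M ⟨hM, hE⟩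
  intro c hc hch hne
  refine ⟨⋂₀ c, ⟨isClosed_sInter fun s hs => (hc hs).1, ?_⟩, fun s hs => sInter_subset_of_mem hs⟩
  intro g h0 h1
  have : Nonempty c := hne.to_subtype
  have hz : IsClosed {x | ∀ a, g a x = 0} := by
    simp only [ofPred_forall]
    exact isClosed_iInter fun a => isClosed_eq (ContinuousMap.continuous _) continuous_const
  obtain ⟨x, hx⟩ := IsCompact.nonempty_iInter_of_directed_nonempty_isCompact_isClosed
    (fun s : c => s.1 ∩ {x | ∀ a, g a x = 0}) (by
      intro s t
      rcases hch.total s.2 t.2 with h | h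
      · exact ⟨s, subset_rfl, inter_subset_inter_left _ h⟩
      · exact ⟨t, inter_subset_inter_left _ h, subset_rfl⟩)
    (fun s => by obtain ⟨x, hx, hx2⟩ := (hc s.2).2 g h0 h1; exact ⟨x, hx, hx2⟩)
    (fun s => ((hc s.2).1.inter hz).isCompact) (fun s => (hc s.2).1.inter hz)
  rw [mem_iInter] at hx
  exact ⟨x, fun s hs => (hx ⟨s, hs⟩).1, (hx (Classical.arbitrary c)).2⟩

lemma ess_nonempty {A : Type*} {K : Set (A ⊕ A → unitInterval)} (hK : Ess K) : K.Nonempty := by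
  obtain ⟨x, hx, _⟩ := hK (fun a => ⟨fun x => (x (Sum.inl a) : ℝ) - 1/2, by fun_prop⟩)
    (by intro a x hx; norm_num [hx]) (by intro a x hx; norm_num [hx])
  exact ⟨x, hx⟩

lemma min_connected {A : Type*} {K : Set (A ⊕ A → unitInterval)}
    (hK : Minimal (· ∈ {K : Set (A ⊕ A → unitInterval) | IsClosed K ∧ Ess K}) K) :
    IsConnected K := by
  refine ⟨ess_nonempty hK.1.2, ?_⟩
  rw [isPreconnected_iff_subset_of_fully_disjoint_closed hK.1.1]
  intro u v hu hv huv hd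
  by_contra! hcon
  have key : ∀ w, IsClosed w → ¬ K ⊆ w → ¬ Ess (K ∩ w) := by
    intro w hw hnw he
    exact hnw ((hK.2 ⟨hK.1.1.inter hw, he⟩ inter_subset_left).trans inter_subset_right)
  have h1 := key u hu hcon.1
  have h2 := key v hv hcon.2
  unfold Ess at h1 h2
  push Not at h1 h2
  obtain ⟨g, g0, g1, hg⟩ := h1
  obtain ⟨g', g0', g1', hg'⟩ := h2
  obtain ⟨φ, φ0, φ1, φI⟩ := exists_continuous_zero_one_of_isClosed hu hv hd
  obtain ⟨x, hx, hx0⟩ := hK.1.2 (fun a => (1 - φ) * g a + φ * g' a) (by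
    intro a x hx
    have := g0 a x hx
    have := g0' a x hx
    have := (φI x).1
    have := (φI x).2
    simp only [ContinuousMap.add_apply, ContinuousMap.mul_apply, ContinuousMap.sub_apply, ContinuousMap.one_apply]
    by_cases h : φ x = 0
    · simp [h]; assumption
    · have : 0 < φ x := lt_of_le_of_ne (by assumption) (Ne.symm h)
      nlinarith) (by
    intro a x hx
    have := g1 a x hx
    have := g1' a x hx
    have := (φI x).1
    have := (φI x).2
    simp only [ContinuousMap.add_apply, ContinuousMap.mul_apply, ContinuousMap.sub_apply, ContinuousMap.one_apply]
    by_cases h : φ x = 0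
    · simp [h]; assumption
    · have : 0 < φ x := lt_of_le_of_ne (by assumption) (Ne.symm h)
      nlinarith)
  rcases huv hx with h | h
  · obtain ⟨a, ha⟩ := hg x ⟨hx, h⟩
    have := hx0 a
    have e : φ x = 0 := φ0 h
    apply ha
    simpa [e] using this
  · obtain ⟨a, ha⟩ := hg' x ⟨hx, h⟩
    have := hx0 a
    have e : φ x = 1 := φ1 h
    apply ha
    simpa [e] using this

lemma hi_of_subset {A : Type*} (e : A → MvPolynomial (A ⊕ A) ℚ) (he : Function.Surjective e)
    (K : Set (A ⊕ A → unitInterval)) (hK : K ⊆ K0 e) : HereditarilyIndecomposable K := by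
  intro C D hCc hC hDc hD hCD
  by_contra! hcon
  obtain ⟨p, hpC, hpD⟩ := not_subset.1 hcon.1
  obtain ⟨q, hqD, hqC⟩ := not_subset.1 hcon.2
  have cC : IsClosed (Subtype.val '' C) := (hCc.image continuous_subtype_val).isClosed
  have cD : IsClosed (Subtype.val '' D) := (hDc.image continuous_subtype_val).isClosed
  obtain ⟨a, a0, a1, aI⟩ := exists_continuous_zero_one_of_isClosed cD
    (isClosed_singleton (x := p.1)) (by
      rw [disjoint_singleton_right]; rintro ⟨y, hy, h⟩; exact hpD (Subtype.ext h ▸ hy))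
  obtain ⟨b, b0, b1, bI⟩ := exists_continuous_zero_one_of_isClosed cC
    (isClosed_singleton (x := q.1)) (by
      rw [disjoint_singleton_right]; rintro ⟨y, hy, h⟩; exact hqC (Subtype.ext h ▸ hy))
  obtain ⟨r, hr⟩ := polyC_dense (⟨fun x => 1/2 - 1/2 * a x + 1/2 * b x, by fun_prop⟩) (1/8) (by norm_num)
  obtain ⟨i, rfl⟩ := he r
  have hr' : ∀ x, polyC (e i) x < 1/2 - 1/2 * a x + 1/2 * b x + 1/8 ∧
      1/2 - 1/2 * a x + 1/2 * b x - 1/8 < polyC (e i) x := by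
    intro x
    have := abs_lt.1 (hr x)
    simp only [ContinuousMap.coe_mk] at this
    constructor <;> linarith [this.1, this.2]
  have hz : ∀ x : K, zig (x.1 (Sum.inr i)) = clam (polyC (e i) x.1) := by
    intro x
    have := hK x.2 i
    simp only [foldF, ContinuousMap.coe_mk] at this
    linarith
  have aC : ∀ x ∈ C, b x.1 = 0 := fun x hx => b0 ⟨x, hx, rfl⟩
  have aD : ∀ x ∈ D, a x.1 = 0 := fun x hx => a0 ⟨x, hx, rfl⟩
  have ap : a p.1 = 1 := a1 rfl
  have bq : b q.1 = 1 := b1 rfl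
  have ht : Continuous fun x : K => (x.1 (Sum.inr i) : ℝ) :=
    continuous_subtype_val.comp ((continuous_apply _).comp continuous_subtype_val)
  have zlow : ∀ t : ℝ, 1/3 ≤ t → 1/4 ≤ zig t := by
    intro t h1; unfold zig
    rcases le_total t (2/3) with h | h
    · exact le_max_of_le_left (le_min (by linarith) (by linarith))
    · exact le_max_of_le_right (by linarith)
  have zhigh : ∀ t : ℝ, t ≤ 2/3 → zig t ≤ 3/4 := by
    intro t h1; unfold zig
    refine max_le ?_ (by linarith)
    rcases le_total t (1/3) with h | h
    · exact (min_le_left _ _).trans (by linarith)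
    · exact (min_le_right _ _).trans (by linarith)
  have z1 : zig (1/3) = 3/4 := by norm_num [zig]
  have z2 : zig (2/3) = 1/4 := by norm_num [zig]
  have hCt : ∀ x ∈ C, (x.1 (Sum.inr i) : ℝ) < 1/3 := by
    by_contra! hx
    obtain ⟨x, hx, hx1⟩ := hx
    have hp : (p.1 (Sum.inr i) : ℝ) ≤ 1/3 := by
      by_contra! h
      have h2 := zlow _ h.le
      rw [hz p] at h2
      have := (hr' p.1).1
      rw [ap, aC p hpC] at this
      have : clam (polyC (e i) p.1) ≤ 1/8 := max_le le_rfl ((min_le_left _ _).trans (by linarith))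
      linarith
    obtain ⟨y, hy, hy1⟩ := hC.isPreconnected.intermediate_value hpC hx ht.continuousOn ⟨hp, hx1⟩
    simp only at hy1
    have h2 := hz y
    rw [hy1, z1] at h2
    have h3 := (hr' y.1).1
    rw [aC y hy] at h3
    have : clam (polyC (e i) y.1) ≤ 5/8 := max_le (by norm_num)
      ((min_le_left _ _).trans (by linarith [(aI y.1).1]))
    linarith
  have hDt : ∀ x ∈ D, 2/3 < (x.1 (Sum.inr i) : ℝ) := by
    by_contra! hx
    obtain ⟨x, hx, hx1⟩ := hx
    have hp : 2/3 ≤ (q.1 (Sum.inr i) : ℝ) := by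
      by_contra! h
      have h2 := zhigh _ h.le
      rw [hz q] at h2
      have := (hr' q.1).2
      rw [bq, aD q hqD] at this
      have : 7/8 ≤ clam (polyC (e i) q.1) := le_max_of_le_right (le_min (by linarith) le_rfl)
      linarith
    obtain ⟨y, hy, hy1⟩ := hD.isPreconnected.intermediate_value hx hqD ht.continuousOn ⟨hx1, hp⟩
    simp only at hy1
    have h2 := hz y
    rw [hy1, z2] at h2
    have h3 := (hr' y.1).2
    rw [aD y hy] at h3
    have : 3/8 ≤ clam (polyC (e i) y.1) := le_max_of_le_right
      (le_min (by linarith [(bI y.1).1]) (by norm_num))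
    linarith
  obtain ⟨x, hx1, hx2⟩ := hCD
  have := hCt x hx1
  have := hDt x hx2
  linarith

lemma ess_family {A : Type*} {K : Set (A ⊕ A → unitInterval)} (hK : IsClosed K) (hE : Ess K) :
    IsEssentialFamily (fun a : A => (fun (x : K) (a : A) => x.1 (Sum.inl a)) ⁻¹' {x | x a = 0})
      (fun a : A => (fun (x : K) (a : A) => x.1 (Sum.inl a)) ⁻¹' {x | x a = 1}) := by
  classical
  have : CompactSpace K := isCompact_iff_compactSpace.1 hK.isCompact
  have hc : ∀ a : A, Continuous fun x : K => x.1 (Sum.inl a) := fun a =>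
    (continuous_apply _).comp continuous_subtype_val
  have hc' : ∀ a : A, Continuous fun x : A ⊕ A → unitInterval => x (Sum.inl a) := fun a => by fun_prop
  refine ⟨fun a => isClosed_eq (hc a) continuous_const, fun a => isClosed_eq (hc a) continuous_const,
    ?_, ?_⟩
  · intro a
    rw [Set.disjoint_left]
    intro x h0 h1
    simp only [mem_preimage, mem_ofPred_eq] at h0 h1
    rw [h0] at h1
    exact zero_ne_one h1
  intro L hL
  by_contra hempty
  choose hLc U V hU hV hUV hAU hBV hcov using hL
  have hcover : (univ : Set K) ⊆ ⋃ a, (L a)ᶜ := by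
    rw [← compl_iInter, not_nonempty_iff_eq_empty.1 hempty, compl_empty]
  obtain ⟨F, hF⟩ := isCompact_univ.elim_finite_subcover _ (fun a => (hLc a).isOpen_compl) hcover
  obtain ⟨w, hw, hwc, hwL⟩ := exists_iUnion_eq_closed_subset
    (u := fun a : F => (L a.1)ᶜ) (fun a => (hLc a).isOpen_compl) (fun x => Set.toFinite _) (by
      apply univ_subset_iff.1
      intro x hx
      obtain ⟨a, ha, hxa⟩ := mem_iUnion₂.1 (hF hx)
      exact mem_iUnion.2 ⟨⟨a, ha⟩, hxa⟩)
  let w' : A → Set K := fun a => if h : a ∈ F then w ⟨a, h⟩ else ∅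
  have hw'c : ∀ a, IsClosed (w' a) := by
    intro a; by_cases h : a ∈ F
    · simpa [w', h] using hwc _
    · simp [w', h]
  have hw'L : ∀ a, w' a ⊆ U a ∪ V a := by
    intro a; rw [← hcov a]; by_cases h : a ∈ F
    · simpa [w', h] using hwL ⟨a, h⟩
    · simp [w', h]
  have hw' : ∀ x : K, ∃ a, x ∈ w' a := by
    intro x
    have : x ∈ iUnion w := by rw [hw]; trivial
    obtain ⟨a, ha⟩ := mem_iUnion.1 this
    exact ⟨a.1, by simpa [w'] using ha⟩
  have himg : ∀ s : Set K, IsClosed s → IsClosed (Subtype.val '' s) := fun s hs =>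
    (hs.isCompact.image continuous_subtype_val).isClosed
  have hg : ∀ a : A, ∃ g : C(A ⊕ A → unitInterval, ℝ),
      EqOn g 0 ((Subtype.val '' (w' a ∩ (V a)ᶜ)) ∪ {x | x (Sum.inl a) = 0}) ∧
      EqOn g 1 ((Subtype.val '' (w' a ∩ (U a)ᶜ)) ∪ {x | x (Sum.inl a) = 1}) := by
    intro a
    obtain ⟨g, g0, g1, _⟩ := exists_continuous_zero_one_of_isClosed
      ((himg _ ((hw'c a).inter (hV a).isClosed_compl)).union (isClosed_eq (hc' a) continuous_const))
      ((himg _ ((hw'c a).inter (hU a).isClosed_compl)).union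
        (isClosed_eq (hc' a) (continuous_const (y := 1)))) (by
        rw [Set.disjoint_left]
        rintro x (⟨y, ⟨hy1, hy2⟩, rfl⟩ | hx) (⟨z, ⟨hz1, hz2⟩, hz⟩ | hx')
        · obtain rfl := Subtype.ext hz
          rcases hw'L a hy1 with h | h
          · exact hz2 h
          · exact hy2 h
        · exact hy2 (hBV a hx')
        · subst hz; exact hz2 (hAU a hx)
        · simp only [mem_ofPred_eq] at hx hx'
          rw [hx] at hx'
          exact zero_ne_one hx')
    exact ⟨g, g0, g1⟩
  choose g g0 g1 using hg
  obtain ⟨x, hx, hx0⟩ := hE (fun a => ⟨fun x => g a x - 1/2, by fun_prop⟩) (by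
    intro a x hx
    have : g a x = 0 := g0 a (Or.inr hx)
    norm_num [this]) (by
    intro a x hx
    have : g a x = 1 := g1 a (Or.inr hx)
    norm_num [this])
  obtain ⟨a, ha⟩ := hw' ⟨x, hx⟩
  have h := hx0 a
  simp only [ContinuousMap.coe_mk] at h
  rcases hw'L a ha with h1 | h1
  · have : g a x = 0 := g0 a (Or.inl ⟨⟨x, hx⟩, ⟨ha, fun h2 => (Set.disjoint_left.1 (hUV a)) h1 h2⟩, rfl⟩)
    norm_num [this] at h
  · have : g a x = 1 := g1 a (Or.inl ⟨⟨x, hx⟩, ⟨ha, fun h2 => (Set.disjoint_left.1 (hUV a)) h2 h1⟩, rfl⟩)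
    norm_num [this] at h

lemma ess_surj {A : Type*} {K : Set (A ⊕ A → unitInterval)} (hK : IsClosed K) (hE : Ess K) :
    Function.Surjective (fun (x : K) (a : A) => x.1 (Sum.inl a)) := by
  have : CompactSpace K := isCompact_iff_compactSpace.1 hK.isCompact
  have hc : Continuous (fun (x : K) (a : A) => x.1 (Sum.inl a)) := 
    continuous_pi fun _ => (continuous_apply _).comp continuous_subtype_val
  have hcl : IsClosed (range (fun (x : K) (a : A) => x.1 (Sum.inl a))) := (isCompact_range hc).isClosed
  have hd : Dense (univ.pi fun _ : A => ({0, 1}ᶜ : Set unitInterval)) := by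
    apply dense_pi
    intro a _
    exact Dense.sdiff_finite dense_univ (Set.toFinite {0, 1}) |>.mono (by intro x hx; exact hx.2)
  rw [← range_eq_univ, ← univ_subset_iff, ← hd.closure_eq]
  apply closure_minimal _ hcl
  intro p hp
  obtain ⟨x, hx, hx0⟩ := hE (fun a => ⟨fun x => (x (Sum.inl a) : ℝ) - p a, by fun_prop⟩) (by
    intro a x hx
    have h : p a ∉ ({0, 1} : Set unitInterval) := hp a trivial
    simp only [mem_insert_iff, mem_singleton_iff, not_or] at h
    simpa [hx] using unitInterval.pos_iff_ne_zero.2 h.1) (by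
    intro a x hx
    have h : p a ∉ ({0, 1} : Set unitInterval) := hp a trivial
    simp only [mem_insert_iff, mem_singleton_iff, not_or] at h
    simpa [hx] using unitInterval.lt_one_iff_ne_one.2 h.2)
  refine ⟨⟨x, hx⟩, ?_⟩
  funext a
  have := hx0 a
  simp only [ContinuousMap.coe_mk] at this
  apply Subtype.ext
  simp only
  linarith

lemma weight_le {J : Type} (K : Set (J → unitInterval)) :
    topWeight K ≤ Cardinal.mk (MvPolynomial J ℚ) := by
  have hb : TopologicalSpace.IsTopologicalBasis
      (range fun r : MvPolynomial J ℚ => {x : K | 0 < polyC r x.1}) := by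
    apply TopologicalSpace.isTopologicalBasis_of_isOpen_of_nhds
    · rintro _ ⟨r, rfl⟩
      exact isOpen_lt continuous_const (by fun_prop)
    · intro p u hp hu
      obtain ⟨O, hO, rfl⟩ := isOpen_induced_iff.1 hu
      obtain ⟨f, f0, f1, fI⟩ := exists_continuous_zero_one_of_isClosed hO.isClosed_compl
        (isClosed_singleton (x := p.1)) (by
          rw [disjoint_singleton_right]; exact fun h => h hp)
      obtain ⟨r, hr⟩ := polyC_dense (⟨fun x => f x - 1/2, by fun_prop⟩) (1/4) (by norm_num)
      refine ⟨_, ⟨r, rfl⟩, ?_, ?_⟩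
      · have := abs_lt.1 (hr p.1)
        have e : f p.1 = 1 := f1 rfl
        simp only [ContinuousMap.coe_mk, e] at this
        simp only [mem_ofPred_eq]
        linarith [this.1]
      · intro x hx
        by_contra hxO
        have := abs_lt.1 (hr x.1)
        have e : f x.1 = 0 := f0 hxO
        simp only [ContinuousMap.coe_mk, e] at this
        simp only [mem_ofPred_eq] at hx
        linarith [this.2]
  exact (ciInf_le' (fun B : {B : Set (Set K) // TopologicalSpace.IsTopologicalBasis B} =>
    Cardinal.mk B.1) ⟨_, hb⟩).trans Cardinal.mk_range_le

lemma le_weight {A X : Type} [Infinite A] [TopologicalSpace X] [CompactSpace X]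
    (f : X → A → unitInterval) (hf : Continuous f) (hs : Function.Surjective f) :
    Cardinal.mk A ≤ topWeight X := by
  classical
  have : Nonempty {B : Set (Set X) // TopologicalSpace.IsTopologicalBasis B} :=
    ⟨⟨_, TopologicalSpace.isTopologicalBasis_opens⟩⟩
  apply le_ciInf
  rintro ⟨B, hB⟩
  have hc : ∀ a, Continuous fun x => f x a := fun a => (continuous_apply a).comp hf
  have h1 : ∀ a : A, ∃ T : Finset B, {x | f x a = 0} ⊆ ⋃ b ∈ T, b.1 ∧
      ∀ b ∈ T, b.1 ⊆ {x | f x a ≠ 1} := by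
    intro a
    have hcomp : IsCompact {x | f x a = 0} := (isClosed_eq (hc a) continuous_const).isCompact
    have hop : IsOpen {x | f x a ≠ 1} := isOpen_ne_fun (hc a) continuous_const
    obtain ⟨T, hT⟩ := hcomp.elim_finite_subcover
      (fun b : {b : B // b.1 ⊆ {x | f x a ≠ 1}} => b.1.1) (fun b => hB.isOpen b.1.2) (by
        intro x hx
        obtain ⟨b, hb, hxb, hbs⟩ := hB.exists_subset_of_mem_open
          (show x ∈ {x | f x a ≠ 1} by
            simp only [mem_ofPred_eq] at hx ⊢; rw [hx]; exact zero_ne_one) hop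
        exact mem_iUnion.2 ⟨⟨⟨b, hb⟩, hbs⟩, hxb⟩)
    refine ⟨T.image Subtype.val, ?_, ?_⟩
    · intro x hx
      obtain ⟨b, hb, hxb⟩ := mem_iUnion₂.1 (hT hx)
      exact mem_iUnion₂.2 ⟨b.1, Finset.mem_image_of_mem _ hb, hxb⟩
    · intro b hb
      obtain ⟨c, _, rfl⟩ := Finset.mem_image.1 hb
      exact c.2
  choose T hT1 hT2 using h1
  have hinj : Function.Injective T := by
    intro a b hab
    by_contra hne
    obtain ⟨x, hx⟩ := hs (Function.update (fun _ => 1) a 0)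
    have hxa : f x a = 0 := by rw [hx]; simp
    have hxb : f x b = 1 := by rw [hx]; simp [Function.update_of_ne (Ne.symm hne)]
    obtain ⟨c, hc, hxc⟩ := mem_iUnion₂.1 (hT1 a hxa)
    rw [hab] at hc
    exact hT2 b c hc hxc hxb
  have hinf : Infinite (Finset B) := Infinite.of_injective T hinj
  have hinfB : Infinite B := by
    by_contra h
    rw [not_infinite_iff_finite] at h
    exact not_finite (Finset B)
  calc Cardinal.mk A ≤ Cardinal.mk (Finset B) := Cardinal.mk_le_of_injective hinj
    _ = Cardinal.mk B := Cardinal.mk_finset_of_infinite _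

/-- For every infinite cardinal `κ` there is a hereditarily indecomposable continuum of
weight `κ` admitting an essential map onto the Tychonoff cube `[0,1]^κ`. -/
theorem exists_hereditarilyIndecomposable_continuum_essential_map
    (κ : Cardinal) (hκ : Cardinal.aleph0 ≤ κ) :
    ∃ (K : Type) (_ : TopologicalSpace K), CompactSpace K ∧ T2Space K ∧
      ConnectedSpace K ∧ Nonempty K ∧ HereditarilyIndecomposable K ∧ topWeight K = κ ∧
      ∃ f : K → (κ.out → unitInterval), Continuous f ∧ Function.Surjective f ∧
        IsEssentialFamily (fun α => f ⁻¹' {x | x α = 0}) (fun α => f ⁻¹' {x | x α = 1}) := by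
  classical
  have hA : Cardinal.mk κ.out = κ := Cardinal.mk_out κ
  have : Infinite κ.out := by rw [Cardinal.infinite_iff, hA]; exact hκ
  have hP : Cardinal.mk (MvPolynomial (κ.out ⊕ κ.out) ℚ) ≤ κ := by
    refine MvPolynomial.cardinalMk_le_max.trans ?_
    have h2 : Cardinal.mk (κ.out ⊕ κ.out) = Cardinal.mk κ.out + Cardinal.mk κ.out := by simp
    rw [h2, hA, Cardinal.add_eq_self hκ]
    simp [hκ]
  obtain ⟨e, he⟩ : ∃ e : κ.out → MvPolynomial (κ.out ⊕ κ.out) ℚ, Function.Surjective e := by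
    rw [← Cardinal.mk_out κ, Cardinal.le_def] at hP
    obtain ⟨i⟩ := hP
    rw [Cardinal.mk_out] at i
    exact ⟨Function.invFun i, Function.invFun_surjective i.injective⟩
  obtain ⟨K, hKK, hmin⟩ := exists_min (K0 e) (K0_closed e) (K0_ess e)
  have hcl : IsClosed K := hmin.1.1
  have hE : Ess K := hmin.1.2
  have hcon := min_connected hmin
  have : CompactSpace K := isCompact_iff_compactSpace.1 hcl.isCompact
  have hcont : Continuous (fun (x : K) (a : κ.out) => x.1 (Sum.inl a)) := 
    continuous_pi fun _ => (continuous_apply _).comp continuous_subtype_val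
  have hsurj := ess_surj hcl hE
  refine ⟨K, inferInstance, inferInstance, inferInstance, isConnected_iff_connectedSpace.1 hcon,
    hcon.1.to_subtype, hi_of_subset e he K hKK, le_antisymm ((weight_le K).trans hP) ?_,
    fun x a => x.1 (Sum.inl a), hcont, hsurj, ess_family hcl hE⟩
  have := le_weight _ hcont hsurj
  rwa [hA] at this
end

section
/- For every infinite cardinal κ there exist a subcontinuum U of the Tychonoff cube [0,1]^κ of covering dimension at most one and a monotone continuous surjection m : U → [0,1]^κ. -/
open Set

universe u

/-! ### Two general lemmas on connectedness -/

/-- A compact set is preconnected if it has a preconnected image under a continuous map with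
preconnected fibres. -/
theorem isPreconnected_of_monotone_aux {X Y : Type*} [TopologicalSpace X] [T2Space X]
    [TopologicalSpace Y] [T2Space Y] {K : Set X} (hK : IsCompact K) {f : X → Y}
    (hf : Continuous f) (himg : IsPreconnected (f '' K))
    (hfib : ∀ x ∈ K, IsPreconnected (K ∩ f ⁻¹' {f x})) : IsPreconnected K := by
  rw [isPreconnected_iff_subset_of_disjoint_closed]
  intro u v hu hv huv hdis
  have key : ∀ x ∈ K, K ∩ f ⁻¹' {f x} ⊆ u ∨ K ∩ f ⁻¹' {f x} ⊆ v := by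
    intro x hx
    refine isPreconnected_iff_subset_of_disjoint_closed.1 (hfib x hx) u v hu hv
      (inter_subset_left.trans huv) ?_
    rw [← subset_empty_iff, ← hdis]
    exact inter_subset_inter_left _ inter_subset_left
  have hcu : IsClosed (f '' (K ∩ u)) := ((hK.inter_right hu).image hf).isClosed
  have hcv : IsClosed (f '' (K ∩ v)) := ((hK.inter_right hv).image hf).isClosed
  have hd : ∀ x, x ∈ K → x ∈ u → x ∈ v → False := by
    intro x h1 h2 h3
    have : x ∈ K ∩ (u ∩ v) := ⟨h1, h2, h3⟩
    rw [hdis] at this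
    exact this
  have hcov : f '' K ⊆ f '' (K ∩ u) ∪ f '' (K ∩ v) := by
    rintro _ ⟨x, hx, rfl⟩
    rcases huv hx with h | h
    · exact Or.inl ⟨x, ⟨hx, h⟩, rfl⟩
    · exact Or.inr ⟨x, ⟨hx, h⟩, rfl⟩
  have hdisj : f '' K ∩ (f '' (K ∩ u) ∩ f '' (K ∩ v)) = ∅ := by
    rw [eq_empty_iff_forall_notMem]
    rintro _ ⟨_, ⟨x, ⟨hx, hxu⟩, rfl⟩, ⟨y, ⟨hyx, hxv⟩, hxx⟩⟩
    rcases key x hx with h | h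
    · exact hd y hyx (h ⟨hyx, hxx⟩) hxv
    · exact hd x hx hxu (h ⟨hx, rfl⟩)
  rcases isPreconnected_iff_subset_of_disjoint_closed.1 himg _ _ hcu hcv hcov hdisj with h | h
  · left
    intro x hx
    obtain ⟨y, ⟨hyK, hyu⟩, hyx⟩ := h ⟨x, hx, rfl⟩
    rcases key x hx with hh | hh
    · exact hh ⟨hx, rfl⟩
    · exact (hd y hyK hyu (hh ⟨hyK, hyx⟩)).elim
  · right
    intro x hx
    obtain ⟨y, ⟨hyK, hyu⟩, hyx⟩ := h ⟨x, hx, rfl⟩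
    rcases key x hx with hh | hh
    · exact (hd y hyK (hh ⟨hyK, hyx⟩) hyu).elim
    · exact hh ⟨hx, rfl⟩

/-- A decreasing intersection of continua is a continuum. -/
theorem isConnected_iInter_aux {X : Type*} [TopologicalSpace X] [T2Space X] {K : ℕ → Set X}
    (hanti : ∀ n, K (n + 1) ⊆ K n) (hc : ∀ n, IsCompact (K n)) (hconn : ∀ n, IsConnected (K n)) :
    IsConnected (⋂ n, K n) := by
  have hmono : Antitone K := antitone_nat_of_succ_le hanti
  have hdir : Directed (· ⊇ ·) K := directed_of_isDirected_le (fun i j h => hmono h)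
  refine ⟨IsCompact.nonempty_iInter_of_directed_nonempty_isCompact_isClosed K hdir
    (fun n => (hconn n).nonempty) hc (fun n => (hc n).isClosed), ?_⟩
  have hcl : IsClosed (⋂ n, K n) := isClosed_iInter fun n => (hc n).isClosed
  have hcomp : IsCompact (⋂ n, K n) := (hc 0).of_isClosed_subset hcl (iInter_subset K 0)
  rw [isPreconnected_iff_subset_of_disjoint_closed]
  intro u v hu hv huv hdis
  have hdis2 : Disjoint ((⋂ n, K n) ∩ u) ((⋂ n, K n) ∩ v) := by
    rw [Set.disjoint_left]
    rintro x ⟨hx, hxu⟩ ⟨-, hxv⟩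
    have : x ∈ (⋂ n, K n) ∩ (u ∩ v) := ⟨hx, hxu, hxv⟩
    rw [hdis] at this
    exact this
  obtain ⟨U, V, hU, hV, huU, hvV, hUV⟩ :=
    SeparatedNhds.of_isCompact_isCompact (hcomp.inter_right hu) (hcomp.inter_right hv) hdis2
  have hsub : (⋂ n, K n) ⊆ U ∪ V := by
    intro x hx
    rcases huv hx with h | h
    · exact Or.inl (huU ⟨hx, h⟩)
    · exact Or.inr (hvV ⟨hx, h⟩)
  obtain ⟨n, hn⟩ := exists_subset_nhds_of_isCompact hdir hc
    (fun x hx => (hU.union hV).mem_nhds (hsub hx))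
  rcases isPreconnected_iff_subset_of_disjoint.1 (hconn n).isPreconnected U V hU hV hn
    (by rw [hUV.inter_eq, inter_empty]) with h | h
  · left
    intro x hx
    rcases huv hx with hh | hh
    · exact hh
    · exact (Set.disjoint_left.1 hUV (h (mem_iInter.1 hx n)) (hvV ⟨hx, hh⟩)).elim
  · right
    intro x hx
    rcases huv hx with hh | hh
    · exact (Set.disjoint_left.1 hUV (huU ⟨hx, hh⟩) (h (mem_iInter.1 hx n))).elim
    · exact hh

/-! ### Spaces defined by a well-founded system of constraints -/

/-- The set of points satisfying all the constraints. -/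
def constraintSet {T : Type*} (C : T → (T → ℂ) → Set ℂ) : Set (T → ℂ) :=
  {v | ∀ t, v t ∈ C t v}

theorem isCompact_constraintSet {T : Type*} {C : T → (T → ℂ) → Set ℂ}
    (hsub : ∀ t v, C t v ⊆ Metric.closedBall 0 1)
    (hcl : ∀ t, IsClosed {v : T → ℂ | v t ∈ C t v}) : IsCompact (constraintSet C) := by
  refine (isCompact_univ_pi (fun _ : T => isCompact_closedBall (0 : ℂ) 1)).of_isClosed_subset ?_ ?_
  · have : constraintSet C = ⋂ t, {v : T → ℂ | v t ∈ C t v} := by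
      ext v; simp [constraintSet]
    rw [this]
    exact isClosed_iInter hcl
  · intro v hv t _
    exact hsub t v (hv t)

theorem isConnected_constraintSet {T : Type*} (d : T → ℕ) {C : T → (T → ℂ) → Set ℂ}
    (hsub : ∀ t v, C t v ⊆ Metric.closedBall 0 1)
    (hcl : ∀ t, IsClosed {v : T → ℂ | v t ∈ C t v})
    (hconn : ∀ t v, IsConnected (C t v))
    (hdep : ∀ t v v2, (∀ s, d s < d t → v s = v2 s) → C t v = C t v2) :
    IsConnected (constraintSet C) := by
  classical
  let K : ℕ → Set (T → ℂ) := fun n =>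
    {v | ∀ t, v t ∈ Metric.closedBall (0 : ℂ) 1 ∧ (d t < n → v t ∈ C t v)}
  have hKcl : ∀ n, IsClosed (K n) := by
    intro n
    have : K n = ⋂ t, ({v : T → ℂ | v t ∈ Metric.closedBall (0 : ℂ) 1} ∩
        {v | d t < n → v t ∈ C t v}) := by
      ext v; simp [K]
    rw [this]
    refine isClosed_iInter fun t => IsClosed.inter ?_ ?_
    · exact Metric.isClosed_closedBall.preimage (continuous_apply t)
    · by_cases h : d t < n
      · simpa [h] using hcl t
      · simp [h]
  have hKc : ∀ n, IsCompact (K n) := fun n =>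
    (isCompact_univ_pi (fun _ : T => isCompact_closedBall (0 : ℂ) 1)).of_isClosed_subset (hKcl n)
      (fun v hv t _ => (hv t).1)
  have hball : IsConnected (Metric.closedBall (0 : ℂ) 1) :=
    ⟨⟨0, by simp⟩, (convex_closedBall (0 : ℂ) 1).isPreconnected⟩
  have hKanti : ∀ n, K (n + 1) ⊆ K n := fun n v hv t =>
    ⟨(hv t).1, fun h => (hv t).2 (h.trans (Nat.lt_succ_self n))⟩
  have hKconn : ∀ n, IsConnected (K n) := by
    intro n
    induction n with
    | zero =>
      have : K 0 = Set.pi univ (fun _ => Metric.closedBall (0 : ℂ) 1) := by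
        ext v; simp [K]
      rw [this]
      exact isConnected_univ_pi.2 fun _ => hball
    | succ n ih =>
      let τ : (T → ℂ) → (T → ℂ) := fun v t => if d t < n then v t else 0
      have hτ : Continuous τ := by
        refine continuous_pi fun t => ?_
        by_cases h : d t < n
        · simpa [τ, h] using continuous_apply t
        · simpa [τ, h] using continuous_const
      have hτeq : ∀ v v2, τ v = τ v2 ↔ ∀ t, d t < n → v t = v2 t := by
        intro v v2
        constructor
        · intro h t ht
          simpa [τ, ht] using congrFun h t
        · intro h
          funext t
          by_cases ht : d t < n
          · simp [τ, ht, h t ht]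
          · simp [τ, ht]
      let S : (T → ℂ) → T → Set ℂ := fun v t =>
        if d t < n then {v t} else if d t = n then C t v else Metric.closedBall 0 1
      have hS : ∀ v t, IsConnected (S v t) := by
        intro v t
        by_cases h1 : d t < n
        · simpa [S, h1] using isConnected_singleton
        · by_cases h2 : d t = n
          · simpa [S, h1, h2] using hconn t v
          · simpa [S, h1, h2] using hball
      have hfib : ∀ v ∈ K n, K (n + 1) ∩ τ ⁻¹' {τ v} = Set.pi univ (S v) := by
        intro v hv
        ext w
        simp only [mem_inter_iff, mem_preimage, mem_singleton_iff, hτeq, mem_univ_pi]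
        constructor
        · rintro ⟨hw, hwv⟩ t
          by_cases h1 : d t < n
          · simpa [S, h1] using hwv t h1
          · by_cases h2 : d t = n
            · have := (hw t).2 (by omega)
              rw [hdep t w v (fun s hs => hwv s (by omega))] at this
              simpa [S, h1, h2] using this
            · simpa [S, h1, h2] using (hw t).1
        · intro h
          have hwv : ∀ t, d t < n → w t = v t := by
            intro t ht
            simpa [S, ht] using h t
          refine ⟨fun t => ?_, hwv⟩
          by_cases h1 : d t < n
          · rw [hwv t h1, hdep t w v (fun s hs => hwv s (by omega))]
            exact ⟨(hv t).1, fun _ => (hv t).2 h1⟩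
          · by_cases h2 : d t = n
            · have := h t
              simp only [S, h2, if_false, if_true, lt_irrefl] at this
              rw [hdep t w v (fun s hs => hwv s (by omega))]
              exact ⟨hsub _ _ this, fun _ => this⟩
            · have := h t
              simp only [S, h1, h2, if_false] at this
              exact ⟨this, fun h3 => by omega⟩
      have hne : ∀ v ∈ K n, (K (n + 1) ∩ τ ⁻¹' {τ v}).Nonempty := by
        intro v hv
        rw [hfib v hv]
        exact univ_pi_nonempty_iff.2 fun t => (hS v t).nonempty
      have himg : τ '' K (n + 1) = τ '' K n := by
        apply Subset.antisymm (image_mono (hKanti n))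
        rintro _ ⟨v, hv, rfl⟩
        obtain ⟨w, hw, hwv⟩ := hne v hv
        exact ⟨w, hw, hwv⟩
      refine ⟨?_, isPreconnected_of_monotone_aux (hKc _) hτ ?_ ?_⟩
      · obtain ⟨v, hv⟩ := ih.nonempty
        exact (hne v hv).mono inter_subset_left
      · rw [himg]
        exact ih.isPreconnected.image _ hτ.continuousOn
      · intro v hv
        rw [hfib v (hKanti n hv)]
        exact isPreconnected_univ_pi fun t => (hS v t).isPreconnected
  have : constraintSet C = ⋂ n, K n := by
    ext v
    simp only [constraintSet, mem_ofPred_eq, mem_iInter, K]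
    constructor
    · intro h n t
      exact ⟨hsub _ _ (h t), fun _ => h t⟩
    · intro h t
      exact (h (d t + 1) t).2 (Nat.lt_succ_self _)
  rw [this]
  exact isConnected_iInter_aux hKanti hKc hKconn

/-! ### The terms and their constraints -/

/-- Indices for the countably many auxiliary real functions. -/
abbrev CubeOp : Type := Bool ⊕ (ℚ × ℚ × ℚ)

/-- Coordinates of the space to be constructed. -/
inductive CubeTerm (J : Type*) : Type _
  | var (j : J) : CubeTerm J
  | fn (o : CubeOp) (s t : CubeTerm J) : CubeTerm J
  | circ (s t : CubeTerm J) : CubeTerm J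

namespace CubeTerm

/-- Depth of a term. -/
def depth {J : Type*} : CubeTerm J → ℕ
  | var _ => 0
  | fn _ s t => max (depth s) (depth t) + 1
  | circ s t => max (depth s) (depth t) + 1

/-- Arity function of the W-type in which terms are encoded. -/
def arity {J : Type u} : J ⊕ Option CubeOp → Type
  | .inl _ => Empty
  | .inr _ => Bool

/-- Encoding of terms in a W-type. -/
def encode {J : Type u} : CubeTerm J → WType (arity (J := J))
  | var j => ⟨.inl j, fun e => nomatch (e : Empty)⟩
  | fn o s t => ⟨.inr (some o), fun b => cond (b : Bool) (encode s) (encode t)⟩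
  | circ s t => ⟨.inr none, fun b => cond (b : Bool) (encode s) (encode t)⟩

theorem encode_injective {J : Type u} : Function.Injective (encode (J := J)) := by
  intro a
  induction a with
  | var j =>
    intro b h
    cases b <;> simp [encode] at h
    simp [h]
  | fn o s t ihs iht =>
    intro b h
    cases b with
    | var j => simp [encode] at h
    | circ s t => simp [encode] at h
    | fn o2 s2 t2 =>
      simp only [encode, WType.mk.injEq, Sum.inr.injEq, Option.some.injEq] at h
      obtain ⟨rfl, h⟩ := h
      have h := eq_of_heq h
      rw [ihs (congrFun h true), iht (congrFun h false)]
  | circ s t ihs iht =>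
    intro b h
    cases b with
    | var j => simp [encode] at h
    | fn o s t => simp [encode] at h
    | circ s2 t2 =>
      simp only [encode, WType.mk.injEq] at h
      have h := eq_of_heq h.2
      rw [ihs (congrFun h true), iht (congrFun h false)]

theorem mk_le {J : Type u} [Infinite J] : Cardinal.mk (CubeTerm J × Bool) ≤ Cardinal.mk J := by
  have hJ : Cardinal.aleph0 ≤ Cardinal.mk J := Cardinal.aleph0_le_mk J
  have : ∀ a : J ⊕ Option CubeOp, Finite (arity a) := by
    rintro (a | a)
    · exact inferInstanceAs (Finite Empty)
    · exact inferInstanceAs (Finite Bool)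
  have h1 : Cardinal.mk (CubeTerm J) ≤ Cardinal.mk J := by
    refine (Cardinal.mk_le_of_injective encode_injective).trans ?_
    refine (WType.cardinalMk_le_max_aleph0_of_finite').trans ?_
    refine max_le ?_ hJ
    simp only [Cardinal.mk_sum, Cardinal.lift_uzero]
    refine (Cardinal.add_le_of_le hJ le_rfl ?_)
    exact (Cardinal.lift_le_aleph0.2 Cardinal.mk_le_aleph0).trans hJ
  rw [Cardinal.mk_prod]
  simp only [Cardinal.lift_uzero]
  refine Cardinal.mul_le_of_le hJ h1 ?_
  exact (Cardinal.lift_le_aleph0.2 Cardinal.mk_le_aleph0).trans hJ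

/-- The auxiliary real functions: maximum, minimum, rational affine functions. -/
noncomputable def opFun : CubeOp → ℂ → ℂ → ℝ
  | .inl true, z, w => max z.re w.re
  | .inl false, z, w => min z.re w.re
  | .inr (p, q, r), z, _ => p + q * z.re + r * z.im

theorem continuous_opFun (o : CubeOp) : Continuous fun z : ℂ × ℂ => opFun o z.1 z.2 := by
  rcases o with (_ | _) | ⟨p, q, r⟩ <;> simp only [opFun] <;> fun_prop

/-- Truncation to `[-1,1]`. -/
noncomputable def clamp (r : ℝ) : ℝ := max (-1) (min 1 r)

theorem continuous_clamp : Continuous clamp := by unfold clamp; fun_prop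

theorem abs_clamp_le (r : ℝ) : |clamp r| ≤ 1 := by
  rw [abs_le]; unfold clamp
  exact ⟨le_max_left _ _, max_le (by norm_num) (min_le_left _ _)⟩

theorem clamp_pos {r : ℝ} (h : 0 < r) : 0 < clamp r :=
  lt_max_of_lt_right (lt_min one_pos h)

theorem clamp_neg {r : ℝ} (h : r < 0) : clamp r < 0 :=
  max_lt (by norm_num) (min_lt_of_right_lt h)

/-- The polar fibre: the unit vectors in the direction of `z`. -/
def polar (z : ℂ) : Set ℂ := {w | ‖w‖ = 1 ∧ z = (‖z‖ : ℂ) * w}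

theorem isConnected_polar (z : ℂ) : IsConnected (polar z) := by
  by_cases hz : z = 0
  · have : polar z = Metric.sphere 0 1 := by
      ext w; simp [polar, hz]
    rw [this]
    exact isConnected_sphere (by rw [Complex.rank_real_complex]; norm_num) 0 zero_le_one
  · have hzz : (‖z‖ : ℂ) ≠ 0 := by simpa using hz
    have : polar z = {z / ‖z‖} := by
      ext w
      simp only [polar, mem_ofPred_eq, mem_singleton_iff]
      constructor
      · rintro ⟨-, h⟩
        rw [eq_div_iff hzz, mul_comm]; exact h.symm
      · rintro rfl
        refine ⟨?_, by field_simp⟩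
        rw [norm_div, Complex.norm_real, norm_norm, div_self (by simpa using hz)]
    rw [this]
    exact isConnected_singleton

/-- The constraints. -/
noncomputable def constr {J : Type u} (Y : J → Set ℂ) : CubeTerm J → (CubeTerm J → ℂ) → Set ℂ
  | var j, _ => Y j
  | fn o s t, v => {((clamp (opFun o (v s) (v t)) : ℝ) : ℂ)}
  | circ s t, v => polar ⟨(v s).re, (v t).re⟩

theorem constr_sub {J : Type u} {Y : J → Set ℂ} (hY : ∀ j, Y j ⊆ Metric.closedBall 0 1)
    (t : CubeTerm J) (v) : constr Y t v ⊆ Metric.closedBall 0 1 := by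
  cases t with
  | var j => exact hY j
  | fn o s t =>
    simp only [constr, singleton_subset_iff, mem_closedBall_zero_iff, Complex.norm_real,
      Real.norm_eq_abs]
    exact abs_clamp_le _
  | circ s t =>
    intro w hw
    rw [mem_closedBall_zero_iff]
    exact hw.1.le

theorem constr_closed {J : Type u} {Y : J → Set ℂ} (hY : ∀ j, IsClosed (Y j))
    (t : CubeTerm J) : IsClosed {v : CubeTerm J → ℂ | v t ∈ constr Y t v} := by
  cases t with
  | var j => exact (hY j).preimage (continuous_apply (var j))
  | fn o s t =>
    simp only [constr, mem_singleton_iff]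
    refine isClosed_eq (continuous_apply _) (Complex.continuous_ofReal.comp
      (continuous_clamp.comp ?_))
    have h : Continuous fun v : CubeTerm J → ℂ => (v s, v t) :=
      (continuous_apply s).prodMk (continuous_apply t)
    exact (continuous_opFun o).comp h
  | circ s t =>
    simp only [constr, polar, mem_ofPred_eq]
    have hz : Continuous fun v : CubeTerm J → ℂ => (⟨(v s).re, (v t).re⟩ : ℂ) := by
      have : (fun v : CubeTerm J → ℂ => (⟨(v s).re, (v t).re⟩ : ℂ)) =
          fun v => ((v s).re : ℂ) + ((v t).re : ℂ) * Complex.I := by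
        funext v; exact Complex.mk_eq_add_mul_I _ _
      rw [this]
      fun_prop
    refine IsClosed.inter (isClosed_eq (by fun_prop) continuous_const) (isClosed_eq hz ?_)
    exact (Complex.continuous_ofReal.comp hz.norm).mul (continuous_apply _)

theorem constr_connected {J : Type u} {Y : J → Set ℂ} (hY : ∀ j, IsConnected (Y j))
    (t : CubeTerm J) (v) : IsConnected (constr Y t v) := by
  cases t with
  | var j => exact hY j
  | fn o s t => exact isConnected_singleton
  | circ s t => exact isConnected_polar _

theorem constr_dep {J : Type u} {Y : J → Set ℂ} (t : CubeTerm J) (v v2 : CubeTerm J → ℂ)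
    (h : ∀ s, depth s < depth t → v s = v2 s) : constr Y t v = constr Y t v2 := by
  cases t with
  | var j => rfl
  | fn o s t =>
    simp only [constr]
    rw [h s (by simp only [depth]; omega), h t (by simp only [depth]; omega)]
  | circ s t =>
    simp only [constr]
    rw [h s (by simp only [depth]; omega), h t (by simp only [depth]; omega)]

/-! ### Separation by terms and the dimension -/

theorem exists_separating_pt {J : Type u} {Y : J → Set ℂ} {a b : CubeTerm J → ℂ}
    (ha : a ∈ constraintSet (constr Y)) (hb : b ∈ constraintSet (constr Y)) (hab : a ≠ b) :
    ∃ t : CubeTerm J, (a t).re < 0 ∧ 0 < (b t).re := by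
  obtain ⟨s, hs⟩ := Function.ne_iff.1 hab
  have main : ∀ p q r : ℚ, (p + q * (a s).re + r * (a s).im : ℝ) < 0 →
      (0 : ℝ) < p + q * (b s).re + r * (b s).im →
      ∃ t : CubeTerm J, (a t).re < 0 ∧ 0 < (b t).re := by
    intro p q r h1 h2
    refine ⟨fn (.inr (p, q, r)) s s, ?_, ?_⟩
    · have := ha (fn (.inr (p, q, r)) s s)
      simp only [constr, mem_singleton_iff] at this
      rw [this, Complex.ofReal_re]
      exact clamp_neg h1
    · have := hb (fn (.inr (p, q, r)) s s)
      simp only [constr, mem_singleton_iff] at this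
      rw [this, Complex.ofReal_re]
      exact clamp_pos h2
  have hne : (a s).re ≠ (b s).re ∨ (a s).im ≠ (b s).im := by
    by_contra! h
    exact hs (Complex.ext h.1 h.2)
  rcases hne with h | h
  · rcases lt_or_gt_of_ne h with h | h
    · obtain ⟨q, h1, h2⟩ := exists_rat_btwn h
      exact main (-q) 1 0 (by push_cast; linarith) (by push_cast; linarith)
    · obtain ⟨q, h1, h2⟩ := exists_rat_btwn h
      exact main q (-1) 0 (by push_cast; linarith) (by push_cast; linarith)
  · rcases lt_or_gt_of_ne h with h | h
    · obtain ⟨q, h1, h2⟩ := exists_rat_btwn h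
      exact main (-q) 0 1 (by push_cast; linarith) (by push_cast; linarith)
    · obtain ⟨q, h1, h2⟩ := exists_rat_btwn h
      exact main q 0 (-1) (by push_cast; linarith) (by push_cast; linarith)

theorem exists_separating {J : Type u} [Nonempty J] {Y : J → Set ℂ} {Z : Type*}
    [TopologicalSpace Z] [CompactSpace Z] {δ : Z → CubeTerm J → ℂ} (hδ : Continuous δ)
    (hinj : Function.Injective δ) (hmem : ∀ z, δ z ∈ constraintSet (constr Y))
    {A B : Set Z} (hA : IsClosed A) (hB : IsClosed B) (hAB : Disjoint A B) :
    ∃ t : CubeTerm J, (∀ z ∈ A, (δ z t).re < 0) ∧ ∀ z ∈ B, 0 < (δ z t).re := by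
  have hcont : ∀ t, Continuous fun z => (δ z t).re := fun t =>
    Complex.continuous_re.comp ((continuous_apply t).comp hδ)
  have hconst : ∀ p : ℚ, ∃ t : CubeTerm J, ∀ z, (δ z t).re = clamp p := by
    intro p
    obtain ⟨j⟩ := ‹Nonempty J›
    refine ⟨fn (.inr (p, 0, 0)) (var j) (var j), fun z => ?_⟩
    have := hmem z (fn (.inr (p, 0, 0)) (var j) (var j))
    simp only [constr, mem_singleton_iff, opFun] at this
    rw [this, Complex.ofReal_re]
    simp
  have hmax : ∀ s t : CubeTerm J, ∃ r : CubeTerm J, ∀ z,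
      (δ z r).re = clamp (max (δ z s).re (δ z t).re) := by
    intro s t
    refine ⟨fn (.inl true) s t, fun z => ?_⟩
    have := hmem z (fn (.inl true) s t)
    simp only [constr, mem_singleton_iff, opFun] at this
    rw [this, Complex.ofReal_re]
  have hmin : ∀ s t : CubeTerm J, ∃ r : CubeTerm J, ∀ z,
      (δ z r).re = clamp (min (δ z s).re (δ z t).re) := by
    intro s t
    refine ⟨fn (.inl false) s t, fun z => ?_⟩
    have := hmem z (fn (.inl false) s t)
    simp only [constr, mem_singleton_iff, opFun] at this
    rw [this, Complex.ofReal_re]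
  have step : ∀ b ∈ B, ∃ t : CubeTerm J, (∀ z ∈ A, (δ z t).re < 0) ∧ 0 < (δ b t).re := by
    intro b hb
    refine hA.isCompact.induction_on
      (p := fun S => ∃ t : CubeTerm J, (∀ z ∈ S, (δ z t).re < 0) ∧ 0 < (δ b t).re) ?_ ?_ ?_ ?_
    · obtain ⟨t, ht⟩ := hconst 1
      exact ⟨t, by simp, by rw [ht]; exact clamp_pos (by norm_num)⟩
    · rintro S R hSS ⟨t, h1, h2⟩
      exact ⟨t, fun z hz => h1 z (hSS hz), h2⟩
    · rintro S R ⟨t, h1, h2⟩ ⟨t2, hk1, hk2⟩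
      obtain ⟨r, hr⟩ := hmin t t2
      refine ⟨r, ?_, ?_⟩
      · rintro z (hz | hz)
        · rw [hr]; exact clamp_neg (min_lt_of_left_lt (h1 z hz))
        · rw [hr]; exact clamp_neg (min_lt_of_right_lt (hk1 z hz))
      · rw [hr]; exact clamp_pos (lt_min h2 hk2)
    · intro a ha
      have hne : a ≠ b := fun h => Set.disjoint_left.1 hAB ha (h ▸ hb)
      obtain ⟨t, h1, h2⟩ := exists_separating_pt (hmem a) (hmem b) (hinj.ne hne)
      refine ⟨{z | (δ z t).re < 0}, mem_nhdsWithin_of_mem_nhds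
        ((isOpen_lt (hcont t) continuous_const).mem_nhds h1), t, fun z hz => hz, h2⟩
  refine hB.isCompact.induction_on
    (p := fun S => ∃ t : CubeTerm J, (∀ z ∈ A, (δ z t).re < 0) ∧ ∀ z ∈ S, 0 < (δ z t).re)
    ?_ ?_ ?_ ?_
  · obtain ⟨t, ht⟩ := hconst (-1)
    exact ⟨t, fun z _ => by rw [ht]; exact clamp_neg (by norm_num), by simp⟩
  · rintro S R hSS ⟨t, h1, h2⟩
    exact ⟨t, h1, fun z hz => h2 z (hSS hz)⟩
  · rintro S R ⟨t, h1, h2⟩ ⟨t2, hk1, hk2⟩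
    obtain ⟨r, hr⟩ := hmax t t2
    refine ⟨r, ?_, ?_⟩
    · intro z hz
      rw [hr]; exact clamp_neg (max_lt (h1 z hz) (hk1 z hz))
    · rintro z (hz | hz)
      · rw [hr]; exact clamp_pos (lt_max_of_lt_left (h2 z hz))
      · rw [hr]; exact clamp_pos (lt_max_of_lt_right (hk2 z hz))
  · intro b hb
    obtain ⟨t, h1, h2⟩ := step b hb
    exact ⟨{z | 0 < (δ z t).re}, mem_nhdsWithin_of_mem_nhds
      ((isOpen_lt continuous_const (hcont t)).mem_nhds h2), t, h1, fun z hz => hz⟩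

theorem isPartitionBetween_zero {Z : Type*} [TopologicalSpace Z] {f : Z → ℝ} (hf : Continuous f)
    {A B : Set Z} (hA : ∀ z ∈ A, f z < 0) (hB : ∀ z ∈ B, 0 < f z) :
    IsPartitionBetween {z | f z = 0} A B := by
  refine ⟨isClosed_eq hf continuous_const, {z | f z < 0}, {z | 0 < f z},
    isOpen_lt hf continuous_const, isOpen_lt continuous_const hf, ?_, hA, hB, ?_⟩
  · rw [Set.disjoint_left]
    intro z h1 h2
    have hk1 : f z < 0 := h1
    have hk2 : 0 < f z := h2
    exact lt_asymm hk1 hk2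
  · ext z
    simp only [mem_compl_iff, mem_ofPred_eq, mem_union]
    exact lt_or_lt_iff_ne.symm

theorem not_essential {J : Type u} [Nonempty J] {Y : J → Set ℂ} {Z : Type*}
    [TopologicalSpace Z] [CompactSpace Z] {δ : Z → CubeTerm J → ℂ} (hδ : Continuous δ)
    (hinj : Function.Injective δ) (hmem : ∀ z, δ z ∈ constraintSet (constr Y)) :
    ¬ ∃ A B : Fin 2 → Set Z, IsEssentialFamily A B := by
  rintro ⟨A, B, hA, hB, hAB, hess⟩
  obtain ⟨s, hs1, hs2⟩ := exists_separating hδ hinj hmem (hA 0) (hB 0) (hAB 0)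
  obtain ⟨t, ht1, ht2⟩ := exists_separating hδ hinj hmem (hA 1) (hB 1) (hAB 1)
  have hw : ∀ z, ‖δ z (circ s t)‖ = 1 ∧
      (⟨(δ z s).re, (δ z t).re⟩ : ℂ) =
        (‖(⟨(δ z s).re, (δ z t).re⟩ : ℂ)‖ : ℂ) * δ z (circ s t) := fun z => hmem z (circ s t)
  have hre : ∀ z, ∃ c : ℝ, 0 ≤ c ∧ (δ z s).re = c * (δ z (circ s t)).re ∧
      (δ z t).re = c * (δ z (circ s t)).im := by
    intro z
    refine ⟨‖(⟨(δ z s).re, (δ z t).re⟩ : ℂ)‖, norm_nonneg _, ?_, ?_⟩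
    · have := congrArg Complex.re (hw z).2
      rwa [Complex.re_ofReal_mul] at this
    · have := congrArg Complex.im (hw z).2
      rwa [Complex.im_ofReal_mul] at this
  have hcw : Continuous fun z => δ z (circ s t) := (continuous_apply _).comp hδ
  have neg : ∀ a c w : ℝ, 0 ≤ c → a = c * w → a < 0 → w < 0 := by
    intro a c w hc h ha
    by_contra! hw
    have := mul_nonneg hc hw
    linarith
  have pos : ∀ a c w : ℝ, 0 ≤ c → a = c * w → 0 < a → 0 < w := by
    intro a c w hc h ha
    by_contra! hw
    have := mul_nonpos_of_nonneg_of_nonpos hc hw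
    linarith
  have h0 : IsPartitionBetween {z | (δ z (circ s t)).re = 0} (A 0) (B 0) := by
    refine isPartitionBetween_zero (Complex.continuous_re.comp hcw) ?_ ?_
    · intro z hz
      obtain ⟨c, hc, h1, h2⟩ := hre z
      exact neg _ _ _ hc h1 (hs1 z hz)
    · intro z hz
      obtain ⟨c, hc, h1, h2⟩ := hre z
      exact pos _ _ _ hc h1 (hs2 z hz)
  have h1 : IsPartitionBetween {z | (δ z (circ s t)).im = 0} (A 1) (B 1) := by
    refine isPartitionBetween_zero (Complex.continuous_im.comp hcw) ?_ ?_
    · intro z hz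
      obtain ⟨c, hc, h1, h2⟩ := hre z
      exact neg _ _ _ hc h2 (ht1 z hz)
    · intro z hz
      obtain ⟨c, hc, h1, h2⟩ := hre z
      exact pos _ _ _ hc h2 (ht2 z hz)
  obtain ⟨z, hz⟩ := hess ![{z | (δ z (circ s t)).re = 0}, {z | (δ z (circ s t)).im = 0}]
    (by intro i; fin_cases i; exacts [h0, h1])
  have z0 : (δ z (circ s t)).re = 0 := mem_iInter.1 hz 0
  have z1 : (δ z (circ s t)).im = 0 := mem_iInter.1 hz 1
  have hz0 : δ z (circ s t) = 0 := Complex.ext z0 z1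
  have := (hw z).1
  rw [hz0] at this
  simp at this

end CubeTerm

/-- For every infinite cardinal `κ` there is a subcontinuum of the Tychonoff cube of
covering dimension at most one which maps onto the cube by a monotone map. -/
theorem exists_one_dimensional_monotone_preimage_of_cube
    (κ : Cardinal) (hκ : Cardinal.aleph0 ≤ κ) :
    ∃ U : Set (κ.out → unitInterval), IsCompact U ∧ IsConnected U ∧
      (¬ ∃ A B : Fin 2 → Set ↥U, IsEssentialFamily A B) ∧
      ∃ m : ↥U → (κ.out → unitInterval), Continuous m ∧ Function.Surjective m ∧
        ∀ y : κ.out → unitInterval, IsConnected (m ⁻¹' {y}) := by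
  classical
  set J := κ.out with hJ
  have : Infinite J := by
    rw [Cardinal.infinite_iff, hJ, Cardinal.mk_out]; exact hκ
  obtain ⟨⟨e, he⟩⟩ : Nonempty (CubeTerm J × Bool ↪ J) := CubeTerm.mk_le
  have : Nonempty (CubeTerm J × Bool) := ⟨(CubeTerm.var (Classical.arbitrary J), true)⟩
  let g : J → CubeTerm J × Bool := Function.invFun e
  have hg : ∀ x, g (e x) = x := Function.leftInverse_invFun he
  -- the total space and the fibres
  let Y : J → Set ℂ := fun _ => Complex.ofReal '' Icc (0 : ℝ) 1
  let F : (J → unitInterval) → J → Set ℂ := fun y j => {((y j : ℝ) : ℂ)}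
  let X : Set (CubeTerm J → ℂ) := constraintSet (CubeTerm.constr Y)
  have hYb : ∀ j, Y j ⊆ Metric.closedBall 0 1 := by
    rintro j _ ⟨r, hr, rfl⟩
    rw [mem_closedBall_zero_iff, Complex.norm_real, Real.norm_eq_abs, abs_of_nonneg hr.1]
    exact hr.2
  have hFb : ∀ y j, F y j ⊆ Y j := by
    rintro y j _ rfl
    exact ⟨y j, (y j).2, rfl⟩
  have hYc : ∀ j, IsClosed (Y j) := fun j =>
    (isCompact_Icc.image Complex.continuous_ofReal).isClosed
  have hYconn : ∀ j, IsConnected (Y j) := fun j =>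
    (isConnected_Icc zero_le_one).image _ Complex.continuous_ofReal.continuousOn
  have hXc : IsCompact X :=
    isCompact_constraintSet (CubeTerm.constr_sub hYb) (CubeTerm.constr_closed hYc)
  have hXconn : IsConnected X :=
    isConnected_constraintSet CubeTerm.depth (CubeTerm.constr_sub hYb)
      (CubeTerm.constr_closed hYc) (CubeTerm.constr_connected hYconn) CubeTerm.constr_dep
  have hFconn : ∀ y, IsConnected (constraintSet (CubeTerm.constr (F y))) := fun y =>
    isConnected_constraintSet CubeTerm.depth
      (CubeTerm.constr_sub fun j => (hFb y j).trans (hYb j))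
      (CubeTerm.constr_closed fun j => isClosed_singleton)
      (CubeTerm.constr_connected fun j => isConnected_singleton) CubeTerm.constr_dep
  have hFX : ∀ y v, v ∈ constraintSet (CubeTerm.constr (F y)) ↔
      v ∈ X ∧ ∀ j, v (CubeTerm.var j) = ((y j : ℝ) : ℂ) := by
    intro y v
    constructor
    · intro h
      refine ⟨fun t => ?_, fun j => h (CubeTerm.var j)⟩
      cases t with
      | var j => exact hFb y j (h (CubeTerm.var j))
      | fn o s t => exact h (CubeTerm.fn o s t)
      | circ s t => exact h (CubeTerm.circ s t)
    · rintro ⟨h, hh⟩ t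
      cases t with
      | var j => exact hh j
      | fn o s t => exact h (CubeTerm.fn o s t)
      | circ s t => exact h (CubeTerm.circ s t)
  -- the embedding of the total space in the cube
  let Φ : (CubeTerm J → ℂ) → (J → unitInterval) := fun v j =>
    projIcc 0 1 zero_le_one ((cond (g j).2 (v (g j).1).re (v (g j).1).im + 1) / 2)
  have hΦ : Continuous Φ := by
    refine continuous_pi fun j => continuous_projIcc.comp ?_
    cases (g j).2
    · simp only [cond_false]; fun_prop
    · simp only [cond_true]; fun_prop
  let δ : (J → unitInterval) → CubeTerm J → ℂ := fun u t =>
    ((2 * (u (e (t, true)) : ℝ) - 1 : ℝ) : ℂ) + ((2 * (u (e (t, false)) : ℝ) - 1 : ℝ) : ℂ) * Complex.I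
  have hδ : Continuous δ := by
    refine continuous_pi fun t => ?_
    simp only [δ]
    fun_prop
  have hδΦ : ∀ v ∈ X, δ (Φ v) = v := by
    intro v hv
    funext t
    have hb : ‖v t‖ ≤ 1 := by
      have := CubeTerm.constr_sub hYb t v (hv t)
      rwa [mem_closedBall_zero_iff] at this
    have hre := abs_le.1 ((Complex.abs_re_le_norm (v t)).trans hb)
    have him := abs_le.1 ((Complex.abs_im_le_norm (v t)).trans hb)
    have h1 : ((Φ v (e (t, true)) : unitInterval) : ℝ) = ((v t).re + 1) / 2 := by
      simp only [Φ, hg, cond_true]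
      rw [projIcc_of_mem zero_le_one (⟨by linarith, by linarith⟩ : ((v t).re + 1) / 2 ∈ Icc (0:ℝ) 1)]
    have h2 : ((Φ v (e (t, false)) : unitInterval) : ℝ) = ((v t).im + 1) / 2 := by
      simp only [Φ, hg, cond_false]
      rw [projIcc_of_mem zero_le_one (⟨by linarith, by linarith⟩ : ((v t).im + 1) / 2 ∈ Icc (0:ℝ) 1)]
    simp only [δ]
    rw [h1, h2]
    apply Complex.ext
    · simp; ring
    · simp; ring
  refine ⟨Φ '' X, hXc.image hΦ, hXconn.image _ hΦ.continuousOn, ?_, ?_⟩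
  · have : CompactSpace ↥(Φ '' X) := isCompact_iff_compactSpace.1 (hXc.image hΦ)
    refine CubeTerm.not_essential (Y := Y) (δ := fun u : ↥(Φ '' X) => δ u)
      (hδ.comp continuous_subtype_val) ?_ ?_
    · rintro ⟨_, v, hv, rfl⟩ ⟨_, w, hw, rfl⟩ h
      simp only [hδΦ v hv, hδΦ w hw] at h
      subst h; rfl
    · rintro ⟨_, v, hv, rfl⟩
      simp only [hδΦ v hv]
      exact hv
  · let m : ↥(Φ '' X) → (J → unitInterval) := fun u j =>
      projIcc 0 1 zero_le_one (δ u (CubeTerm.var j)).re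
    have hm : ∀ y, (Subtype.val '' (m ⁻¹' {y})) = Φ '' constraintSet (CubeTerm.constr (F y)) := by
      intro y
      have hval : ∀ v (hv : v ∈ X), m ⟨Φ v, v, hv, rfl⟩ = y ↔
          ∀ j, v (CubeTerm.var j) = ((y j : ℝ) : ℂ) := by
        intro v hv
        rw [funext_iff]
        refine forall_congr' fun j => ?_
        simp only [m, hδΦ v hv]
        obtain ⟨r, hr, hrv⟩ := hv (CubeTerm.var j)
        rw [← hrv, Complex.ofReal_re, projIcc_of_mem zero_le_one hr, Subtype.ext_iff,
          Complex.ofReal_inj]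
      ext u
      constructor
      · rintro ⟨⟨_, v, hv, rfl⟩, hu, rfl⟩
        exact ⟨v, (hFX y v).2 ⟨hv, (hval v hv).1 hu⟩, rfl⟩
      · rintro ⟨v, hv, rfl⟩
        obtain ⟨hv, hvar⟩ := (hFX y v).1 hv
        exact ⟨⟨Φ v, v, hv, rfl⟩, (hval v hv).2 hvar, rfl⟩
    have hconn : ∀ y, IsConnected (m ⁻¹' {y}) := by
      intro y
      have h := (hFconn y).image Φ hΦ.continuousOn
      rw [← hm y] at h
      exact ⟨h.nonempty.of_image,
        Topology.IsInducing.subtypeVal.isPreconnected_image.1 h.isPreconnected⟩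
    refine ⟨m, ?_, ?_, hconn⟩
    · refine continuous_pi fun j => continuous_projIcc.comp (Complex.continuous_re.comp ?_)
      exact (continuous_apply _).comp (hδ.comp continuous_subtype_val)
    · intro y
      obtain ⟨u, hu⟩ := (hconn y).nonempty
      exact ⟨u, hu⟩
end
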